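/- arXiv:1201.1139 — 2 statements merged into one kernel-verified Lean document; each statement's English description precedes it below -/
import Mathlib

section
/- Let p be a prime number and let H be a symmetric subset of SL₂(𝔽_p) containing the identity and generating SL₂(𝔽_p). Then either the triple product set H^(3) = H·H·H equals SL₂(𝔽_p), or |H^(3)|^3024 ≥ |H|^3025 (i.e. |H^(3)| ≥ |H|^(1+δ) with δ = 1/3024). -/
open Pointwise

instance {n : Type*} [DecidableEq n] [Fintype n] {R : Type*} [CommRing R] [DecidableEq R] :
    DecidableEq (Matrix.SpecialLinearGroup n R) := Subtype.instDecidableEq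

set_option linter.unusedSectionVars false

namespace Growth

/-! ### Trivial growth: `|H^3| ≥ 2|H|` -/

section Olson
variable {Γ : Type*} [Group Γ] [DecidableEq Γ]

lemma subset_pow_of_le {H : Finset Γ} (hone : (1 : Γ) ∈ H) {m n : ℕ} (h : m ≤ n) :
    H ^ m ⊆ H ^ n := Finset.pow_subset_pow_right hone h

lemma two_mul_card_le (H : Finset Γ) (hsym : ∀ h ∈ H, h⁻¹ ∈ H) (hone : (1 : Γ) ∈ H)
    (hgen : Subgroup.closure (H : Set Γ) = ⊤) (hne : (↑(H ^ 3) : Set Γ) ≠ Set.univ) :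
    2 * H.card ≤ (H ^ 3).card := by
  by_cases h32 : H ^ 3 ⊆ H ^ 2
  · exfalso
    apply hne
    have key : ∀ x : Γ, x ∈ H ^ 2 := by
      intro x
      have hx : x ∈ Subgroup.closure (H : Set Γ) := by rw [hgen]; trivial
      induction hx using Subgroup.closure_induction_left with
      | one => exact Finset.one_mem_pow hone
      | mul_left x hx y hy ih =>
        apply h32
        rw [pow_succ' H 2]
        exact Finset.mul_mem_mul hx ih
      | inv_mul_cancel x hx y hy ih =>
        apply h32
        rw [pow_succ' H 2]
        exact Finset.mul_mem_mul (hsym x hx) ih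
    ext x
    simp only [Finset.mem_coe, Set.mem_univ, iff_true]
    exact subset_pow_of_le hone (by norm_num) (key x)
  · rw [Finset.not_subset] at h32
    obtain ⟨g, hg3, hg2⟩ := h32
    rw [pow_succ' H 2, Finset.mem_mul] at hg3
    obtain ⟨a, ha, k, hk, rfl⟩ := hg3
    have hdisj : Disjoint (k • H) (a⁻¹ • H) := by
      rw [Finset.disjoint_left]
      intro z hz hz'
      rw [Finset.mem_smul_finset] at hz hz'
      obtain ⟨y, hy, rfl⟩ := hz
      obtain ⟨y', hy', h⟩ := hz'
      apply hg2
      have : a * k = y' * y⁻¹ := by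
        simp only [smul_eq_mul] at h
        rw [eq_mul_inv_iff_mul_eq, mul_assoc, ← h]; group
      rw [this, pow_two]
      exact Finset.mul_mem_mul hy' (hsym _ hy)
    have hsub : (k • H) ∪ (a⁻¹ • H) ⊆ H ^ 3 := by
      apply Finset.union_subset
      · intro z hz
        rw [Finset.mem_smul_finset] at hz
        obtain ⟨y, hy, rfl⟩ := hz
        rw [pow_succ H 2]
        exact Finset.mul_mem_mul hk hy
      · intro z hz
        rw [Finset.mem_smul_finset] at hz
        obtain ⟨y, hy, rfl⟩ := hz
        apply subset_pow_of_le hone (show 2 ≤ 3 by norm_num)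
        rw [pow_two]
        exact Finset.mul_mem_mul (hsym _ ha) hy
    have := Finset.card_le_card hsub
    rw [Finset.card_union_of_disjoint hdisj, Finset.card_smul_finset, Finset.card_smul_finset] at this
    omega

end Olson

/-! ### Basic facts on `SL₂` -/

section Basic
variable {F : Type*} [Field F]

/-- local abbreviation for `SL₂(F)` -/
abbrev SL (F : Type*) [Field F] := Matrix.SpecialLinearGroup (Fin 2) F

/-- trace -/
def tr (x : SL F) : F := x.1 0 0 + x.1 1 1

/-- action on vectors -/
def ac (x : SL F) (v : F × F) : F × F :=
  (x.1 0 0 * v.1 + x.1 0 1 * v.2, x.1 1 0 * v.1 + x.1 1 1 * v.2)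

/-- the symplectic form -/
def cr (v w : F × F) : F := v.1 * w.2 - v.2 * w.1

lemma det_eq (x : SL F) : x.1 0 0 * x.1 1 1 - x.1 0 1 * x.1 1 0 = 1 := by
  have := x.2
  rwa [Matrix.det_fin_two] at this

lemma mul00 (x y : SL F) : (x * y).1 0 0 = x.1 0 0 * y.1 0 0 + x.1 0 1 * y.1 1 0 := by
  simp [Matrix.mul_apply, Fin.sum_univ_two]
lemma mul01 (x y : SL F) : (x * y).1 0 1 = x.1 0 0 * y.1 0 1 + x.1 0 1 * y.1 1 1 := by
  simp [Matrix.mul_apply, Fin.sum_univ_two]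
lemma mul10 (x y : SL F) : (x * y).1 1 0 = x.1 1 0 * y.1 0 0 + x.1 1 1 * y.1 1 0 := by
  simp [Matrix.mul_apply, Fin.sum_univ_two]
lemma mul11 (x y : SL F) : (x * y).1 1 1 = x.1 1 0 * y.1 0 1 + x.1 1 1 * y.1 1 1 := by
  simp [Matrix.mul_apply, Fin.sum_univ_two]
lemma inv00 (x : SL F) : (x⁻¹).1 0 0 = x.1 1 1 := by
  rw [Matrix.SpecialLinearGroup.SL2_inv_expl]; simp
lemma inv01 (x : SL F) : (x⁻¹).1 0 1 = - x.1 0 1 := by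
  rw [Matrix.SpecialLinearGroup.SL2_inv_expl]; simp
lemma inv10 (x : SL F) : (x⁻¹).1 1 0 = - x.1 1 0 := by
  rw [Matrix.SpecialLinearGroup.SL2_inv_expl]; simp
lemma inv11 (x : SL F) : (x⁻¹).1 1 1 = x.1 0 0 := by
  rw [Matrix.SpecialLinearGroup.SL2_inv_expl]; simp
lemma one00 : (1 : SL F).1 0 0 = 1 := by simp
lemma one01 : (1 : SL F).1 0 1 = 0 := by simp
lemma one10 : (1 : SL F).1 1 0 = 0 := by simp
lemma one11 : (1 : SL F).1 1 1 = 1 := by simp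

lemma sl_ext {x y : SL F} (h00 : x.1 0 0 = y.1 0 0) (h01 : x.1 0 1 = y.1 0 1)
    (h10 : x.1 1 0 = y.1 1 0) (h11 : x.1 1 1 = y.1 1 1) : x = y := by
  apply Subtype.ext
  ext i j
  fin_cases i <;> fin_cases j <;> assumption

lemma tr_conj (x y : SL F) : tr (x * y * x⁻¹) = tr y := by
  have := det_eq x
  simp only [tr, mul00, mul01, mul10, mul11, inv00, inv01, inv10, inv11]
  linear_combination (y.1 0 0 + y.1 1 1) * this

lemma ac_mul (x y : SL F) (v : F × F) : ac (x * y) v = ac x (ac y v) := by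
  simp only [ac, mul00, mul01, mul10, mul11]
  ext <;> simp only <;> ring

lemma ac_one (v : F × F) : ac (1 : SL F) v = v := by
  simp [ac]

lemma ac_inv_ac (x : SL F) (v : F × F) : ac x⁻¹ (ac x v) = v := by
  rw [← ac_mul, inv_mul_cancel, ac_one]

lemma ac_ac_inv (x : SL F) (v : F × F) : ac x (ac x⁻¹ v) = v := by
  rw [← ac_mul, mul_inv_cancel, ac_one]

lemma ac_smul (x : SL F) (c : F) (v : F × F) : ac x (c • v) = c • ac x v := by
  simp only [ac, Prod.smul_fst, Prod.smul_snd, smul_eq_mul, Prod.smul_mk]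
  ext <;> simp only <;> ring

lemma ac_add (x : SL F) (v w : F × F) : ac x (v + w) = ac x v + ac x w := by
  simp only [ac, Prod.fst_add, Prod.snd_add, Prod.mk_add_mk]
  ext <;> simp only <;> ring

lemma cr_ac (x : SL F) (v w : F × F) : cr (ac x v) (ac x w) = cr v w := by
  have := det_eq x
  simp only [cr, ac]
  linear_combination (v.1 * w.2 - v.2 * w.1) * this

lemma exists_smul_of_cr {v w : F × F} (hv : v ≠ 0) (h : cr v w = 0) : ∃ c : F, w = c • v := by
  obtain ⟨a, b⟩ := v
  obtain ⟨c, d⟩ := w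
  simp only [cr] at h
  by_cases ha : a = 0
  · have hb : b ≠ 0 := by rintro rfl; exact hv (by simp [ha])
    refine ⟨d / b, ?_⟩
    subst ha
    have : c = 0 := by
      have : b * c = 0 := by linear_combination -h
      simpa [hb] using this
    ext <;> simp [this, hb]
  · refine ⟨c / a, ?_⟩
    ext
    · simp [ha]
    · simp only [Prod.smul_mk, smul_eq_mul]
      field_simp
      linear_combination h

lemma cr_smul_right (c : F) (v w : F × F) : cr v (c • w) = c * cr v w := by
  simp only [cr, Prod.smul_fst, Prod.smul_snd, smul_eq_mul]; ring
lemma cr_smul_left (c : F) (v w : F × F) : cr (c • v) w = c * cr v w := by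
  simp only [cr, Prod.smul_fst, Prod.smul_snd, smul_eq_mul]; ring
lemma cr_self (v : F × F) : cr v v = 0 := by simp only [cr]; ring

/-- upper unipotent -/
def up (s : F) : SL F := ⟨!![1, s; 0, 1], by simp [Matrix.det_fin_two]⟩
/-- lower unipotent -/
def lo (s : F) : SL F := ⟨!![1, 0; s, 1], by simp [Matrix.det_fin_two]⟩

/-- A generating set cannot fix a line. -/
lemma exists_escape {H : Set (SL F)} (hgen : Subgroup.closure H = ⊤)
    {v : F × F} (hv : v ≠ 0) : ∃ h ∈ H, cr v (ac h v) ≠ 0 := by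
  by_contra hcon
  push Not at hcon
  have key : ∀ x : SL F, ∃ c : F, ac x v = c • v := by
    intro x
    have hx : x ∈ Subgroup.closure H := by rw [hgen]; trivial
    induction hx using Subgroup.closure_induction with
    | mem x hx => exact exists_smul_of_cr hv (hcon x hx)
    | one => exact ⟨1, by rw [ac_one, one_smul]⟩
    | mul x y _ _ hx hy =>
      obtain ⟨a, ha⟩ := hx
      obtain ⟨b, hb⟩ := hy
      exact ⟨b * a, by rw [ac_mul, hb, ac_smul, ha, smul_smul]⟩
    | inv x _ hx =>
      obtain ⟨a, ha⟩ := hx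
      have h1 : v = a • ac x⁻¹ v := by rw [← ac_smul, ← ha, ac_inv_ac]
      have ha0 : a ≠ 0 := by rintro rfl; rw [zero_smul] at h1; exact hv h1
      exact ⟨a⁻¹, by nth_rewrite 2 [h1]; rw [smul_smul, inv_mul_cancel₀ ha0, one_smul]⟩
  obtain ⟨a, ha⟩ := key (up 1)
  obtain ⟨b, hb⟩ := key (lo 1)
  have h1 : cr v (ac (up 1) v) = 0 := by rw [ha, cr_smul_right, cr_self, mul_zero]
  have h2 : cr v (ac (lo 1) v) = 0 := by rw [hb, cr_smul_right, cr_self, mul_zero]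
  simp [cr, ac, up, lo] at h1 h2
  apply hv
  have e1 : v.2 * v.2 = 0 := by linear_combination -h1
  have e2 : v.1 * v.1 = 0 := by linear_combination h2
  ext
  · simpa using e2
  · simpa using e1

/-- Nilpotent matrices are rank-one of the form `k N(v)`. -/
lemma nilpotent_form {a b c d : F} (htr : a + d = 0) (hdet : a * d - b * c = 0)
    (hne : ¬ (a = 0 ∧ b = 0 ∧ c = 0)) :
    ∃ v : F × F, v ≠ 0 ∧ ∃ k : F, k ≠ 0 ∧ a = k * (- v.1 * v.2) ∧ b = k * v.1 ^ 2 ∧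
      c = k * (- v.2 ^ 2) ∧ d = k * (v.1 * v.2) := by
  have hd : d = -a := by linear_combination htr
  subst hd
  by_cases hb : b = 0
  · subst hb
    have ha : a = 0 := by
      have : a * a = 0 := by linear_combination -hdet
      simpa using this
    subst ha
    have hc : c ≠ 0 := by intro h; exact hne ⟨rfl, rfl, h⟩
    exact ⟨(0, 1), by simp, -c, by simpa using hc, by simp, by simp, by simp, by simp⟩
  · refine ⟨(b, -a), by simp [hb], b⁻¹, by simpa using hb, ?_, ?_, ?_, ?_⟩
    · simp only; field_simp
    · simp only; field_simp
    · simp only; field_simp; linear_combination -hdet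
    · simp only; field_simp

/-- trace against `N(v)` -/
lemma tr_N (x : SL F) (v : F × F) :
    (- v.1 * v.2) * x.1 0 0 + v.1 ^ 2 * x.1 1 0 + (- v.2 ^ 2) * x.1 0 1 + v.1 * v.2 * x.1 1 1
      = cr v (ac x v) := by
  simp only [cr, ac]; ring

/-- `u` fixing `v` is a transvection -/
lemma fix_form {u : SL F} {v : F × F} (hv : v ≠ 0) (h : ac u v = v) :
    ∃ a : F, ∀ x, ac u x = x + (a * cr v x) • v := by
  have hd := det_eq u
  have h1 : u.1 0 0 * v.1 + u.1 0 1 * v.2 = v.1 := congrArg Prod.fst h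
  have h2 : u.1 1 0 * v.1 + u.1 1 1 * v.2 = v.2 := congrArg Prod.snd h
  obtain ⟨v1, v2⟩ := v
  simp only at h1 h2
  have htr : u.1 0 0 + u.1 1 1 = 2 := by
    have e1 : v1 * (u.1 0 0 + u.1 1 1 - 2) = 0 := by
      linear_combination -(u.1 1 1 - 1) * h1 + u.1 0 1 * h2 + v1 * hd
    have e2 : v2 * (u.1 0 0 + u.1 1 1 - 2) = 0 := by
      linear_combination -(u.1 0 0 - 1) * h2 + u.1 1 0 * h1 + v2 * hd
    rcases mul_eq_zero.1 e1 with e | e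
    · rcases mul_eq_zero.1 e2 with e' | e'
      · exact absurd (by simp [e, e']) hv
      · linear_combination e'
    · linear_combination e
  by_cases hv1 : v1 = 0
  · have hv2 : v2 ≠ 0 := by rintro rfl; exact hv (by simp [hv1])
    subst hv1
    have e01 : u.1 0 1 = 0 := by simpa [hv2] using h1
    have e11 : u.1 1 1 = 1 := by
      have : v2 * (u.1 1 1 - 1) = 0 := by linear_combination h2
      rcases mul_eq_zero.1 this with e | e
      · exact absurd e hv2
      · linear_combination e
    have e00 : u.1 0 0 = 1 := by linear_combination htr - e11
    refine ⟨- u.1 1 0 / v2 ^ 2, fun x => ?_⟩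
    ext
    · simp [ac, e00, e01]
    · simp only [ac, cr, e11, Prod.snd_add, Prod.smul_mk, smul_eq_mul]
      field_simp; ring
  · have e10 : u.1 1 0 = (1 - u.1 1 1) * v2 / v1 := by
      field_simp; linear_combination h2
    have e00 : u.1 0 0 = 2 - u.1 1 1 := by linear_combination htr
    have h3 : (1 - u.1 1 1) * v1 + u.1 0 1 * v2 = 0 := by rw [e00] at h1; linear_combination h1
    have e11 : u.1 1 1 = 1 + u.1 0 1 * v2 / v1 := by
      field_simp; linear_combination -h3
    refine ⟨u.1 0 1 / v1 ^ 2, fun x => ?_⟩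
    ext
    · simp only [ac, cr, e00, e11, Prod.fst_add, Prod.smul_mk, smul_eq_mul]
      field_simp; ring
    · simp only [ac, cr, e10, e11, Prod.snd_add, Prod.smul_mk, smul_eq_mul]
      field_simp; ring

lemma eq_of_ac {x y : SL F} (h : ∀ v, ac x v = ac y v) : x = y := by
  have h1 := h (1, 0)
  have h2 := h (0, 1)
  simp [ac] at h1 h2
  exact sl_ext h1.1 h2.1 h1.2 h2.2

end Basic
end Growth

namespace Growth

section UBound
variable {F : Type*} [Field F] [DecidableEq F]

/-- Unipotent elements are few. -/
lemma unip_bound (A : Finset (SL F)) {v : F × F} (hv : v ≠ 0) (h : SL F)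
    (hh : cr v (ac h v) ≠ 0) (hone : (1 : SL F) ∈ A) :
    (A.filter (fun u => ac u v = v)).card ^ 2 * ((A.filter (fun u => ac u v = v)).card - 1) ≤
      (A * {h} * A * {h⁻¹} * A).card := by
  classical
  set S := A.filter (fun u => ac u v = v) with hS
  have hS1 : (1 : SL F) ∈ S := by simp [hS, hone, ac_one]
  have hcard : (S ×ˢ (S.erase 1) ×ˢ S).card = S.card ^ 2 * (S.card - 1) := by
    rw [Finset.card_product, Finset.card_product, Finset.card_erase_of_mem hS1]; ring
  rw [← hcard]
  apply Finset.card_le_card_of_injOn (fun q => q.1 * h * q.2.1 * h⁻¹ * q.2.2)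
  · rintro ⟨a, b, c⟩ hq
    simp only [Finset.coe_product, Set.mem_prod, Finset.mem_coe, Finset.mem_erase] at hq
    obtain ⟨ha, ⟨-, hb⟩, hc⟩ := hq
    simp only [hS, Finset.mem_filter] at ha hb hc
    simp only [Finset.mem_coe]
    refine Finset.mul_mem_mul (Finset.mul_mem_mul (Finset.mul_mem_mul (Finset.mul_mem_mul ha.1 ?_)
      hb.1) ?_) hc.1 <;> simp
  · rintro ⟨a, b, c⟩ hq ⟨a', b', c'⟩ hq' heq
    simp only [Finset.coe_product, Set.mem_prod, Finset.mem_coe, Finset.mem_erase] at hq hq'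
    obtain ⟨ha, ⟨hb1, hb⟩, hc⟩ := hq
    obtain ⟨ha', ⟨hb1', hb'⟩, hc'⟩ := hq'
    simp only [hS, Finset.mem_filter] at ha hb hc ha' hb' hc'
    simp only at heq
    obtain ⟨s, hs⟩ := fix_form hv ha.2
    obtain ⟨s', hs'⟩ := fix_form hv ha'.2
    obtain ⟨r, hr⟩ := fix_form hv hb.2
    obtain ⟨r', hr'⟩ := fix_form hv hb'.2
    have hr0 : r ≠ 0 := by
      rintro rfl
      apply hb1
      apply eq_of_ac
      intro w
      rw [hr, ac_one]; simp
    set w := ac h v with hw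
    set κ := cr v w with hκ
    have hcv : cr v (ac h⁻¹ v) = - κ := by
      have := cr_ac h v (ac h⁻¹ v)
      rw [ac_ac_inv] at this
      rw [← this, hκ, ← hw]
      simp only [cr]; ring
    -- evaluate on `v`
    have e1 : ∀ (a b c : SL F) (s r : F), (∀ x, ac a x = x + (s * cr v x) • v) →
        (∀ x, ac b x = x + (r * cr v x) • v) → ac c v = v →
        ac (a * h * b * h⁻¹ * c) v = (1 - s * r * κ ^ 2) • v + (- r * κ) • w := by
      intro a b c s r hs hr hc
      simp only [ac_mul, hc]
      rw [hr, ac_add, ac_ac_inv, ac_smul, hcv, ← hw, hs]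
      have : cr v (v + (r * -κ) • w) = r * -κ * κ := by
        rw [hκ]
        simp only [cr, Prod.fst_add, Prod.snd_add, Prod.smul_fst, Prod.smul_snd, smul_eq_mul]; ring
      rw [this]
      ext
      · simp only [Prod.fst_add, Prod.smul_fst, smul_eq_mul]; ring
      · simp only [Prod.snd_add, Prod.smul_snd, smul_eq_mul]; ring
    have E := e1 a b c s r hs hr hc.2
    have E' := e1 a' b' c' s' r' hs' hr' hc'.2
    rw [heq, E'] at E
    have c1 : ∀ x y : F, cr v (x • v + y • w) = y * κ := by
      intro x y
      rw [hκ]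
      simp only [cr, Prod.fst_add, Prod.snd_add, Prod.smul_fst, Prod.smul_snd, smul_eq_mul]; ring
    have c2 : ∀ x y : F, cr (x • v + y • w) w = x * κ := by
      intro x y
      rw [hκ]
      simp only [cr, Prod.fst_add, Prod.snd_add, Prod.smul_fst, Prod.smul_snd, smul_eq_mul]; ring
    have f1 := congrArg (cr v) E
    rw [c1, c1] at f1
    have f2 := congrArg (fun z => cr z w) E
    simp only [c2] at f2
    have hrr : r' = r := by
      have : κ ^ 2 * (r' - r) = 0 := by linear_combination -f1
      rcases mul_eq_zero.1 this with e | e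
      · exact absurd e (pow_ne_zero _ hh)
      · linear_combination e
    subst hrr
    have hss : s' = s := by
      have : κ ^ 3 * r' * (s' - s) = 0 := by linear_combination -f2
      rcases mul_eq_zero.1 this with e | e
      · exact absurd e (mul_ne_zero (pow_ne_zero _ hh) hr0)
      · linear_combination e
    subst hss
    have haa : a = a' := eq_of_ac (fun x => by rw [hs, hs'])
    have hbb : b = b' := eq_of_ac (fun x => by rw [hr, hr'])
    subst haa hbb
    have hcc : c = c' := mul_left_cancel heq
    subst hcc
    rfl

end UBound

section StepZero
variable {F : Type*} [Field F] [DecidableEq F]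

/-- good traces -/
def Good (x : SL F) : Prop := tr x ≠ 0 ∧ tr x ^ 2 ≠ 4

lemma good_conj {x y : SL F} (h : Good y) : Good (x * y * x⁻¹) := by
  unfold Good; rw [tr_conj]; exact h

lemma not_good {x : SL F} (h : ¬ Good x) : tr x * (tr x ^ 2 - 4) = 0 := by
  unfold Good at h
  by_cases h0 : tr x = 0
  · rw [h0, zero_mul]
  · have : tr x ^ 2 = 4 := by by_contra h'; exact h ⟨h0, h'⟩
    rw [this, sub_self, mul_zero]

lemma exists_good (h2 : (2 : F) ≠ 0) (h3 : (3 : F) ≠ 0) (H : Finset (SL F))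
    (hsym : ∀ h ∈ H, h⁻¹ ∈ H) (hone : (1 : SL F) ∈ H)
    (hgen : Subgroup.closure (H : Set (SL F)) = ⊤) : ∃ g ∈ H ^ 5, Good g := by
  by_contra hcon
  push Not at hcon
  have hle : ∀ {m : ℕ}, m ≤ 5 → ∀ x ∈ H ^ m, tr x * (tr x ^ 2 - 4) = 0 := by
    intro m hm x hx
    exact not_good (hcon x (subset_pow_of_le hone hm hx))
  by_cases hc : ∃ u ∈ H ^ 2, ∃ ε : F, ε ^ 2 = 1 ∧ tr u = 2 * ε ∧
      ¬ (u.1 0 0 = ε ∧ u.1 0 1 = 0 ∧ u.1 1 0 = 0)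
  · obtain ⟨u, hu, ε, hε, htr, hne⟩ := hc
    have hd := det_eq u
    unfold tr at htr
    obtain ⟨v, hv, k, hk, h00, h01, h10, h11⟩ := nilpotent_form (a := u.1 0 0 - ε) (b := u.1 0 1)
      (c := u.1 1 0) (d := u.1 1 1 - ε) (by linear_combination htr)
      (by linear_combination hd - ε * htr - hε) (by
        rintro ⟨e1, e2, e3⟩
        exact hne ⟨by linear_combination e1, e2, e3⟩)
    obtain ⟨x, hx, hxv⟩ := exists_escape hgen hv
    have hx1 : x ∈ H ^ 1 := by simpa using hx
    rw [← tr_N] at hxv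
    have hcx : k * ((-v.1 * v.2) * x.1 0 0 + v.1 ^ 2 * x.1 1 0 + (- v.2 ^ 2) * x.1 0 1 +
      v.1 * v.2 * x.1 1 1) ≠ 0 := mul_ne_zero hk hxv
    set c := k * ((-v.1 * v.2) * x.1 0 0 + v.1 ^ 2 * x.1 1 0 + (- v.2 ^ 2) * x.1 0 1 +
      v.1 * v.2 * x.1 1 1) with hcdef
    have t0 := hle (m := 1) (by norm_num) x hx1
    have hux : u * x ∈ H ^ 3 := by rw [pow_succ H 2]; exact Finset.mul_mem_mul hu hx
    have huux : u * (u * x) ∈ H ^ 5 := by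
      rw [show 5 = 2 + 3 by norm_num, pow_add]; exact Finset.mul_mem_mul hu hux
    have hu' : u⁻¹ ∈ H ^ 2 := by
      have hHi : H⁻¹ = H := by
        ext z; rw [Finset.mem_inv']
        exact ⟨fun h => by simpa using hsym _ h, fun h => hsym _ h⟩
      have : u⁻¹ ∈ (H ^ 2)⁻¹ := Finset.inv_mem_inv hu
      rwa [← inv_pow, hHi] at this
    have hu'x : u⁻¹ * x ∈ H ^ 3 := by rw [pow_succ H 2]; exact Finset.mul_mem_mul hu' hx
    have t1 := hle (m := 3) (by norm_num) _ hux
    have t2 := hle (m := 3) (by norm_num) _ hu'x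
    have t3 := hle (m := 5) (by norm_num) _ huux
    have c1 : tr (u * x) = ε * tr x + c := by
      simp only [tr, mul00, mul11, hcdef]
      linear_combination x.1 0 0 * h00 + x.1 1 0 * h01 + x.1 0 1 * h10 + x.1 1 1 * h11
    have c2 : tr (u⁻¹ * x) = ε * tr x - c := by
      simp only [tr, mul00, mul11, inv00, inv01, inv10, inv11, hcdef]
      linear_combination x.1 0 0 * h11 - x.1 1 0 * h01 - x.1 0 1 * h10 + x.1 1 1 * h00
    have c3 : tr (u * (u * x)) = tr x + 2 * ε * c := by
      have e : tr (u * (u * x)) = 2 * ε * tr (u * x) - tr x := by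
        simp only [tr, mul00, mul11, mul10, mul01]
        linear_combination (u.1 0 0 * x.1 0 0 + u.1 0 1 * x.1 1 0 + u.1 1 0 * x.1 0 1
          + u.1 1 1 * x.1 1 1) * htr - (x.1 0 0 + x.1 1 1) * hd
      rw [e, c1]; linear_combination 2 * tr x * hε
    rw [c1] at t1
    rw [c2] at t2
    rw [c3] at t3
    set t := tr x
    have h6 : 6 * c ^ 3 = 0 := by
      have hε3 : ε ^ 3 = ε := by linear_combination ε * hε
      -- values of `s^3 - 4 s` at `εt, εt + c, εt - c, εt + 2c`
      have q0 : (ε * t) ^ 3 - 4 * (ε * t) = 0 := by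
        linear_combination ε * t0 + t ^ 3 * hε3
      have q1 : (ε * t + c) ^ 3 - 4 * (ε * t + c) = 0 := by linear_combination t1
      have q2 : (ε * t - c) ^ 3 - 4 * (ε * t - c) = 0 := by linear_combination t2
      have q3 : (ε * t + 2 * c) ^ 3 - 4 * (ε * t + 2 * c) = 0 := by
        have hz : ε * t + 2 * c = ε * (t + 2 * ε * c) := by linear_combination (-2 * c) * hε
        rw [hz]
        linear_combination ε * t3 + (t + 2 * ε * c) ^ 3 * hε3
      linear_combination q3 - 3 * q1 + 3 * q0 - q2
    have h6' : (6 : F) ≠ 0 := by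
      have := mul_ne_zero h2 h3
      norm_num at this; exact this
    exact (mul_ne_zero h6' (pow_ne_zero 3 hcx)) h6
  · push Not at hc
    -- elements of `H ^ 2` are `±1` or traceless
    have hcl : ∀ x ∈ H ^ 2, tr x = 0 ∨ (x.1 0 1 = 0 ∧ x.1 1 0 = 0 ∧ x.1 0 0 = x.1 1 1) := by
      intro x hx
      by_cases h0 : tr x = 0
      · exact Or.inl h0
      right
      have h4 := hle (m := 2) (by norm_num) x hx
      have h4 : tr x ^ 2 - 4 = 0 := by
        rcases mul_eq_zero.1 h4 with e | e
        · exact absurd e h0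
        · exact e
      have := hc x hx (tr x / 2) (by field_simp; linear_combination h4) (by field_simp)
      obtain ⟨e1, e2, e3⟩ := this
      refine ⟨e2, e3, ?_⟩
      unfold tr at e1
      field_simp at e1
      linear_combination e1
    have hH2 : ∀ x ∈ H, x ∈ H ^ 2 := fun x hx =>
      subset_pow_of_le hone (show 1 ≤ 2 by norm_num) (by simpa using hx)
    have hcomm : ∀ x ∈ H, ∀ y ∈ H, ∃ ε : F, x.1 * y.1 = ε • (y.1 * x.1) := by
      intro x hx y hy
      have hxy : x * y ∈ H ^ 2 := by rw [pow_two]; exact Finset.mul_mem_mul hx hy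
      have key : ∀ ε : F, (x * y).1 0 0 = ε * (y * x).1 0 0 → (x * y).1 0 1 = ε * (y * x).1 0 1 →
          (x * y).1 1 0 = ε * (y * x).1 1 0 → (x * y).1 1 1 = ε * (y * x).1 1 1 →
          ∃ ε : F, x.1 * y.1 = ε • (y.1 * x.1) := by
        intro ε e1 e2 e3 e4
        refine ⟨ε, ?_⟩
        ext i j
        fin_cases i <;> fin_cases j <;> simpa
      rcases hcl x (hH2 x hx) with ex | ⟨ex1, ex2, ex3⟩
      · rcases hcl y (hH2 y hy) with ey | ⟨ey1, ey2, ey3⟩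
        · rcases hcl _ hxy with e | ⟨e1, e2, e3⟩
          · apply key (-1) <;> simp only [mul00, mul01, mul10, mul11, tr] at * <;> grind
          · apply key 1 <;> simp only [mul00, mul01, mul10, mul11, tr] at * <;> grind
        · apply key 1 <;> simp only [mul00, mul01, mul10, mul11, tr] at * <;> grind
      · apply key 1 <;> simp only [mul00, mul01, mul10, mul11, tr] at * <;> grind
    have hcomm2 : ∀ y ∈ H, ∀ x : SL F, ∃ ε : F, x.1 * y.1 = ε • (y.1 * x.1) := by
      intro y hy x
      have hx : x ∈ Subgroup.closure (H : Set (SL F)) := by rw [hgen]; trivial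
      induction hx using Subgroup.closure_induction_left with
      | one => exact ⟨1, by simp⟩
      | mul_left x hx z hz ih =>
        obtain ⟨a, ha⟩ := ih
        obtain ⟨b, hb⟩ := hcomm x hx y hy
        refine ⟨a * b, ?_⟩
        rw [Matrix.SpecialLinearGroup.coe_mul, Matrix.mul_assoc, ha, Matrix.mul_smul,
          ← Matrix.mul_assoc, hb, Matrix.smul_mul, smul_smul, Matrix.mul_assoc]
      | inv_mul_cancel x hx z hz ih =>
        obtain ⟨a, ha⟩ := ih
        obtain ⟨b, hb⟩ := hcomm x⁻¹ (hsym x hx) y hy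
        refine ⟨a * b, ?_⟩
        rw [Matrix.SpecialLinearGroup.coe_mul, Matrix.mul_assoc, ha, Matrix.mul_smul,
          ← Matrix.mul_assoc, hb, Matrix.smul_mul, smul_smul, Matrix.mul_assoc]
    have hcomm3 : ∀ x : SL F, ∀ y : SL F, ∃ ε : F, x.1 * y.1 = ε • (y.1 * x.1) := by
      intro x y
      have hy : y ∈ Subgroup.closure (H : Set (SL F)) := by rw [hgen]; trivial
      induction hy using Subgroup.closure_induction_left with
      | one => exact ⟨1, by simp⟩
      | mul_left y hy z hz ih =>
        obtain ⟨a, ha⟩ := ih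
        obtain ⟨b, hb⟩ := hcomm2 y hy x
        refine ⟨b * a, ?_⟩
        rw [Matrix.SpecialLinearGroup.coe_mul, ← Matrix.mul_assoc, hb, Matrix.smul_mul,
          Matrix.mul_assoc, ha, Matrix.mul_smul, smul_smul, Matrix.mul_assoc]
      | inv_mul_cancel y hy z hz ih =>
        obtain ⟨a, ha⟩ := ih
        obtain ⟨b, hb⟩ := hcomm2 y⁻¹ (hsym y hy) x
        refine ⟨b * a, ?_⟩
        rw [Matrix.SpecialLinearGroup.coe_mul, ← Matrix.mul_assoc, hb, Matrix.smul_mul,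
          Matrix.mul_assoc, ha, Matrix.mul_smul, smul_smul, Matrix.mul_assoc]
    obtain ⟨ε, hε⟩ := hcomm3 (up 1) (lo 1)
    have e00 := congrFun (congrFun hε 0) 0
    have e11 := congrFun (congrFun hε 1) 1
    simp [up, lo, Matrix.mul_apply, Fin.sum_univ_two] at e00 e11
    have : (3 : F) = 0 := by linear_combination (2 : F) * e00 - e11
    exact h3 this

end StepZero
end Growth

namespace Growth

section XBound
variable {F : Type*} [Field F] [Fintype F] [DecidableEq F]

/-- eigen-equation from the line condition -/
lemma eigen_of_cr {x : SL F} {v : F × F} (hv : v ≠ 0) (h : cr v (ac x v) = 0) :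
    ∃ l : F, ac x v = l • v ∧ l ^ 2 - tr x * l + 1 = 0 := by
  obtain ⟨l, hl⟩ := exists_smul_of_cr hv h
  refine ⟨l, hl, ?_⟩
  have hd := det_eq x
  have h1 : x.1 0 0 * v.1 + x.1 0 1 * v.2 = l * v.1 := congrArg Prod.fst hl
  have h2 : x.1 1 0 * v.1 + x.1 1 1 * v.2 = l * v.2 := congrArg Prod.snd hl
  have e1 : v.1 * (l ^ 2 - tr x * l + 1) = 0 := by
    unfold tr
    linear_combination (x.1 1 1 - l) * h1 - x.1 0 1 * h2 - v.1 * hd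
  have e2 : v.2 * (l ^ 2 - tr x * l + 1) = 0 := by
    unfold tr
    linear_combination (x.1 0 0 - l) * h2 - x.1 1 0 * h1 - v.2 * hd
  rcases mul_eq_zero.1 e1 with e | e
  · rcases mul_eq_zero.1 e2 with e' | e'
    · exact absurd (Prod.ext e e') hv
    · exact e'
  · exact e

lemma roots_card (t : F) :
    (Finset.univ.filter (fun l : F => l ^ 2 - t * l + 1 = 0)).card ≤ 2 := by
  rcases (Finset.univ.filter (fun l : F => l ^ 2 - t * l + 1 = 0)).eq_empty_or_nonempty with h | h
  · rw [h]; simp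
  · obtain ⟨a, ha⟩ := h
    have ha := (Finset.mem_filter.1 ha).2
    refine le_trans (Finset.card_le_card (t := {a, t - a}) ?_) Finset.card_le_two
    intro b hb
    have hb := (Finset.mem_filter.1 hb).2
    have : (b - a) * (b - (t - a)) = 0 := by linear_combination hb - ha
    simp only [Finset.mem_insert, Finset.mem_singleton]
    rcases mul_eq_zero.1 this with e | e
    · left; linear_combination e
    · right; linear_combination e

/-- two eigenvectors of the same eigenvalue are proportional -/
lemma eig_unique {x : SL F} {v w : F × F} {l : F} (ht : tr x ^ 2 ≠ 4)
    (hv : ac x v = l • v) (hw : ac x w = l • w) : cr v w = 0 := by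
  by_contra hne
  have h1 := cr_ac x v w
  rw [hv, hw, cr_smul_left, cr_smul_right] at h1
  have hl : l ^ 2 = 1 := by
    have : (l ^ 2 - 1) * cr v w = 0 := by linear_combination h1
    rcases mul_eq_zero.1 this with e | e
    · linear_combination e
    · exact absurd e hne
  have h2 : cr (ac x v) w + cr v (ac x w) = tr x * cr v w := by
    simp only [cr, ac, tr]; ring
  rw [hv, hw, cr_smul_left, cr_smul_right] at h2
  have : (tr x - 2 * l) * cr v w = 0 := by linear_combination -h2
  rcases mul_eq_zero.1 this with e | e
  · apply ht
    have : tr x = 2 * l := by linear_combination e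
    rw [this]; linear_combination 4 * hl
  · exact hne e

/-- count of elements sending `v` to a fixed vector -/
lemma coset_count (A X : Finset (SL F)) (hsym : ∀ a ∈ A, a⁻¹ ∈ A) (hX : X ⊆ A) (M : ℕ)
    (v w : F × F)
    (hM : ((A * A).filter (fun u => ac u v = v)).card ≤ M) :
    (X.filter (fun x => ac x v = w)).card ≤ M := by
  rcases (X.filter (fun x => ac x v = w)).eq_empty_or_nonempty with h | ⟨x0, h0⟩
  · rw [h]; simp
  · obtain ⟨hx0, h0⟩ := Finset.mem_filter.1 h0
    refine le_trans ?_ hM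
    apply Finset.card_le_card_of_injOn (fun x => x0⁻¹ * x)
    · intro x hx
      simp only [Finset.coe_filter, Set.mem_ofPred_eq] at hx ⊢
      refine ⟨Finset.mul_mem_mul (hsym _ (hX hx0)) (hX hx.1), ?_⟩
      rw [ac_mul, hx.2, ← h0, ac_inv_ac]
    · intro x _ y _ hxy
      exact mul_left_cancel hxy

/-- few elements share an eigenvector with a given element -/
lemma shared_count (A X : Finset (SL F)) (hsym : ∀ a ∈ A, a⁻¹ ∈ A) (hX : X ⊆ A) (M : ℕ) (t : F)
    (hXt : ∀ x ∈ X, tr x = t) (ht : t ^ 2 ≠ 4)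
    (hM : ∀ v : F × F, v ≠ 0 → ((A * A).filter (fun u => ac u v = v)).card ≤ M)
    (x1 : SL F) (hx1 : tr x1 = t) :
    (X.filter (fun x2 => ∃ v : F × F, v ≠ 0 ∧ cr v (ac x1 v) = 0 ∧ cr v (ac x2 v) = 0)).card
      ≤ 4 * M := by
  classical
  set S := X.filter (fun x2 => ∃ v : F × F, v ≠ 0 ∧ cr v (ac x1 v) = 0 ∧ cr v (ac x2 v) = 0)
    with hS
  set R := Finset.univ.filter (fun l : F => l ^ 2 - t * l + 1 = 0) with hR
  have hR2 : R.card ≤ 2 := roots_card t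
  have hsub : S ⊆ (R ×ˢ R).biUnion (fun q => X.filter (fun x2 => ∃ v : F × F, v ≠ 0 ∧
      ac x1 v = q.1 • v ∧ ac x2 v = q.2 • v)) := by
    intro x2 hx2
    obtain ⟨hx2X, v, hv, h1, h2⟩ := Finset.mem_filter.1 hx2
    obtain ⟨l, hl, hl'⟩ := eigen_of_cr hv h1
    obtain ⟨m, hm, hm'⟩ := eigen_of_cr hv h2
    rw [hx1] at hl'
    rw [hXt x2 hx2X] at hm'
    rw [Finset.mem_biUnion]
    refine ⟨(l, m), ?_, ?_⟩
    · simp [hR, hl', hm']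
    · exact Finset.mem_filter.2 ⟨hx2X, v, hv, hl, hm⟩
  refine le_trans (Finset.card_le_card hsub) ?_
  refine le_trans (Finset.card_biUnion_le_card_mul _ _ M ?_) ?_
  · rintro ⟨l, m⟩ _
    rcases (X.filter (fun x2 => ∃ v : F × F, v ≠ 0 ∧
      ac x1 v = l • v ∧ ac x2 v = m • v)).eq_empty_or_nonempty with h | ⟨x0, h0⟩
    · simp only [h]; simp
    · obtain ⟨hx0, v, hv, h1, h2⟩ := Finset.mem_filter.1 h0
      refine le_trans (Finset.card_le_card ?_) (coset_count A X hsym hX M v (m • v) (hM v hv))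
      intro x2 hx2
      obtain ⟨hx2X, w, hw, h1', h2'⟩ := Finset.mem_filter.1 hx2
      refine Finset.mem_filter.2 ⟨hx2X, ?_⟩
      have hc : cr w v = 0 := eig_unique (by rw [hx1]; exact ht) h1' h1
      obtain ⟨c, rfl⟩ := exists_smul_of_cr hw hc
      simp only at h2'
      rw [ac_smul, h2', smul_comm]
  · rw [Finset.card_product]
    calc R.card * R.card * M ≤ 2 * 2 * M := by gcongr
      _ = 4 * M := by ring

/-- affine line through two elements -/
def OnLine (x1 x2 x3 : SL F) : Prop := ∃ β : F, ∀ i j, x3.1 i j = x1.1 i j + β * (x2.1 i j - x1.1 i j)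

lemma line_count (A X : Finset (SL F)) (hsym : ∀ a ∈ A, a⁻¹ ∈ A) (hX : X ⊆ A) (M : ℕ) (t : F)
    (hXt : ∀ x ∈ X, tr x = t) (hM1 : 1 ≤ M)
    (hM : ∀ v : F × F, v ≠ 0 → ((A * A).filter (fun u => ac u v = v)).card ≤ M)
    (x1 x2 : SL F) (hx1 : x1 ∈ X) (hx2 : x2 ∈ X) (hne : x1 ≠ x2) [DecidablePred (OnLine x1 x2)] :
    (X.filter (fun x3 => OnLine x1 x2 x3)).card ≤ 2 * M := by
  have d1 := det_eq x1
  have d2 := det_eq x2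
  have t1 := hXt x1 hx1
  have t2 := hXt x2 hx2
  unfold tr at t1 t2
  by_cases hdet : (x2.1 0 0 - x1.1 0 0) * (x2.1 1 1 - x1.1 1 1) -
      (x2.1 0 1 - x1.1 0 1) * (x2.1 1 0 - x1.1 1 0) = 0
  · obtain ⟨v, hv, k, hk, h00, h01, h10, h11⟩ := nilpotent_form (a := x2.1 0 0 - x1.1 0 0)
      (d := x2.1 1 1 - x1.1 1 1) (b := x2.1 0 1 - x1.1 0 1) (c := x2.1 1 0 - x1.1 1 0)
      (by linear_combination t2 - t1) hdet (by
        rintro ⟨e1, e2, e3⟩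
        apply hne
        apply sl_ext
        · linear_combination -e1
        · linear_combination -e2
        · linear_combination -e3
        · linear_combination t1 - t2 + e1)
    refine le_trans (Finset.card_le_card ?_) (le_trans
      (coset_count A X hsym hX M v (ac x1 v) (hM v hv)) (by omega))
    intro x3 hx3
    obtain ⟨hx3X, β, hβ⟩ := Finset.mem_filter.1 hx3
    refine Finset.mem_filter.2 ⟨hx3X, ?_⟩
    simp only [ac, hβ, h00, h01, h10, h11]
    ext <;> simp only <;> ring
  · refine le_trans (Finset.card_le_card (t := {x1, x2}) ?_) (le_trans Finset.card_le_two (by omega))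
    intro x3 hx3
    obtain ⟨hx3X, β, hβ⟩ := Finset.mem_filter.1 hx3
    have d3 := det_eq x3
    simp only [hβ] at d3
    have : β * (β - 1) * ((x2.1 0 0 - x1.1 0 0) * (x2.1 1 1 - x1.1 1 1) -
      (x2.1 0 1 - x1.1 0 1) * (x2.1 1 0 - x1.1 1 0)) = 0 := by
      linear_combination d3 + (β - 1) * d1 - β * d2
    simp only [Finset.mem_insert, Finset.mem_singleton]
    rcases mul_eq_zero.1 this with e | e
    · rcases mul_eq_zero.1 e with e | e
      · left; apply sl_ext <;> rw [hβ, e] <;> ring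
      · right
        have : β = 1 := by linear_combination e
        apply sl_ext <;> rw [hβ, this] <;> ring
    · exact absurd e hdet

/-- coordinates of a matrix -/
def vec (x : SL F) : Fin 4 → F := ![x.1 0 0, x.1 0 1, x.1 1 0, x.1 1 1]

/-- coordinates of `(x - 1)` arranged dually -/
def dvec (x : SL F) : Fin 4 → F := ![x.1 0 0 - 1, x.1 1 0, x.1 0 1, x.1 1 1 - 1]

lemma dvec_vec (g x : SL F) : ∑ i, dvec g i * vec x i = tr (g * x) - tr x := by
  simp [Fin.sum_univ_four, dvec, vec, tr, Matrix.mul_apply, Fin.sum_univ_two]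
  ring

lemma onLine_of_dep {t : F} (ht : t ≠ 0) {x1 x2 x3 : SL F} (h1 : tr x1 = t) (h2 : tr x2 = t)
    (h3 : tr x3 = t) (hne : x1 ≠ x2)
    (hdep : ¬ LinearIndependent F ![vec x1, vec x2, vec x3]) : OnLine x1 x2 x3 := by
  rw [Fintype.not_linearIndependent_iff] at hdep
  obtain ⟨c, hc, i, hi⟩ := hdep
  rw [Fin.sum_univ_three] at hc
  have e0 := congrFun hc 0
  have e1 := congrFun hc 1
  have e2 := congrFun hc 2
  have e3 := congrFun hc 3
  simp [vec] at e0 e1 e2 e3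
  unfold tr at h1 h2 h3
  have hs : c 0 + c 1 + c 2 = 0 := by
    have : t * (c 0 + c 1 + c 2) = 0 := by
      linear_combination e0 + e3 - c 0 * h1 - c 1 * h2 - c 2 * h3
    simpa [ht] using this
  have hc2 : c 2 ≠ 0 := by
    intro hc2
    have h10 : c 1 = - c 0 := by linear_combination hs - hc2
    have hc0 : c 0 = 0 := by
      by_contra h0
      apply hne
      rw [h10, hc2] at e0 e1 e2 e3
      apply sl_ext <;> apply mul_left_cancel₀ h0
      · linear_combination e0
      · linear_combination e1
      · linear_combination e2
      · linear_combination e3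
    fin_cases i
    · exact hi hc0
    · exact hi (by simp [h10, hc0])
    · exact hi hc2
  refine ⟨- c 1 / c 2, ?_⟩
  have hc0 : c 0 = - c 1 - c 2 := by linear_combination hs
  rw [hc0] at e0 e1 e2 e3
  intro i j
  fin_cases i <;> fin_cases j <;> simp only [Fin.zero_eta, Fin.mk_one, Fin.isValue] <;> field_simp
  · linear_combination e0
  · linear_combination e1
  · linear_combination e2
  · linear_combination e3

/-- the main fibre statement -/
lemma fibre_unique {t : F} (ht : t ≠ 0) {x1 x2 x3 g g' : SL F} (h1 : tr x1 = t) (h2 : tr x2 = t)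
    (h3 : tr x3 = t) (hne : x1 ≠ x2) (hline : ¬ OnLine x1 x2 x3)
    (hsh : ¬ ∃ v : F × F, v ≠ 0 ∧ cr v (ac x1 v) = 0 ∧ cr v (ac x2 v) = 0)
    (hg : g ≠ 1) (hg' : g' ≠ 1) (hgg : g ≠ g')
    (g1 : tr (g * x1) = t) (g2 : tr (g * x2) = t) (g3 : tr (g * x3) = t)
    (g1' : tr (g' * x1) = t) (g2' : tr (g' * x2) = t) (g3' : tr (g' * x3) = t) : False := by
  have hind : LinearIndependent F ![vec x1, vec x2, vec x3] := by
    by_contra h; exact hline (onLine_of_dep ht h1 h2 h3 hne h)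
  have hdep : ¬ LinearIndependent F ![dvec g, dvec g'] := by
    intro hi
    have r1 : (Matrix.of ![dvec g, dvec g']).rank = 2 := by
      have := LinearIndependent.rank_matrix (M := Matrix.of ![dvec g, dvec g']) hi
      simpa using this
    have r2 : (Matrix.of ![vec x1, vec x2, vec x3]).transpose.rank = 3 := by
      rw [Matrix.rank_transpose]
      have := LinearIndependent.rank_matrix (M := Matrix.of ![vec x1, vec x2, vec x3]) hind
      simpa using this
    have hz : (Matrix.of ![dvec g, dvec g']) * (Matrix.of ![vec x1, vec x2, vec x3]).transpose = 0 := by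
      ext i j
      rw [Matrix.mul_apply]
      fin_cases i <;> fin_cases j <;>
        simp only [Matrix.of_apply, Matrix.transpose_apply, Fin.zero_eta, Fin.mk_one, Fin.reduceFinMk,
          Matrix.cons_val, Matrix.zero_apply, Fin.isValue] <;>
        rw [dvec_vec] <;> simp [*]
    have := Matrix.rank_add_rank_le_card_of_mul_eq_zero hz
    rw [r1, r2] at this
    simp at this
  have hd := det_eq g
  have hd' := det_eq g'
  have hnz : ∀ {g : SL F}, g ≠ 1 → ∀ c : F, c • dvec g = 0 → c = 0 := by
    intro g hg c hc
    by_contra h0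
    apply hg
    have e0 := congrFun hc 0
    have e1 := congrFun hc 1
    have e2 := congrFun hc 2
    have e3 := congrFun hc 3
    simp [dvec, h0] at e0 e1 e2 e3
    apply sl_ext
    · rw [one00]; linear_combination e0
    · rw [one01]; exact e2
    · rw [one10]; exact e1
    · rw [one11]; linear_combination e3
  rw [Fintype.not_linearIndependent_iff] at hdep
  obtain ⟨c, hc, i, hi⟩ := hdep
  rw [Fin.sum_univ_two] at hc
  simp only [Matrix.cons_val_zero, Matrix.cons_val_one] at hc
  have hc1 : c 1 ≠ 0 := by
    intro h
    rw [h, zero_smul, add_zero] at hc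
    have := hnz hg _ hc
    fin_cases i
    · exact hi this
    · exact hi h
  have hc0 : c 0 ≠ 0 := by
    intro h
    rw [h, zero_smul, zero_add] at hc
    exact hc1 (hnz hg' _ hc)
  obtain ⟨s, hs⟩ : ∃ s : F, s = - c 0 / c 1 := ⟨_, rfl⟩
  have hs0 : s ≠ 0 := by rw [hs]; exact div_ne_zero (neg_ne_zero.2 hc0) hc1
  have e0 := congrFun hc 0
  have e1 := congrFun hc 1
  have e2 := congrFun hc 2
  have e3 := congrFun hc 3
  simp [dvec] at e0 e1 e2 e3
  have f0 : g'.1 0 0 - 1 = s * (g.1 0 0 - 1) := by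
    rw [hs]; field_simp; linear_combination e0
  have f1 : g'.1 1 0 = s * g.1 1 0 := by
    rw [hs]; field_simp; linear_combination e1
  have f2 : g'.1 0 1 = s * g.1 0 1 := by
    rw [hs]; field_simp; linear_combination e2
  have f3 : g'.1 1 1 - 1 = s * (g.1 1 1 - 1) := by
    rw [hs]; field_simp; linear_combination e3
  have hs1 : s ≠ 1 := by
    intro h
    rw [h] at f0 f1 f2 f3
    apply hgg
    apply sl_ext
    · linear_combination -f0
    · linear_combination -f2
    · linear_combination -f1
    · linear_combination -f3
  -- trace and determinant of `n = g - 1`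
  set T := g.1 0 0 - 1 + (g.1 1 1 - 1) with hT
  set D := (g.1 0 0 - 1) * (g.1 1 1 - 1) - g.1 0 1 * g.1 1 0 with hD
  have k1 : T + D = 0 := by rw [hT, hD]; linear_combination hd
  have k2 : s * T + s ^ 2 * D = 0 := by
    have a0 : g'.1 0 0 = 1 + s * (g.1 0 0 - 1) := by linear_combination f0
    have a3 : g'.1 1 1 = 1 + s * (g.1 1 1 - 1) := by linear_combination f3
    rw [a0, a3, f1, f2] at hd'
    rw [hT, hD]; linear_combination hd'
  have kD : D = 0 := by
    have : s * (s - 1) * D = 0 := by linear_combination k2 - s * k1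
    rcases mul_eq_zero.1 this with e | e
    · exact absurd e (mul_ne_zero hs0 (sub_ne_zero.2 hs1))
    · exact e
  have kT : T = 0 := by linear_combination k1 - kD
  obtain ⟨v, hv, k, hk, h00, h01, h10, h11⟩ := nilpotent_form (a := g.1 0 0 - 1)
    (d := g.1 1 1 - 1) (b := g.1 0 1) (c := g.1 1 0) kT kD (by
      rintro ⟨e1, e2, e3⟩
      apply hg
      apply sl_ext
      · rw [one00]; linear_combination e1
      · rw [one01, e2]
      · rw [one10, e3]
      · rw [one11]; linear_combination kT - e1)
  apply hsh
  have key : ∀ x : SL F, tr x = t → tr (g * x) = t → cr v (ac x v) = 0 := by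
    intro x hx hgx
    rw [← tr_N]
    apply mul_left_cancel₀ hk
    rw [mul_zero]
    simp only [tr, mul00, mul11] at hx hgx
    linear_combination hgx - hx - x.1 0 0 * h00 - x.1 1 0 * h01 - x.1 0 1 * h10 - x.1 1 1 * h11
  exact ⟨v, hv, key x1 h1 g1, key x2 h2 g2⟩

/-- The Larsen–Pink type inequality. -/
lemma trace_bound (A : Finset (SL F)) (hsym : ∀ a ∈ A, a⁻¹ ∈ A) (M : ℕ) (hM1 : 1 ≤ M) (t : F)
    (ht0 : t ≠ 0) (ht : t ^ 2 ≠ 4)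
    (hM : ∀ v : F × F, v ≠ 0 → ((A * A).filter (fun u => ac u v = v)).card ≤ M) :
    (A.filter (fun x => tr x = t)).card ^ 3 ≤
      7 * M * (A.filter (fun x => tr x = t)).card ^ 2 + 2 * (A * A).card ^ 2 := by
  classical
  set X := A.filter (fun x => tr x = t) with hXdef
  have hX : X ⊆ A := Finset.filter_subset _ _
  have hXt : ∀ x ∈ X, tr x = t := fun x hx => (Finset.mem_filter.1 hx).2
  let P := X ×ˢ X ×ˢ X
  let q1 : SL F × SL F × SL F → Prop := fun q => q.1 = q.2.1
  let q2 : SL F × SL F × SL F → Prop := fun q => q.1 ≠ q.2.1 ∧ OnLine q.1 q.2.1 q.2.2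
  let q3 : SL F × SL F × SL F → Prop := fun q => ∃ v : F × F, v ≠ 0 ∧ cr v (ac q.1 v) = 0 ∧
    cr v (ac q.2.1 v) = 0
  let q4 : SL F × SL F × SL F → Prop := fun q => ¬ q1 q ∧ ¬ q2 q ∧ ¬ q3 q
  have hP : P.card = X.card ^ 3 := by
    simp only [P, Finset.card_product]; ring
  have hcover : P ⊆ P.filter q1 ∪ P.filter q2 ∪ P.filter q3 ∪ P.filter q4 := by
    intro q hq
    simp only [Finset.mem_union, Finset.mem_filter, hq, true_and, q4]
    by_cases h1 : q1 q
    · exact Or.inl (Or.inl (Or.inl h1))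
    by_cases h2 : q2 q
    · exact Or.inl (Or.inl (Or.inr h2))
    by_cases h3 : q3 q
    · exact Or.inl (Or.inr h3)
    exact Or.inr ⟨h1, h2, h3⟩
  have b1 : (P.filter q1).card ≤ X.card ^ 2 := by
    have : (X ×ˢ X).card = X.card ^ 2 := by rw [Finset.card_product]; ring
    rw [← this]
    apply Finset.card_le_card_of_injOn (fun q => (q.1, q.2.2))
    · rintro ⟨a, b, c⟩ hq
      simp [P, q1] at hq ⊢
      tauto
    · rintro ⟨a, b, c⟩ hq ⟨a', b', c'⟩ hq' h
      simp [P, q1] at hq hq' h ⊢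
      obtain ⟨_, rfl⟩ := hq
      obtain ⟨_, rfl⟩ := hq'
      tauto
  have b2 : (P.filter q2).card ≤ 2 * M * X.card ^ 2 := by
    have hc : (X ×ˢ X).card = X.card ^ 2 := by rw [Finset.card_product]; ring
    rw [← hc]
    apply Finset.card_le_mul_card_image_of_maps_to (f := fun q => (q.1, q.2.1))
    · rintro ⟨a, b, c⟩ hq
      simp [P, q2] at hq ⊢
      tauto
    · rintro ⟨x1, x2⟩ hx
      rw [Finset.mem_product] at hx
      by_cases hne : x1 = x2
      · rw [Finset.card_eq_zero.2]
        · omega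
        · apply Finset.eq_empty_of_forall_notMem
          rintro ⟨a, b, c⟩ hq
          simp [P, q2] at hq
          obtain ⟨⟨_, h1, _⟩, rfl, rfl⟩ := hq
          exact h1 hne
      · refine le_trans ?_ (line_count A X hsym hX M t hXt hM1 hM x1 x2 hx.1 hx.2 hne)
        apply Finset.card_le_card_of_injOn (fun q => q.2.2)
        · rintro ⟨a, b, c⟩ hq
          simp [P, q2] at hq ⊢
          obtain ⟨⟨h0, h1, h2⟩, rfl, rfl⟩ := hq
          exact ⟨h0.2.2, h2⟩
        · rintro ⟨a, b, c⟩ hq ⟨a', b', c'⟩ hq' h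
          simp at hq hq' h ⊢
          obtain ⟨_, rfl, rfl⟩ := hq
          obtain ⟨_, rfl, rfl⟩ := hq'
          exact ⟨rfl, rfl, h⟩
  have b3 : (P.filter q3).card ≤ 4 * M * X.card ^ 2 := by
    have hc : (X ×ˢ X).card = X.card ^ 2 := by rw [Finset.card_product]; ring
    rw [← hc]
    apply Finset.card_le_mul_card_image_of_maps_to (f := fun q => (q.1, q.2.2))
    · rintro ⟨a, b, c⟩ hq
      simp only [P, Finset.mem_filter, Finset.mem_product] at hq
      simp only [Finset.mem_product]
      exact ⟨hq.1.1, hq.1.2.2⟩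
    · rintro ⟨x1, x3⟩ hx
      rw [Finset.mem_product] at hx
      refine le_trans ?_ (shared_count A X hsym hX M t hXt ht hM x1 (hXt x1 hx.1))
      apply Finset.card_le_card_of_injOn (fun q => q.2.1)
      · rintro ⟨a, b, c⟩ hq
        simp only [P, q3, Finset.coe_filter, Finset.mem_filter, Finset.mem_product,
          Set.mem_ofPred_eq, Prod.mk.injEq] at hq ⊢
        obtain ⟨⟨h0, h1⟩, rfl, rfl⟩ := hq
        exact ⟨h0.2.1, h1⟩
      · rintro ⟨a, b, c⟩ hq ⟨a', b', c'⟩ hq' h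
        simp only [Finset.coe_filter, Finset.mem_filter, Finset.mem_product,
          Set.mem_ofPred_eq, Prod.mk.injEq] at hq hq' h ⊢
        obtain ⟨_, rfl, rfl⟩ := hq
        obtain ⟨_, rfl, rfl⟩ := hq'
        exact ⟨rfl, h, rfl⟩
  have b4 : (P.filter q4).card ≤ 2 * (A * A).card ^ 2 := by
    have hc : ((A * A) ×ˢ (A * A)).card = (A * A).card ^ 2 := by rw [Finset.card_product]; ring
    rw [← hc]
    apply Finset.card_le_mul_card_image_of_maps_to (f := fun q => (q.1⁻¹ * q.2.1, q.1⁻¹ * q.2.2))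
    · rintro ⟨a, b, c⟩ hq
      simp only [P, Finset.mem_filter, Finset.mem_product] at hq
      obtain ⟨⟨ha, hb, hc⟩, _⟩ := hq
      simp only [Finset.mem_product]
      exact ⟨Finset.mul_mem_mul (hsym _ (hX ha)) (hX hb),
        Finset.mul_mem_mul (hsym _ (hX ha)) (hX hc)⟩
    · rintro ⟨y1, y2⟩ hy
      by_contra hgt
      push Not at hgt
      rw [Finset.two_lt_card] at hgt
      obtain ⟨⟨a1, a2, a3⟩, ha, ⟨b1, b2, b3⟩, hb, ⟨c1, c2, c3⟩, hc, hab, hac, hbc⟩ := hgt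
      simp only [P, Finset.mem_filter, Finset.mem_product, Prod.mk.injEq] at ha hb hc
      obtain ⟨⟨⟨ha1, ha2, ha3⟩, hq⟩, hay1, hay2⟩ := ha
      obtain ⟨⟨⟨hb1, hb2, hb3⟩, _⟩, hby1, hby2⟩ := hb
      obtain ⟨⟨⟨hc1, hc2, hc3⟩, _⟩, hcy1, hcy2⟩ := hc
      have ea2 : a2 = a1 * y1 := by rw [← hay1]; group
      have ea3 : a3 = a1 * y2 := by rw [← hay2]; group
      have eb2 : b2 = b1 * y1 := by rw [← hby1]; group
      have eb3 : b3 = b1 * y2 := by rw [← hby2]; group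
      have ec2 : c2 = c1 * y1 := by rw [← hcy1]; group
      have ec3 : c3 = c1 * y2 := by rw [← hcy2]; group
      have nab : b1 ≠ a1 := by rintro rfl; apply hab; rw [ea2, ea3, eb2, eb3]
      have nac : c1 ≠ a1 := by rintro rfl; apply hac; rw [ea2, ea3, ec2, ec3]
      have nbc : b1 ≠ c1 := by rintro rfl; apply hbc; rw [eb2, eb3, ec2, ec3]
      have hq12 : a1 ≠ a2 := hq.1
      have hql : ¬ OnLine a1 a2 a3 := fun h => hq.2.1 ⟨hq12, h⟩
      apply fibre_unique ht0 (hXt _ ha1) (hXt _ ha2) (hXt _ ha3) hq12 hql hq.2.2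
        (g := b1 * a1⁻¹) (g' := c1 * a1⁻¹)
      · rw [Ne, mul_inv_eq_one]; exact nab
      · rw [Ne, mul_inv_eq_one]; exact nac
      · exact fun h => nbc (mul_right_cancel h)
      · rw [inv_mul_cancel_right]; exact hXt _ hb1
      · rw [show b1 * a1⁻¹ * a2 = b2 by rw [ea2, eb2]; group]; exact hXt _ hb2
      · rw [show b1 * a1⁻¹ * a3 = b3 by rw [ea3, eb3]; group]; exact hXt _ hb3
      · rw [inv_mul_cancel_right]; exact hXt _ hc1
      · rw [show c1 * a1⁻¹ * a2 = c2 by rw [ea2, ec2]; group]; exact hXt _ hc2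
      · rw [show c1 * a1⁻¹ * a3 = c3 by rw [ea3, ec3]; group]; exact hXt _ hc3
  have htot := Finset.card_le_card hcover
  have u1 := Finset.card_union_le (P.filter q1 ∪ P.filter q2 ∪ P.filter q3) (P.filter q4)
  have u2 := Finset.card_union_le (P.filter q1 ∪ P.filter q2) (P.filter q3)
  have u3 := Finset.card_union_le (P.filter q1) (P.filter q2)
  rw [hP] at htot
  have hle : X.card ^ 2 ≤ M * X.card ^ 2 := Nat.le_mul_of_pos_left _ hM1
  nlinarith

end XBound

end Growth

namespace Growth

section Torus
variable {F : Type*} [Field F] [Fintype F] [DecidableEq F]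

/-- central (scalar) elements -/
def Central (y : SL F) : Prop := y.1 0 1 = 0 ∧ y.1 1 0 = 0 ∧ y.1 0 0 = y.1 1 1

lemma not_central {y : SL F} (h : tr y ^ 2 ≠ 4) : ¬ Central y := by
  rintro ⟨h1, h2, h3⟩
  have hd := det_eq y
  apply h
  unfold tr
  rw [h1, h3] at hd
  rw [h3]
  linear_combination 4 * hd

lemma comm_form {y z : SL F} (hy : ¬ Central y) (h : z * y = y * z) :
    ∃ a b : F, z.1 0 0 = a + b * y.1 0 0 ∧ z.1 0 1 = b * y.1 0 1 ∧ z.1 1 0 = b * y.1 1 0 ∧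
      z.1 1 1 = a + b * y.1 1 1 := by
  have e00 := congrArg (fun w : SL F => w.1 0 0) h
  have e01 := congrArg (fun w : SL F => w.1 0 1) h
  have e10 := congrArg (fun w : SL F => w.1 1 0) h
  simp only [mul00, mul01, mul10] at e00 e01 e10
  by_cases h1 : y.1 0 1 = 0
  · by_cases h2 : y.1 1 0 = 0
    · have h3 : y.1 0 0 - y.1 1 1 ≠ 0 := fun h' => hy ⟨h1, h2, by linear_combination h'⟩
      refine ⟨z.1 0 0 - (z.1 0 0 - z.1 1 1) / (y.1 0 0 - y.1 1 1) * y.1 0 0,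
        (z.1 0 0 - z.1 1 1) / (y.1 0 0 - y.1 1 1), by ring, ?_, ?_, ?_⟩
      · rw [h1, mul_zero]
        apply mul_left_cancel₀ h3
        rw [h1] at e01
        linear_combination -e01
      · rw [h2, mul_zero]
        apply mul_left_cancel₀ h3
        rw [h2] at e10
        linear_combination e10
      · field_simp; ring
    · refine ⟨z.1 0 0 - z.1 1 0 / y.1 1 0 * y.1 0 0, z.1 1 0 / y.1 1 0, by ring, ?_, ?_, ?_⟩
      · field_simp; linear_combination e00
      · field_simp
      · field_simp; linear_combination e10
  · refine ⟨z.1 0 0 - z.1 0 1 / y.1 0 1 * y.1 0 0, z.1 0 1 / y.1 0 1, by ring, ?_, ?_, ?_⟩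
    · field_simp
    · field_simp; linear_combination -e00
    · field_simp; linear_combination -e01

lemma comm_trans {y z w : SL F} (hy : ¬ Central y) (hz : z * y = y * z) (hw : w * y = y * w) :
    z * w = w * z := by
  obtain ⟨a, b, h1, h2, h3, h4⟩ := comm_form hy hz
  obtain ⟨a', b', h1', h2', h3', h4'⟩ := comm_form hy hw
  apply sl_ext <;> simp only [mul00, mul01, mul10, mul11, h1, h2, h3, h4, h1', h2', h3', h4'] <;> ring

lemma comm_count (h2 : (2 : F) ≠ 0) {y : SL F} (hy : ¬ Central y) (t : F)
    (ht : tr y ^ 2 ≠ 4 ∨ t ^ 2 ≠ 4) :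
    (Finset.univ.filter (fun z : SL F => z * y = y * z ∧ tr z = t)).card ≤ 2 := by
  rcases (Finset.univ.filter (fun z : SL F => z * y = y * z ∧ tr z = t)).eq_empty_or_nonempty
    with h | ⟨z0, h0⟩
  · rw [h]; simp
  refine le_trans (Finset.card_le_card (t := {z0, z0⁻¹}) ?_) Finset.card_le_two
  intro z hz
  obtain ⟨-, hc0, ht0⟩ := Finset.mem_filter.1 h0
  obtain ⟨-, hc1, ht1⟩ := Finset.mem_filter.1 hz
  obtain ⟨a, b, e1, e2, e3, e4⟩ := comm_form hy hc0
  obtain ⟨a', b', e1', e2', e3', e4'⟩ := comm_form hy hc1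
  have hd := det_eq y
  have d0 := det_eq z0
  have d1 := det_eq z
  unfold tr at ht0 ht1
  rw [e1, e2, e3, e4] at d0
  rw [e1', e2', e3', e4'] at d1
  rw [e1, e4] at ht0
  rw [e1', e4'] at ht1
  have key : ∀ a b : F, a + b * y.1 0 0 + (a + b * y.1 1 1) = t →
      (a + b * y.1 0 0) * (a + b * y.1 1 1) - b * y.1 0 1 * (b * y.1 1 0) = 1 →
      b ^ 2 * (4 - tr y ^ 2) = 4 - t ^ 2 := by
    intro a b h h'
    unfold tr
    rw [← h]
    linear_combination 4 * h' - 4 * b ^ 2 * hd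
  have k0 := key a b ht0 d0
  have k1 := key a' b' ht1 d1
  have hτ : 4 - tr y ^ 2 ≠ 0 := by
    intro h
    rw [h, mul_zero] at k0
    rcases ht with ht | ht
    · exact ht (by linear_combination -h)
    · exact ht (by linear_combination k0)
  have hbb : (b' - b) * (b' + b) = 0 := by
    apply mul_right_cancel₀ hτ
    linear_combination k1 - k0
  simp only [Finset.mem_insert, Finset.mem_singleton]
  rcases mul_eq_zero.1 hbb with e | e
  · left
    have hb : b' = b := by linear_combination e
    subst hb
    have ha : a' = a := by
      apply mul_left_cancel₀ h2
      linear_combination ht1 - ht0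
    subst ha
    apply sl_ext <;> simp only [*]
  · right
    have hb : b' = -b := by linear_combination e
    subst hb
    have ha : a' = t - a := by
      apply mul_left_cancel₀ h2
      linear_combination ht1 + ht0
    apply sl_ext <;> simp only [inv00, inv01, inv10, inv11, e1, e2, e3, e4, e1', e2', e3', e4', ha]
    · linear_combination -ht0
    · ring
    · ring
    · linear_combination -ht0

lemma central_count (A : Finset (SL F)) [DecidablePred (Central : SL F → Prop)] :
    (A.filter Central).card ≤ 2 := by
  rcases (A.filter Central).eq_empty_or_nonempty with h | ⟨z0, h0⟩
  · rw [h]; simp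
  obtain ⟨-, h1, h2, h3⟩ := Finset.mem_filter.1 h0
  have d0 := det_eq z0
  have : ∀ z ∈ A.filter Central, (z.1 0 0 - 1) * (z.1 0 0 + 1) = 0 := by
    intro z hz
    obtain ⟨-, h1, h2, h3⟩ := Finset.mem_filter.1 hz
    have d := det_eq z
    rw [h1, ← h3] at d
    linear_combination d
  have hle : (A.filter Central).card ≤ ({1, -1} : Finset F).card := by
    apply Finset.card_le_card_of_injOn (fun z => z.1 0 0)
    · intro z hz
      have := this z hz
      simp only [Finset.coe_insert, Finset.coe_singleton, Set.mem_insert_iff, Set.mem_singleton_iff]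
      rcases mul_eq_zero.1 this with e | e
      · left; linear_combination e
      · right; linear_combination e
    · intro z hz w hw hzw
      obtain ⟨-, h1, h2, h3⟩ := Finset.mem_filter.1 (Finset.mem_coe.1 hz)
      obtain ⟨-, h1', h2', h3'⟩ := Finset.mem_filter.1 (Finset.mem_coe.1 hw)
      simp only at hzw
      apply sl_ext
      · exact hzw
      · rw [h1, h1']
      · rw [h2, h2']
      · rw [← h3, ← h3', hzw]
  exact hle.trans Finset.card_le_two

/-- centralizer size -/
lemma centralizer_card (h2 : (2 : F) ≠ 0) {g : SL F} (hg : tr g ^ 2 ≠ 4) :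
    (Finset.univ.filter (fun z : SL F => z * g = g * z)).card ≤ 2 * Fintype.card F := by
  rw [← Finset.card_univ (α := F)]
  apply Finset.card_le_mul_card_image_of_maps_to (f := tr)
  · intro z _; simp
  · intro t _
    rw [Finset.filter_filter]
    exact comm_count h2 (not_central hg) t (Or.inl hg)

/-- number of conjugators -/
lemma conj_count (h2 : (2 : F) ≠ 0) {g : SL F} (hg : tr g ^ 2 ≠ 4) {y : SL F} (hy : ¬ Central y) :
    (Finset.univ.filter (fun x : SL F => y * (x * g * x⁻¹) = (x * g * x⁻¹) * y)).card
      ≤ 4 * Fintype.card F := by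
  have hle := comm_count h2 hy (tr g) (Or.inr hg)
  set Z := Finset.univ.filter (fun z : SL F => z * y = y * z ∧ tr z = tr g) with hZ
  have : (Finset.univ.filter (fun x : SL F => y * (x * g * x⁻¹) = (x * g * x⁻¹) * y)).card
      ≤ (2 * Fintype.card F) * Z.card := by
    apply Finset.card_le_mul_card_image_of_maps_to (f := fun x => x * g * x⁻¹)
    · intro x hx
      have hx := (Finset.mem_filter.1 hx).2
      exact Finset.mem_filter.2 ⟨Finset.mem_univ _, hx.symm, tr_conj _ _⟩
    · intro z _
      refine le_trans ?_ (centralizer_card h2 hg)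
      rcases (Finset.filter (fun x : SL F => x * g * x⁻¹ = z) (Finset.univ.filter (fun x : SL F => y * (x * g * x⁻¹) = (x * g * x⁻¹) * y))).eq_empty_or_nonempty with h | ⟨x0, h0⟩
      · rw [h]; simp
      have h0 := (Finset.mem_filter.1 h0).2
      apply Finset.card_le_card_of_injOn (fun x => x0⁻¹ * x)
      · intro x hx
        have hx := (Finset.mem_filter.1 (Finset.mem_coe.1 hx)).2
        refine Finset.mem_coe.2 (Finset.mem_filter.2 ⟨Finset.mem_univ _, ?_⟩)
        rw [← h0, mul_inv_eq_iff_eq_mul] at hx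
        calc x0⁻¹ * x * g = x0⁻¹ * (x * g) := by group
          _ = g * (x0⁻¹ * x) := by rw [hx]; group
      · intro x _ x' _ h
        exact mul_left_cancel h
  nlinarith

/-- orbit-stabilizer -/
lemma orbit_bound (H : Finset (SL F)) (hsym : ∀ h ∈ H, h⁻¹ ∈ H) {g : SL F} {k : ℕ}
    (hg : g ∈ H ^ k) :
    H.card ≤ ((H ^ 2).filter (fun y => y * g = g * y)).card *
      ((H ^ (k + 2)).filter (fun x => tr x = tr g)).card := by
  apply Finset.card_le_mul_card_image_of_maps_to (f := fun x => x * g * x⁻¹)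
  · intro x hx
    refine Finset.mem_filter.2 ⟨?_, tr_conj _ _⟩
    rw [pow_succ, pow_succ']
    exact Finset.mul_mem_mul (Finset.mul_mem_mul hx hg) (hsym x hx)
  · intro z _
    rcases (Finset.filter (fun x : SL F => x * g * x⁻¹ = z) H).eq_empty_or_nonempty with h | ⟨x0, h0⟩
    · rw [h]; simp
    obtain ⟨hx0, h0⟩ := Finset.mem_filter.1 h0
    apply Finset.card_le_card_of_injOn (fun x => x0⁻¹ * x)
    · intro x hx
      obtain ⟨hxH, hx⟩ := Finset.mem_filter.1 (Finset.mem_coe.1 hx)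
      refine Finset.mem_coe.2 (Finset.mem_filter.2 ⟨?_, ?_⟩)
      · rw [pow_two]; exact Finset.mul_mem_mul (hsym _ hx0) hxH
      · rw [← h0, mul_inv_eq_iff_eq_mul] at hx
        calc x0⁻¹ * x * g = x0⁻¹ * (x * g) := by group
          _ = g * (x0⁻¹ * x) := by rw [hx]; group
    · intro x _ x' _ h
      exact mul_left_cancel h

lemma inv_eq_self {H : Finset (SL F)} (hsym : ∀ h ∈ H, h⁻¹ ∈ H) : H⁻¹ = H := by
  ext z; rw [Finset.mem_inv']
  exact ⟨fun h => by simpa using hsym _ h, fun h => hsym _ h⟩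

lemma inv_mem_pow {H : Finset (SL F)} (hsym : ∀ h ∈ H, h⁻¹ ∈ H) (k : ℕ) :
    ∀ h ∈ H ^ k, h⁻¹ ∈ H ^ k := by
  intro u hu
  have : u⁻¹ ∈ (H ^ k)⁻¹ := Finset.inv_mem_inv hu
  rwa [← inv_pow, inv_eq_self hsym] at this

/-- tori meet `H ^ 2` in many elements -/
lemma torus_arith (n X r M N44 N14 : ℕ) (α : ℝ) (hα1 : 1 ≤ α) (hn : 1 ≤ n) (hM1 : 1 ≤ M)
    (h1 : M ^ 2 * (M - 1) ≤ N44) (h44 : (N44 : ℝ) ≤ α ^ 42 * n)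
    (hT : X ^ 3 ≤ 7 * M * X ^ 2 + 2 * N14 ^ 2) (h14 : (N14 : ℝ) ≤ α ^ 12 * n)
    (hO : n ≤ r * X) : (n : ℝ) ≤ 2 ^ 13 * α ^ 42 * (r : ℝ) ^ 3 := by
  have hn1 : (1 : ℝ) ≤ n := by exact_mod_cast hn
  have hM3 : (M : ℝ) ^ 3 ≤ 2 * (α ^ 42 * n) := by
    have hge : (1 : ℝ) ≤ α ^ 42 * n := one_le_mul_of_one_le_of_one_le (one_le_pow₀ hα1) hn1
    rcases Nat.lt_or_ge M 2 with h | h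
    · have : M = 1 := by omega
      rw [this]; push_cast; nlinarith
    · have h2 : M ^ 3 ≤ 2 * (M ^ 2 * (M - 1)) := by
        obtain ⟨k, hk⟩ := Nat.exists_eq_add_of_le h
        rw [hk, show 2 + k - 1 = 1 + k by omega]
        nlinarith [sq_nonneg k]
      have h3 : M ^ 3 ≤ 2 * N44 := by omega
      have h3' : (M : ℝ) ^ 3 ≤ 2 * N44 := by exact_mod_cast h3
      linarith
  have hXb : (X : ℝ) ^ 3 ≤ 2 ^ 13 * α ^ 42 * (n : ℝ) ^ 2 := by
    have hα0 : 0 < α := by linarith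
    have hα42 : (1 : ℝ) ≤ α ^ 42 := one_le_pow₀ hα1
    rcases Nat.le_total (7 * M * X ^ 2) (2 * N14 ^ 2) with hc | hc
    · have h1 : X ^ 3 ≤ 4 * N14 ^ 2 := by omega
      have h1' : (X : ℝ) ^ 3 ≤ 4 * (N14 : ℝ) ^ 2 := by exact_mod_cast h1
      calc (X : ℝ) ^ 3 ≤ 4 * (N14 : ℝ) ^ 2 := h1'
        _ ≤ 4 * (α ^ 12 * n) ^ 2 := by gcongr
        _ = 4 * α ^ 24 * (n : ℝ) ^ 2 := by ring
        _ ≤ 2 ^ 13 * α ^ 42 * (n : ℝ) ^ 2 := by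
          have : α ^ 24 ≤ α ^ 42 := pow_le_pow_right₀ hα1 (by norm_num)
          gcongr
          norm_num
    · have h1 : X ^ 3 ≤ 14 * M * X ^ 2 := by nlinarith
      have h2 : X ≤ 14 * M := by
        rcases Nat.eq_zero_or_pos X with h0 | h0
        · omega
        · have : X ^ 2 * X ≤ X ^ 2 * (14 * M) := by nlinarith
          exact Nat.le_of_mul_le_mul_left this (by positivity)
      have h2' : (X : ℝ) ≤ 14 * M := by exact_mod_cast h2
      calc (X : ℝ) ^ 3 ≤ (14 * M) ^ 3 := by gcongr
        _ = 2744 * (M : ℝ) ^ 3 := by ring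
        _ ≤ 2744 * (2 * (α ^ 42 * n)) := by gcongr
        _ = 5488 * α ^ 42 * (n : ℝ) := by ring
        _ ≤ 2 ^ 13 * α ^ 42 * (n : ℝ) ^ 2 := by
          have : (n : ℝ) ≤ (n : ℝ) ^ 2 := by nlinarith
          gcongr
          norm_num
  have hO' : (n : ℝ) ≤ r * X := by exact_mod_cast hO
  have hn0 : (0 : ℝ) < (n : ℝ) ^ 2 := by positivity
  have h3 : (n : ℝ) ^ 3 ≤ (r : ℝ) ^ 3 * (2 ^ 13 * α ^ 42 * (n : ℝ) ^ 2) := by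
    calc (n : ℝ) ^ 3 ≤ (r * X) ^ 3 := by gcongr
      _ = (r : ℝ) ^ 3 * (X : ℝ) ^ 3 := by ring
      _ ≤ _ := by gcongr
  have h4 : (n : ℝ) ^ 2 * n ≤ (n : ℝ) ^ 2 * (2 ^ 13 * α ^ 42 * (r : ℝ) ^ 3) := by
    linarith
  exact le_of_mul_le_mul_left h4 hn0

/-- consequences of the exponent arithmetic, with the exponents kept abstract -/
lemma pow_arith (H : Finset (SL F)) {a b : ℕ} (hb : b = a + 1 + a + 1 + a) :
    H ^ b = H ^ a * H * H ^ a * H * H ^ a := by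
  rw [hb, pow_add, pow_succ, pow_add, pow_succ]

lemma torus_large_aux (H : Finset (SL F)) (hsym : ∀ h ∈ H, h⁻¹ ∈ H) (hone : (1 : SL F) ∈ H)
    (hgen : Subgroup.closure (H : Set (SL F)) = ⊤) {g : SL F} {a k b d : ℕ}
    (ha : a = k + 2) (hb : b = a + a) (hd : d = b + 1 + b + 1 + b)
    (hg : g ∈ H ^ k) (hgood : Good g) :
    ∃ M X : ℕ, 1 ≤ M ∧ M ^ 2 * (M - 1) ≤ (H ^ d).card ∧
      X ^ 3 ≤ 7 * M * X ^ 2 + 2 * (H ^ b).card ^ 2 ∧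
      H.card ≤ ((H ^ 2).filter (fun y => y * g = g * y)).card * X := by
  have hAA : H ^ a * H ^ a = H ^ b := by rw [← pow_add, hb]
  obtain ⟨v, hv, hmax⟩ := Finset.exists_max_image (Finset.univ.filter (fun v : F × F => v ≠ 0))
    (fun v => ((H ^ b).filter (fun u => ac u v = v)).card) ⟨(1, 0), by simp⟩
  have hv : v ≠ 0 := (Finset.mem_filter.1 hv).2
  have hM1 : 1 ≤ ((H ^ b).filter (fun u => ac u v = v)).card :=
    Finset.card_pos.2 ⟨1, Finset.mem_filter.2 ⟨Finset.one_mem_pow hone, ac_one v⟩⟩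
  obtain ⟨h, hh, hesc⟩ := exists_escape hgen hv
  have hU := unip_bound (H ^ b) hv h hesc (Finset.one_mem_pow hone)
  have hUd : (H ^ b * {h} * H ^ b * {h⁻¹} * H ^ b).card ≤ (H ^ d).card := by
    apply Finset.card_le_card
    rw [pow_arith H hd]
    have s1 : ({h} : Finset (SL F)) ⊆ H := by simpa using hh
    have s2 : ({h⁻¹} : Finset (SL F)) ⊆ H := by simpa using hsym h hh
    exact Finset.mul_subset_mul_right (Finset.mul_subset_mul
      (Finset.mul_subset_mul_right (Finset.mul_subset_mul_left s1)) s2)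
  have hT := trace_bound (H ^ a) (inv_mem_pow hsym a) _ hM1 (tr g) hgood.1 hgood.2 (by
    intro w hw
    rw [hAA]
    exact hmax w (Finset.mem_filter.2 ⟨Finset.mem_univ _, hw⟩))
  rw [hAA] at hT
  have hO := orbit_bound H hsym hg
  rw [← ha] at hO
  exact ⟨_, _, hM1, hU.trans hUd, hT, hO⟩

lemma torus_large (H : Finset (SL F)) (hsym : ∀ h ∈ H, h⁻¹ ∈ H) (hone : (1 : SL F) ∈ H)
    (hgen : Subgroup.closure (H : Set (SL F)) = ⊤) (α : ℝ) (hα1 : 1 ≤ α)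
    (hα : ((H ^ 3).card : ℝ) ≤ α * H.card) {g : SL F} (hg : g ∈ H ^ 5) (hgood : Good g) :
    (H.card : ℝ) ≤ 2 ^ 13 * α ^ 42 *
      (((H ^ 2).filter (fun y => y * g = g * y)).card : ℝ) ^ 3 := by
  have hpow : ∀ m, ∀ e, 3 ≤ m → m - 2 = e → ((H ^ m).card : ℝ) ≤ α ^ e * H.card := by
    rintro m e hm rfl
    exact Finset.small_pow_of_small_tripling hm hα (inv_eq_self hsym)
  have hn : 1 ≤ H.card := Finset.card_pos.2 ⟨1, hone⟩
  obtain ⟨M, X, hM1, h1, hT, hO⟩ := torus_large_aux H hsym hone hgen (a := 7) (k := 5) (b := 14)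
    (d := 44) (by norm_num) (by norm_num) (by norm_num) hg hgood
  exact torus_arith _ X _ M _ _ α hα1 hn hM1 h1 (hpow 44 42 (by norm_num) (by norm_num)) hT
    (hpow 14 12 (by norm_num) (by norm_num)) hO

/-- all conjugate tori are involved -/
lemma all_tori (h2 : (2 : F) ≠ 0) (H : Finset (SL F)) (hsym : ∀ h ∈ H, h⁻¹ ∈ H)
    (hone : (1 : SL F) ∈ H)
    (hgen : Subgroup.closure (H : Set (SL F)) = ⊤) (α : ℝ) (hα1 : 1 ≤ α)
    (hα : ((H ^ 3).card : ℝ) ≤ α * H.card) (hbig : 2 ^ 13 * α ^ 42 * 6 ^ 3 < (H.card : ℝ))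
    {g : SL F} (hg : g ∈ H ^ 5) (hgood : Good g) (x : SL F) :
    ∃ y ∈ H ^ 2, Good y ∧ y * (x * g * x⁻¹) = (x * g * x⁻¹) * y := by
  have step : ∀ g : SL F, g ∈ H ^ 5 → Good g → ∃ y ∈ H ^ 2, Good y ∧ y * g = g * y := by
    intro g hg hgood
    by_contra hcon
    push Not at hcon
    have hT := torus_large H hsym hone hgen α hα1 hα hg hgood
    have hle : ((H ^ 2).filter (fun y => y * g = g * y)).card ≤ 6 := by
      have hsub : (H ^ 2).filter (fun y => y * g = g * y) ⊆
          Finset.univ.filter (fun z : SL F => z * g = g * z ∧ tr z = 0) ∪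
          (Finset.univ.filter (fun z : SL F => z * g = g * z ∧ tr z = 2) ∪
          Finset.univ.filter (fun z : SL F => z * g = g * z ∧ tr z = -2)) := by
        intro y hy
        obtain ⟨hy2, hyc⟩ := Finset.mem_filter.1 hy
        have hng : ¬ Good y := fun h => hcon y hy2 h hyc
        have := not_good hng
        simp only [Finset.mem_union, Finset.mem_filter, Finset.mem_univ, true_and]
        rcases mul_eq_zero.1 this with e | e
        · exact Or.inl ⟨hyc, e⟩
        · have : (tr y - 2) * (tr y + 2) = 0 := by linear_combination e
          rcases mul_eq_zero.1 this with e | e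
          · exact Or.inr (Or.inl ⟨hyc, by linear_combination e⟩)
          · exact Or.inr (Or.inr ⟨hyc, by linear_combination e⟩)
      have hnc := not_central hgood.2
      have c1 := comm_count h2 hnc 0 (Or.inl hgood.2)
      have c2 := comm_count h2 hnc 2 (Or.inl hgood.2)
      have c3 := comm_count h2 hnc (-2) (Or.inl hgood.2)
      refine (Finset.card_le_card hsub).trans ?_
      refine (Finset.card_union_le _ _).trans ?_
      have := Finset.card_union_le (Finset.univ.filter (fun z : SL F => z * g = g * z ∧ tr z = 2))
        (Finset.univ.filter (fun z : SL F => z * g = g * z ∧ tr z = -2))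
      omega
    have hle' : (((H ^ 2).filter (fun y => y * g = g * y)).card : ℝ) ≤ 6 := by exact_mod_cast hle
    have : 2 ^ 13 * α ^ 42 * (((H ^ 2).filter (fun y => y * g = g * y)).card : ℝ) ^ 3 ≤
        2 ^ 13 * α ^ 42 * 6 ^ 3 := by gcongr
    linarith
  have indstep : ∀ h ∈ H, ∀ x : SL F, (∃ y ∈ H ^ 2, Good y ∧ y * (x * g * x⁻¹) = (x * g * x⁻¹) * y) →
      ∃ y ∈ H ^ 2, Good y ∧ y * (h * x * g * (h * x)⁻¹) = (h * x * g * (h * x)⁻¹) * y := by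
    rintro h hh x ⟨y, hy, hyg, hyc⟩
    have hmem : h * y * h⁻¹ ∈ H ^ 5 := by
      apply subset_pow_of_le hone (show 4 ≤ 5 by norm_num)
      rw [show 4 = (2 + 1) + 1 by norm_num, pow_succ, pow_succ']
      exact Finset.mul_mem_mul (Finset.mul_mem_mul hh hy) (hsym h hh)
    obtain ⟨y', hy', hyg', hyc'⟩ := step _ hmem (good_conj hyg)
    refine ⟨y', hy', hyg', ?_⟩
    apply comm_trans (not_central (good_conj (x := h) hyg).2) hyc'
    calc h * x * g * (h * x)⁻¹ * (h * y * h⁻¹) = h * ((x * g * x⁻¹) * y) * h⁻¹ := by group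
      _ = h * (y * (x * g * x⁻¹)) * h⁻¹ := by rw [hyc]
      _ = h * y * h⁻¹ * (h * x * g * (h * x)⁻¹) := by group
  have hx : x ∈ Subgroup.closure (H : Set (SL F)) := by rw [hgen]; trivial
  induction hx using Subgroup.closure_induction_left with
  | one => simpa using step g hg hgood
  | mul_left h hh z hz ih => exact indstep h hh z ih
  | inv_mul_cancel h hh z hz ih => exact indstep h⁻¹ (hsym h hh) z ih

/-- The conclusion of the torus argument. -/
lemma torus_conclusion (h2 : (2 : F) ≠ 0) (h3 : (3 : F) ≠ 0) (H : Finset (SL F))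
    (hsym : ∀ h ∈ H, h⁻¹ ∈ H)
    (hone : (1 : SL F) ∈ H)
    (hgen : Subgroup.closure (H : Set (SL F)) = ⊤) (α : ℝ) (hα1 : 1 ≤ α)
    (hα : ((H ^ 3).card : ℝ) ≤ α * H.card) (hbig : 2 ^ 13 * α ^ 42 * 6 ^ 3 < (H.card : ℝ)) :
    ∃ b : ℕ, (H.card : ℝ) ≤ 2 ^ 13 * α ^ 42 * (b : ℝ) ^ 3 ∧
      Fintype.card (SL F) * b ≤ 2 * Fintype.card (SL F) + 4 * Fintype.card F * (H ^ 2).card := by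
  classical
  obtain ⟨g, hg, hgood⟩ := exists_good h2 h3 H hsym hone hgen
  obtain ⟨x0, -, hmin⟩ := Finset.exists_min_image (Finset.univ : Finset (SL F))
    (fun x => ((H ^ 2).filter (fun y => y * (x * g * x⁻¹) = (x * g * x⁻¹) * y)).card) ⟨1, by simp⟩
  set b := ((H ^ 2).filter (fun y => y * (x0 * g * x0⁻¹) = (x0 * g * x0⁻¹) * y)).card with hb
  refine ⟨b, ?_, ?_⟩
  · obtain ⟨y, hy, hyg, hyc⟩ := all_tori h2 H hsym hone hgen α hα1 hα hbig hg hgood x0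
    have hT := torus_large H hsym hone hgen α hα1 hα
      (subset_pow_of_le hone (show 2 ≤ 5 by norm_num) hy) hyg
    have : (H ^ 2).filter (fun z => z * y = y * z) ⊆
        (H ^ 2).filter (fun y => y * (x0 * g * x0⁻¹) = (x0 * g * x0⁻¹) * y) := by
      intro z hz
      obtain ⟨hz2, hzc⟩ := Finset.mem_filter.1 hz
      exact Finset.mem_filter.2 ⟨hz2, comm_trans (not_central hyg.2) hzc hyc.symm⟩
    have := Finset.card_le_card this
    rw [← hb] at this
    refine hT.trans ?_
    gcongr
  · have h1 : ∀ x : SL F, b ≤ 2 + ((H ^ 2).filter (fun y => ¬ Central y ∧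
        y * (x * g * x⁻¹) = (x * g * x⁻¹) * y)).card := by
      intro x
      refine (hmin x (Finset.mem_univ _)).trans ?_
      have hsub : (H ^ 2).filter (fun y => y * (x * g * x⁻¹) = (x * g * x⁻¹) * y) ⊆
          (H ^ 2).filter Central ∪ (H ^ 2).filter (fun y => ¬ Central y ∧
        y * (x * g * x⁻¹) = (x * g * x⁻¹) * y) := by
        intro y hy
        obtain ⟨hy2, hyc⟩ := Finset.mem_filter.1 hy
        rw [Finset.mem_union]
        by_cases hc : Central y
        · exact Or.inl (Finset.mem_filter.2 ⟨hy2, hc⟩)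
        · exact Or.inr (Finset.mem_filter.2 ⟨hy2, hc, hyc⟩)
      refine (Finset.card_le_card hsub).trans ((Finset.card_union_le _ _).trans ?_)
      have := central_count (H ^ 2)
      omega
    have h2' : Fintype.card (SL F) * b ≤ ∑ x : SL F, (2 + ((H ^ 2).filter (fun y => ¬ Central y ∧
        y * (x * g * x⁻¹) = (x * g * x⁻¹) * y)).card) := by
      rw [← Finset.card_univ, ← smul_eq_mul]
      exact Finset.card_nsmul_le_sum _ _ _ (fun x _ => h1 x)
    rw [Finset.sum_add_distrib, Finset.sum_const, Finset.card_univ, smul_eq_mul] at h2'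
    have h3 : ∑ x : SL F, ((H ^ 2).filter (fun y => ¬ Central y ∧
        y * (x * g * x⁻¹) = (x * g * x⁻¹) * y)).card ≤ 4 * Fintype.card F * (H ^ 2).card := by
      simp only [Finset.card_filter]
      rw [Finset.sum_comm, mul_comm, ← smul_eq_mul]
      apply Finset.sum_le_card_nsmul
      intro y _
      by_cases hc : Central y
      · simp [hc]
      · simp only [hc, not_false_eq_true, true_and]
        rw [← Finset.card_filter]
        exact conj_count h2 hgood.2 hc
    linarith

end Torus
end Growth

namespace Growth

section Entries
variable {F : Type*} [Field F]
lemma up00 (s : F) : (up s).1 0 0 = 1 := rfl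
lemma up01 (s : F) : (up s).1 0 1 = s := rfl
lemma up10 (s : F) : (up s).1 1 0 = 0 := rfl
lemma up11 (s : F) : (up s).1 1 1 = 1 := rfl
lemma lo00 (s : F) : (lo s).1 0 0 = 1 := rfl
lemma lo01 (s : F) : (lo s).1 0 1 = 0 := rfl
lemma lo10 (s : F) : (lo s).1 1 0 = s := rfl
lemma lo11 (s : F) : (lo s).1 1 1 = 1 := rfl

/-- Weyl element -/
def wl : SL F := ⟨!![0, -1; 1, 0], by simp [Matrix.det_fin_two]⟩
/-- diagonal element -/
def dg (a : Fˣ) : SL F := ⟨!![(a : F), 0; 0, ((a⁻¹ : Fˣ) : F)], by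
  rw [Matrix.det_fin_two_of, Units.mul_inv, mul_zero, sub_zero]⟩
lemma wl00 : (wl : SL F).1 0 0 = 0 := rfl
lemma wl01 : (wl : SL F).1 0 1 = -1 := rfl
lemma wl10 : (wl : SL F).1 1 0 = 1 := rfl
lemma wl11 : (wl : SL F).1 1 1 = 0 := rfl
lemma dg00 (a : Fˣ) : (dg a).1 0 0 = a := rfl
lemma dg01 (a : Fˣ) : (dg a).1 0 1 = 0 := rfl
lemma dg10 (a : Fˣ) : (dg a).1 1 0 = 0 := rfl
lemma dg11 (a : Fˣ) : (dg a).1 1 1 = ((a⁻¹ : Fˣ) : F) := rfl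
end Entries

section CardSL
variable {F : Type*} [Field F] [Fintype F] [DecidableEq F]

lemma card_lower : Fintype.card F ^ 2 * (Fintype.card F - 1) ≤ Fintype.card (SL F) := by
  have h : Function.Injective (fun z : (F × F) × Fˣ => up z.1.1 * lo (z.2 : F) * up z.1.2) := by
    rintro ⟨⟨x, y⟩, c⟩ ⟨⟨x', y'⟩, c'⟩ h
    have h10 := congrArg (fun m : SL F => m.1 1 0) h
    have h00 := congrArg (fun m : SL F => m.1 0 0) h
    have h11 := congrArg (fun m : SL F => m.1 1 1) h
    simp only [mul00, mul10, mul11, mul01, up00, up01, up10, up11,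
      lo00, lo01, lo10, lo11, mul_zero, zero_mul, one_mul, mul_one, add_zero, zero_add] at h10 h00 h11
    have hc : c = c' := Units.ext h10
    subst hc
    have e1 : x = x' := by simpa using h00
    have e2 : y = y' := by simpa using h11
    rw [e1, e2]
  have := Fintype.card_le_of_injective _ h
  rwa [Fintype.card_prod, Fintype.card_prod, Fintype.card_units, ← pow_two] at this

lemma card_upper : Fintype.card (SL F) ≤ 2 * Fintype.card F ^ 3 := by
  have h : Function.Injective (fun x : SL F =>
      if x.1 0 0 = 0 then (false, x.1 0 1, x.1 1 1, (0 : F))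
      else (true, x.1 0 0, x.1 0 1, x.1 1 0)) := by
    intro x y h
    have dx := det_eq x
    have dy := det_eq y
    simp only at h
    by_cases hx : x.1 0 0 = 0 <;> by_cases hy : y.1 0 0 = 0
    · simp only [hx, hy, if_true, Prod.mk.injEq, true_and, and_true] at h
      rw [hx, h.1] at dx
      rw [hy] at dy
      have hb : y.1 0 1 ≠ 0 := by
        intro h0; rw [h0] at dy; simp at dy
      refine sl_ext (hx.trans hy.symm) h.1 ?_ h.2
      apply mul_left_cancel₀ hb
      linear_combination dy - dx
    · simp [hx, hy] at h
    · simp [hx, hy] at h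
    · simp only [hx, hy, if_false, Prod.mk.injEq, true_and] at h
      obtain ⟨h1, h2, h3⟩ := h
      refine sl_ext h1 h2 h3 ?_
      rw [h1, h2, h3] at dx
      apply mul_left_cancel₀ hy
      linear_combination dx - dy
  have := Fintype.card_le_of_injective _ h
  rw [Fintype.card_prod, Fintype.card_prod, Fintype.card_prod, Fintype.card_bool] at this
  calc _ ≤ _ := this
    _ = _ := by ring

end CardSL

section Rep
variable {p : ℕ} [Fact p.Prime]

lemma up_mul (s t : ZMod p) : up s * up t = up (s + t) := by
  apply sl_ext <;> simp only [mul00, mul01, mul10, mul11, up00, up01, up10, up11] <;> ring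

lemma lo_eq (s : ZMod p) : lo s = wl * up (-s) * wl⁻¹ := by
  apply sl_ext <;> simp only [mul00, mul01, mul10, mul11, inv00, inv01, inv10, inv11,
    up00, up01, up10, up11, lo00, lo01, lo10, lo11, wl00, wl01, wl10, wl11]
    <;> ring

lemma dg_conj (a : (ZMod p)ˣ) : up 1 * dg a = dg a * up (((a⁻¹ : (ZMod p)ˣ) : ZMod p) ^ 2) := by
  apply sl_ext <;> simp only [mul00, mul01, mul10, mul11, up00, up01, up10, up11, dg00, dg01, dg10, dg11]
  · ring
  · have := Units.mul_inv a
    linear_combination -((a⁻¹ : (ZMod p)ˣ) : ZMod p) * this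
  · ring
  · ring

lemma big_cell (x : SL (ZMod p)) (hc : x.1 1 0 ≠ 0) :
    x = up ((x.1 0 0 - 1) / x.1 1 0) * lo (x.1 1 0) * up ((x.1 1 1 - 1) / x.1 1 0) := by
  have dx := det_eq x
  apply sl_ext <;> simp only [mul00, mul01, mul10, mul11,
    up00, up01, up10, up11, lo00, lo01, lo10, lo11] <;> field_simp
  · ring
  · linear_combination -dx
  · ring
  · ring

lemma normal_up (N : Subgroup (SL (ZMod p))) [N.Normal] (h1 : up 1 ∈ N) (x : SL (ZMod p)) :
    x ∈ N := by
  have hn : ∀ n : ℕ, up ((n : ℕ) : ZMod p) ∈ N := by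
    intro n
    induction n with
    | zero =>
      have : (up ((0 : ℕ) : ZMod p)) = 1 := by
        apply sl_ext <;> simp [up]
      rw [this]; exact N.one_mem
    | succ k ih =>
      have : (up ((k + 1 : ℕ) : ZMod p)) = up (k : ZMod p) * up 1 := by
        rw [up_mul]; push_cast; rfl
      rw [this]; exact N.mul_mem ih h1
  have hu : ∀ s : ZMod p, up s ∈ N := by
    intro s
    have := hn s.val
    rwa [ZMod.natCast_zmod_val] at this
  have hl : ∀ s : ZMod p, lo s ∈ N := by
    intro s
    rw [lo_eq]
    exact Subgroup.Normal.conj_mem inferInstance _ (hu _) _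
  have hb : ∀ x : SL (ZMod p), x.1 1 0 ≠ 0 → x ∈ N := by
    intro x hx
    rw [big_cell x hx]
    exact N.mul_mem (N.mul_mem (hu _) (hl _)) (hu _)
  by_cases hx : x.1 1 0 = 0
  · have hw : wl ∈ N := hb _ (by rw [wl10]; exact one_ne_zero)
    have hxw : x * wl ∈ N := by
      apply hb
      have dx := det_eq x
      rw [mul10, hx, wl00, wl10, mul_zero, mul_one, zero_add]
      intro h0
      rw [hx, h0] at dx
      simp at dx
    have := N.mul_mem hxw (N.inv_mem hw)
    simpa using this
  · exact hb x hx

lemma dim_bound {V : Type*} [AddCommGroup V] [Module ℂ V] [FiniteDimensional ℂ V]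
    (ρ : SL (ZMod p) →* Module.End ℂ V) (hnt : ∃ g v, ρ g v ≠ v) :
    p - 1 ≤ 2 * Module.finrank ℂ V := by
  classical
  have hp : p.Prime := Fact.out
  have hup : ρ (up 1) ≠ 1 := by
    intro h
    obtain ⟨g, v, hg⟩ := hnt
    apply hg
    have : g ∈ ρ.ker := normal_up _ (MonoidHom.mem_ker.2 h) g
    rw [MonoidHom.mem_ker.1 this]; rfl
  obtain ⟨v, hv⟩ : ∃ v, ρ (up 1) v ≠ v := by
    by_contra hcon
    push Not at hcon
    exact hup (LinearMap.ext hcon)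
  set ψ : AddChar (ZMod p) ℂ := ZMod.stdAddChar with hψ
  have hinj : Function.Injective ψ := ZMod.injective_stdAddChar
  let w : ZMod p → V := fun j => ∑ k : ZMod p, ψ (-(j * k)) • ρ (up k) v
  have hw : ∀ j s, ρ (up s) (w j) = ψ (j * s) • w j := by
    intro j s
    simp only [w, map_sum, map_smul, Finset.smul_sum]
    rw [← Equiv.sum_comp (Equiv.addLeft s) (fun k => ψ (j * s) • ψ (-(j * k)) • ρ (up k) v)]
    refine Finset.sum_congr rfl fun k _ => ?_
    rw [smul_smul, ← AddChar.map_add_eq_mul, ← Module.End.mul_apply, ← map_mul, up_mul]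
    simp only [Equiv.coe_addLeft]
    congr 2
    ring
  have hsum : ∑ j, w j = (p : ℂ) • v := by
    simp only [w]
    rw [Finset.sum_comm]
    have : ∀ k : ZMod p, ∑ j, ψ (-(j * k)) • ρ (up k) v =
        if k = 0 then (p : ℂ) • v else 0 := by
      intro k
      rw [← Finset.sum_smul]
      have e : ∑ j, ψ (-(j * k)) = if k = 0 then (p : ℂ) else 0 := by
        have := AddChar.sum_mulShift (-k) (ZMod.isPrimitive_stdAddChar p)
        simp only [neg_eq_zero, ZMod.card] at this
        rw [← hψ] at this
        rw [show (if k = 0 then (p : ℂ) else 0) = ((if k = 0 then p else 0 : ℕ) : ℂ) by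
          split_ifs <;> simp, ← this]
        simp
      rw [e]
      split_ifs with hk
      · have : up (0 : ZMod p) = 1 := by apply sl_ext <;> simp [up]
        rw [hk, this, map_one]; rfl
      · simp
    simp [this]
  obtain ⟨j, hj, hwj⟩ : ∃ j ≠ 0, w j ≠ 0 := by
    by_contra hcon
    push Not at hcon
    rw [Finset.sum_eq_single 0 (fun j _ hj => hcon j hj) (by simp)] at hsum
    have h1 := hw 0 1
    rw [hsum] at h1
    simp only [zero_mul, AddChar.map_zero_eq_one, one_smul, map_smul] at h1
    have hp0 : (p : ℂ) ≠ 0 := by exact_mod_cast hp.ne_zero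
    exact hv (smul_right_injective V hp0 h1)
  let ev : (ZMod p)ˣ → ℂ := fun a => ψ (j * ((a⁻¹ : (ZMod p)ˣ) : ZMod p) ^ 2)
  let S := Finset.univ.image ev
  have hS : p - 1 ≤ 2 * S.card := by
    have h := Finset.card_le_mul_card_image (f := ev) Finset.univ 2 (by
      intro b hb
      obtain ⟨a, -, rfl⟩ := Finset.mem_image.1 hb
      refine (Finset.card_le_card (t := {a, -a}) ?_).trans Finset.card_le_two
      intro c hc
      have hc := hinj (Finset.mem_filter.1 hc).2
      have hc := mul_left_cancel₀ hj hc
      simp only [Finset.mem_insert, Finset.mem_singleton]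
      rcases sq_eq_sq_iff_eq_or_eq_neg.1 hc with h | h
      · left; exact inv_injective (Units.ext h)
      · right
        have : c⁻¹ = (-a)⁻¹ := by
          rw [inv_neg]; exact Units.ext (by rw [h, Units.val_neg])
        exact inv_injective this)
    rwa [Finset.card_univ, ZMod.card_units] at h
  have hev : ∀ μ : (S : Set ℂ), ∃ x, (ρ (up 1)).HasEigenvector μ x := by
    rintro ⟨μ, hμ⟩
    obtain ⟨a, -, rfl⟩ := Finset.mem_image.1 hμ
    refine ⟨ρ (dg a) (w j), ?_, ?_⟩
    · rw [Module.End.mem_eigenspace_iff, ← Module.End.mul_apply, ← map_mul, dg_conj, map_mul,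
        Module.End.mul_apply, hw, map_smul]
    · intro h0
      apply hwj
      have : ρ (dg a)⁻¹ (ρ (dg a) (w j)) = w j := by
        rw [← Module.End.mul_apply, ← map_mul, inv_mul_cancel, map_one]; rfl
      rw [← this, h0, map_zero]
  choose x hx using hev
  have hli := Module.End.eigenvectors_linearIndependent (ρ (up 1)) (S : Set ℂ) x hx
  have := hli.fintype_card_le_finrank
  simp at this
  omega

end Rep
end Growth

namespace Growth

section Gowers

lemma spectral {E : Type*} [NormedAddCommGroup E] [InnerProductSpace ℂ E] [FiniteDimensional ℂ E]
    {ι : Type*} [Fintype ι] (δ : OrthonormalBasis ι ℂ E) (T : E →ₗ[ℂ] E) (hT : T.IsSymmetric)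
    (d : ℝ) (hd : ∀ μ : ℂ, μ ≠ 0 → Module.End.HasEigenvalue T μ →
      d ≤ Module.finrank ℂ (Module.End.eigenspace T μ)) (f : E) :
    d * ‖T f‖ ^ 2 ≤ (∑ x, ‖T (δ x)‖ ^ 2) * ‖f‖ ^ 2 := by
  classical
  set ev := hT.eigenvalues rfl with hev
  set e := hT.eigenvectorBasis rfl with he
  have happ : ∀ i, T (e i) = (ev i : ℂ) • e i := fun i => hT.apply_eigenvectorBasis rfl i
  have hS : ∑ x, ‖T (δ x)‖ ^ 2 = ∑ i, ev i ^ 2 := by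
    have h1 : ∀ x, ‖T (δ x)‖ ^ 2 = ∑ i, ‖inner ℂ (δ x) (T (e i))‖ ^ 2 := by
      intro x
      rw [← e.sum_sq_norm_inner_left (T (δ x))]
      exact Finset.sum_congr rfl fun i _ => by rw [hT (δ x) (e i)]
    have h2 : ∀ i, ∑ x, ‖inner ℂ (δ x) (T (e i))‖ ^ 2 = ev i ^ 2 := by
      intro i
      rw [δ.sum_sq_norm_inner_right, happ, norm_smul, e.norm_eq_one]
      simp
    simp only [h1]
    rw [Finset.sum_comm]
    exact Finset.sum_congr rfl fun i _ => h2 i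
  have hbd : ∀ i, d * ev i ^ 2 ≤ ∑ x, ‖T (δ x)‖ ^ 2 := by
    intro i
    rw [hS]
    by_cases h0 : ev i = 0
    · rw [h0]; simp only [ne_eq, OfNat.ofNat_ne_zero, not_false_eq_true, zero_pow, mul_zero]
      positivity
    have h := hd (ev i) (by exact_mod_cast h0) (hT.hasEigenvalue_eigenvalues rfl i)
    rw [← hT.card_filter_eigenvalues_eq rfl] at h
    calc d * ev i ^ 2 ≤ _ := mul_le_mul_of_nonneg_right h (sq_nonneg _)
      _ = ∑ j ∈ Finset.univ.filter (fun j => ((hT.eigenvalues rfl j : ℝ) : ℂ) = (ev i : ℂ)),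
          ev j ^ 2 := by
        rw [← nsmul_eq_mul, ← Finset.sum_const]
        refine Finset.sum_congr rfl fun j hj => ?_
        have : ((ev j : ℝ) : ℂ) = (ev i : ℂ) := (Finset.mem_filter.1 hj).2
        rw [show ev j = ev i by exact_mod_cast this]
      _ ≤ _ := Finset.sum_le_sum_of_subset_of_nonneg (Finset.subset_univ _)
          fun j _ _ => sq_nonneg _
  have hTf : ‖T f‖ ^ 2 = ∑ i, ev i ^ 2 * ‖inner ℂ (e i) f‖ ^ 2 := by
    rw [← e.sum_sq_norm_inner_right (T f)]
    refine Finset.sum_congr rfl fun i _ => ?_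
    rw [← hT (e i) f, happ, inner_smul_left, norm_mul, mul_pow]
    simp
  rw [hTf, ← e.sum_sq_norm_inner_right f, Finset.mul_sum, Finset.mul_sum]
  refine Finset.sum_le_sum fun i _ => ?_
  rw [← mul_assoc]
  exact mul_le_mul_of_nonneg_right (hbd i) (sq_nonneg _)

variable {Γ : Type*} [Group Γ] [Fintype Γ] [DecidableEq Γ]

/-- the balanced convolution kernel -/
noncomputable def ker (H : Finset Γ) (x y : Γ) : ℝ :=
  (if x * y⁻¹ ∈ H then 1 else 0) - (H.card : ℝ) / Fintype.card Γ

/-- the balanced convolution operator -/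
noncomputable def cv (H : Finset Γ) : EuclideanSpace ℂ Γ →ₗ[ℂ] EuclideanSpace ℂ Γ :=
  Matrix.toEuclideanLin (Matrix.of fun x y => (ker H x y : ℂ))

lemma cv_apply (H : Finset Γ) (f : EuclideanSpace ℂ Γ) (x : Γ) :
    cv H f x = ∑ y, (ker H x y : ℂ) * f y := by
  simp [cv, Matrix.toLpLin_apply, Matrix.mulVec, dotProduct]

lemma cv_symm {H : Finset Γ} (hsym : ∀ h ∈ H, h⁻¹ ∈ H) : (cv H).IsSymmetric := by
  rw [cv, Matrix.isSymmetric_toEuclideanLin_iff]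
  ext x y
  simp only [Matrix.conjTranspose_apply, Matrix.of_apply, ker]
  have : y * x⁻¹ ∈ H ↔ x * y⁻¹ ∈ H := by
    constructor <;> intro h <;> simpa using hsym _ h
  simp only [this]
  simp

/-- right translation -/
noncomputable def rt (g : Γ) : EuclideanSpace ℂ Γ →ₗ[ℂ] EuclideanSpace ℂ Γ where
  toFun f := WithLp.toLp 2 (fun x => f (x * g))
  map_add' f f' := by ext x; simp
  map_smul' c f := by ext x; simp

lemma rt_apply (g : Γ) (f : EuclideanSpace ℂ Γ) (x : Γ) : rt g f x = f (x * g) := rfl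

lemma cv_rt (H : Finset Γ) (g : Γ) (f : EuclideanSpace ℂ Γ) : cv H (rt g f) = rt g (cv H f) := by
  ext x
  rw [rt_apply, cv_apply, cv_apply,
    ← Equiv.sum_comp (Equiv.mulRight g) (fun y => (ker H (x * g) y : ℂ) * f y)]
  refine Finset.sum_congr rfl fun y _ => ?_
  simp [rt_apply, ker, mul_assoc]

lemma sum_ind (H : Finset Γ) (x : Γ) : ∑ y, (if x * y⁻¹ ∈ H then (1 : ℝ) else 0) = H.card := by
  rw [← Equiv.sum_comp ((Equiv.inv Γ).trans (Equiv.mulRight x))]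
  simp

lemma sum_ind' (H : Finset Γ) (y : Γ) : ∑ x, (if x * y⁻¹ ∈ H then (1 : ℝ) else 0) = H.card := by
  rw [← Equiv.sum_comp (Equiv.mulRight y)]
  simp

lemma sum_ker (H : Finset Γ) (x : Γ) : ∑ y, ker H x y = 0 := by
  simp only [ker, Finset.sum_sub_distrib, sum_ind]
  rw [Finset.sum_const, Finset.card_univ, nsmul_eq_mul]
  have : (Fintype.card Γ : ℝ) ≠ 0 := by exact_mod_cast Fintype.card_ne_zero
  field_simp
  simp

lemma sum_ker_sq (H : Finset Γ) (y : Γ) : ∑ x, ker H x y ^ 2 ≤ H.card := by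
  have h0 : (Fintype.card Γ : ℝ) ≠ 0 := by exact_mod_cast Fintype.card_ne_zero
  have : ∀ x, ker H x y ^ 2 = (if x * y⁻¹ ∈ H then (1 : ℝ) else 0) *
      (1 - 2 * ((H.card : ℝ) / Fintype.card Γ)) + ((H.card : ℝ) / Fintype.card Γ) ^ 2 := by
    intro x
    rw [ker]
    split_ifs <;> ring
  simp only [this]
  rw [Finset.sum_add_distrib, ← Finset.sum_mul, sum_ind', Finset.sum_const, Finset.card_univ,
    nsmul_eq_mul]
  have e : (H.card : ℝ) * (1 - 2 * ((H.card : ℝ) / Fintype.card Γ)) +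
      Fintype.card Γ * ((H.card : ℝ) / Fintype.card Γ) ^ 2 =
      H.card - (H.card : ℝ) ^ 2 / Fintype.card Γ := by
    field_simp; ring
  rw [e]
  have : 0 ≤ (H.card : ℝ) ^ 2 / Fintype.card Γ := by positivity
  linarith

lemma gowers (H : Finset Γ) (hsym : ∀ h ∈ H, h⁻¹ ∈ H) (hne : H.Nonempty) (d : ℝ)
    (hd : ∀ μ : ℂ, μ ≠ 0 → Module.End.HasEigenvalue (cv H) μ →
      d ≤ Module.finrank ℂ (Module.End.eigenspace (cv H) μ)) (g : Γ) (hg : g ∉ H ^ 3) :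
    d * (H.card : ℝ) ^ 3 ≤ (Fintype.card Γ : ℝ) ^ 3 := by
  set n : ℝ := (H.card : ℝ) with hn
  set N : ℝ := (Fintype.card Γ : ℝ) with hN
  have hN0 : 0 < N := by rw [hN]; exact_mod_cast Fintype.card_pos
  have hn0 : 0 < n := by rw [hn]; exact_mod_cast hne.card_pos
  rcases le_or_gt d 0 with hd0 | hd0
  · have : d * n ^ 3 ≤ 0 := mul_nonpos_of_nonpos_of_nonneg hd0 (by positivity)
    have : 0 ≤ N ^ 3 := by positivity
    linarith
  let f : EuclideanSpace ℂ Γ := WithLp.toLp 2 (fun x => if x ∈ H then 1 else 0)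
  let f' : EuclideanSpace ℂ Γ := WithLp.toLp 2 (fun x => if x * g⁻¹ ∈ H then 1 else 0)
  have hf : ‖f‖ ^ 2 = n := by
    rw [EuclideanSpace.norm_sq_eq]
    have : ∀ x, ‖f x‖ ^ 2 = if x ∈ H then (1 : ℝ) else 0 := by
      intro x
      simp only [f]
      split_ifs <;> simp
    simp [this, hn]
  have hf' : ‖f'‖ ^ 2 = n := by
    rw [EuclideanSpace.norm_sq_eq]
    have : ∀ x, ‖f' x‖ ^ 2 = if x * g⁻¹ ∈ H then (1 : ℝ) else 0 := by
      intro x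
      simp only [f']
      split_ifs <;> simp
    simp only [this, sum_ind', hn]
  have hS : ∑ x, ‖cv H (EuclideanSpace.basisFun Γ ℂ x)‖ ^ 2 ≤ N * n := by
    calc _ ≤ ∑ x : Γ, n := by
          refine Finset.sum_le_sum fun y _ => ?_
          rw [EuclideanSpace.norm_sq_eq]
          refine le_trans (le_of_eq ?_) (sum_ker_sq H y)
          refine Finset.sum_congr rfl fun x _ => ?_
          rw [cv_apply]
          simp
      _ = N * n := by rw [Finset.sum_const, Finset.card_univ, nsmul_eq_mul]
  have hsp := spectral (EuclideanSpace.basisFun Γ ℂ) (cv H) (cv_symm hsym) d hd f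
  have hval : ∀ x, x * g⁻¹ ∈ H → cv H f x = ((-(n ^ 2 / N) : ℝ) : ℂ) := by
    intro x hx
    rw [cv_apply]
    have : ∀ y, (ker H x y : ℂ) * f y = (((if y ∈ H then -(n / N) else 0 : ℝ)) : ℂ) := by
      intro y
      simp only [f]
      split_ifs with hy
      · have : x * y⁻¹ ∉ H := by
          intro hxy
          apply hg
          have e : g = (x * g⁻¹)⁻¹ * (x * y⁻¹) * y := by group
          rw [e, pow_succ, pow_two]
          exact Finset.mul_mem_mul (Finset.mul_mem_mul (hsym _ hx) hxy) hy
        simp [ker, this, hn, hN]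
      · simp
    simp only [this]
    rw [← Complex.ofReal_sum, ← Finset.sum_filter, Finset.sum_const]
    simp [← hn]
    ring
  have hin : inner ℂ f' (cv H f) = ((-(n ^ 3 / N) : ℝ) : ℂ) := by
    rw [PiLp.inner_apply]
    have : ∀ x, inner ℂ (f' x) (cv H f x) =
        (((if x * g⁻¹ ∈ H then (1 : ℝ) else 0) * (-(n ^ 2 / N)) : ℝ) : ℂ) := by
      intro x
      simp only [f']
      split_ifs with h
      · rw [hval x h]; simp
      · simp
    simp only [this]
    rw [← Complex.ofReal_sum, ← Finset.sum_mul, sum_ind']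
    congr 1
    rw [← hn]; ring
  have hcs := norm_inner_le_norm (𝕜 := ℂ) f' (cv H f)
  rw [hin, Complex.norm_real, Real.norm_eq_abs, abs_neg, abs_of_pos (by positivity)] at hcs
  have hcs2 : (n ^ 3 / N) ^ 2 ≤ n * ‖cv H f‖ ^ 2 := by
    have := pow_le_pow_left₀ (by positivity) hcs 2
    rwa [mul_pow, hf'] at this
  rw [hf] at hsp
  have h1 : d * (n ^ 3 / N) ^ 2 ≤ N * n ^ 3 := by
    calc d * (n ^ 3 / N) ^ 2 ≤ d * (n * ‖cv H f‖ ^ 2) := by gcongr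
      _ = n * (d * ‖cv H f‖ ^ 2) := by ring
      _ ≤ n * ((N * n) * n) :=
        mul_le_mul_of_nonneg_left (hsp.trans (mul_le_mul_of_nonneg_right hS hn0.le)) hn0.le
      _ = N * n ^ 3 := by ring
  rw [div_pow, ← mul_div_assoc, div_le_iff₀ (by positivity)] at h1
  have h2 : n ^ 3 * (d * n ^ 3) ≤ n ^ 3 * N ^ 3 := by linarith
  exact le_of_mul_le_mul_left h2 (by positivity)

end Gowers

section GowersSL
variable {p : ℕ} [Fact p.Prime]

lemma eigen_dim (H : Finset (SL (ZMod p))) (μ : ℂ) (hμ : μ ≠ 0)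
    (hev : Module.End.HasEigenvalue (cv H) μ) :
    p - 1 ≤ 2 * Module.finrank ℂ (Module.End.eigenspace (cv H) μ) := by
  have hinv : ∀ g : SL (ZMod p), ∀ f ∈ Module.End.eigenspace (cv H) μ,
      rt g f ∈ Module.End.eigenspace (cv H) μ := by
    intro g f hf
    rw [Module.End.mem_eigenspace_iff] at hf ⊢
    rw [cv_rt, hf, map_smul]
  let ρ : SL (ZMod p) →* Module.End ℂ (Module.End.eigenspace (cv H) μ) :=
    { toFun := fun g => (rt g).restrict (hinv g)
      map_one' := by
        ext f x
        simp [LinearMap.restrict_apply, rt_apply]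
      map_mul' := by
        intro g g'
        ext f x
        simp [LinearMap.restrict_apply, rt_apply, mul_assoc] }
  apply dim_bound ρ
  by_contra hcon
  push Not at hcon
  obtain ⟨f, hf, hf0⟩ := hev.exists_hasEigenvector
  have hconst : ∀ x, f x = f 1 := by
    intro x
    have := congrArg (fun v : Module.End.eigenspace (cv H) μ => v.1 1) (hcon x ⟨f, hf⟩)
    have h2 : (rt x f) 1 = f 1 := this
    rwa [rt_apply, one_mul] at h2
  apply hf0
  have h0 : cv H f = 0 := by
    ext x
    rw [cv_apply]
    simp only [hconst]
    rw [← Finset.sum_mul, ← Complex.ofReal_sum, sum_ker]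
    simp
  rw [Module.End.mem_eigenspace_iff, h0] at hf
  exact (smul_eq_zero.1 hf.symm).resolve_left hμ

lemma gowersSL (H : Finset (SL (ZMod p))) (hsym : ∀ h ∈ H, h⁻¹ ∈ H) (hne : H.Nonempty)
    (hH : (↑(H ^ 3) : Set (SL (ZMod p))) ≠ Set.univ) :
    ((p : ℝ) - 1) * (H.card : ℝ) ^ 3 ≤ 2 * (Fintype.card (SL (ZMod p)) : ℝ) ^ 3 := by
  obtain ⟨g, hg⟩ := (Set.ne_univ_iff_exists_notMem _).1 hH
  have := gowers H hsym hne (((p : ℝ) - 1) / 2) (by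
    intro μ hμ hev
    have h := eigen_dim H μ hμ hev
    have h' : (p : ℝ) ≤ 2 * Module.finrank ℂ (Module.End.eigenspace (cv H) μ) + 1 := by
      have : p ≤ 2 * Module.finrank ℂ (Module.End.eigenspace (cv H) μ) + 1 := by omega
      exact_mod_cast this
    linarith) g (by exact_mod_cast hg)
  linarith

end GowersSL
end Growth

namespace Growth

lemma pow_lt_of_growth {n N k : ℕ} (h : N ^ k < n ^ (k + 1)) (h2 : 2 * n ≤ N) : 2 ^ k < n := by
  have h1 : n ^ k * 2 ^ k < n ^ k * n := by
    calc n ^ k * 2 ^ k = (2 * n) ^ k := by rw [mul_pow, mul_comm]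
      _ ≤ N ^ k := Nat.pow_le_pow_left h2 k
      _ < n ^ (k + 1) := h
      _ = n ^ k * n := pow_succ n k
  exact lt_of_mul_lt_mul_left h1 (Nat.zero_le _)

lemma ratio_pow_lt {n N k : ℕ} (hn : 0 < n) (h : N ^ k < n ^ (k + 1)) :
    ((N : ℝ) / n) ^ k < n := by
  have hn' : (0 : ℝ) < n := by exact_mod_cast hn
  rw [div_pow, div_lt_iff₀ (by positivity), ← pow_succ']
  exact_mod_cast h

lemma big_arith {n α : ℝ} {k : ℕ} (hk : 63 ≤ k) (hα1 : 1 ≤ α) (hαn : α ^ k < n)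
    (hn : 2 ^ k < n) : 2 ^ 13 * α ^ 42 * 6 ^ 3 < n := by
  have h0 : 2 ^ 13 * α ^ 42 * 6 ^ 3 ≤ 2 ^ 21 * α ^ 42 := by
    have : 0 ≤ α ^ 42 := by positivity
    linarith
  rcases le_total α 2 with h | h
  · calc _ ≤ 2 ^ 21 * α ^ 42 := h0
      _ ≤ 2 ^ 21 * 2 ^ 42 := by gcongr
      _ = (2 : ℝ) ^ 63 := by norm_num
      _ ≤ 2 ^ k := pow_le_pow_right₀ (by norm_num) hk
      _ < n := hn
  · calc _ ≤ 2 ^ 21 * α ^ 42 := h0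
      _ ≤ α ^ 21 * α ^ 42 := by gcongr
      _ = α ^ 63 := by ring
      _ ≤ α ^ k := pow_le_pow_right₀ hα1 hk
      _ < n := hαn

lemma final_arith {n G q b H2 α : ℝ} {m k : ℕ} (hk : k = 3 * m) (hm : 135 ≤ m)
    (hα1 : 1 ≤ α) (hαn : α ^ k < n)
    (hn : 2 ^ k < n) (hnG : n ≤ G) (hG : G ≤ 2 * q ^ 3) (hG' : q ^ 2 * (q - 1) ≤ G)
    (hq : 2 ≤ q) (hb0 : 0 ≤ b) (hb : n ≤ 2 ^ 13 * α ^ 42 * b ^ 3)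
    (hbG : G * b ≤ 2 * G + 4 * q * H2) (hH2 : H2 ≤ α * n)
    (hgow : (q - 1) * n ^ 3 ≤ 2 * G ^ 3) : False := by
  have hbig := big_arith (by omega) hα1 hαn hn
  have hα0 : 0 < α := by linarith
  have hq0 : 0 < q := by linarith
  have hn0 : 0 < n := lt_trans (by positivity) hn
  have hG0 : 0 < G := by linarith
  have hαq : α ^ 135 < 2 * q := by
    have h1 : (α ^ m) ^ 3 < (2 * q) ^ 3 := by
      rw [← pow_mul, mul_comm m 3, ← hk]
      have : 0 < q ^ 3 := by positivity
      calc α ^ k < n := hαn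
        _ ≤ G := hnG
        _ ≤ 2 * q ^ 3 := hG
        _ ≤ (2 * q) ^ 3 := by rw [mul_pow]; linarith
    have h2 := lt_of_pow_lt_pow_left₀ 3 (by positivity) h1
    exact (pow_le_pow_right₀ hα1 hm).trans_lt h2
  have hqbig : (2 : ℝ) ^ 100 < q := by
    by_contra hcon
    push Not at hcon
    have h1 : (2 : ℝ) ^ 301 ≤ 2 ^ k := pow_le_pow_right₀ (by norm_num) (by omega)
    have h2 : q ^ 3 ≤ (2 ^ 100) ^ 3 := by gcongr
    have h3 : (2 : ℝ) * (2 ^ 100) ^ 3 = 2 ^ 301 := by rw [← pow_mul, ← pow_succ']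
    have h4 : (2 : ℝ) ^ 301 < 2 ^ 301 := by
      calc (2 : ℝ) ^ 301 ≤ 2 ^ k := h1
        _ < n := hn
        _ ≤ G := hnG
        _ ≤ 2 * q ^ 3 := hG
        _ ≤ 2 * (2 ^ 100) ^ 3 := mul_le_mul_of_nonneg_left h2 (by norm_num)
        _ = 2 ^ 301 := h3
    exact lt_irrefl _ h4
  have hb6 : 6 < b := by
    have h1 : 2 ^ 13 * α ^ 42 * 6 ^ 3 < 2 ^ 13 * α ^ 42 * b ^ 3 := hbig.trans_le hb
    have h2 : (6 : ℝ) ^ 3 < b ^ 3 := lt_of_mul_lt_mul_left h1 (by positivity)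
    exact lt_of_pow_lt_pow_left₀ 3 hb0 h2
  have hGq : q ^ 3 ≤ 2 * G := by
    have : q ^ 2 * 2 ≤ q ^ 2 * q := by gcongr
    nlinarith
  have h1 : q ^ 2 * b ≤ 16 * α * n := by
    have e1 : G * b ≤ 8 * q * (α * n) := by
      have e2 : 4 * q * H2 ≤ 4 * q * (α * n) := by gcongr
      have e3 : 4 * G ≤ G * b := by nlinarith
      linarith
    have e4 : q ^ 3 * b ≤ 2 * G * b := by gcongr
    have e5 : q * (q ^ 2 * b) ≤ q * (16 * α * n) := by
      calc q * (q ^ 2 * b) = q ^ 3 * b := by ring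
        _ ≤ 2 * G * b := e4
        _ = 2 * (G * b) := by ring
        _ ≤ 2 * (8 * q * (α * n)) := by gcongr
        _ = _ := by ring
    exact le_of_mul_le_mul_left e5 hq0
  have h2 : q ^ 6 ≤ 2 ^ 25 * α ^ 45 * n ^ 2 := by
    have e1 : n * q ^ 6 ≤ n * (2 ^ 25 * α ^ 45 * n ^ 2) := by
      calc n * q ^ 6 ≤ (2 ^ 13 * α ^ 42 * b ^ 3) * q ^ 6 := by gcongr
        _ = 2 ^ 13 * α ^ 42 * (q ^ 2 * b) ^ 3 := by ring
        _ ≤ 2 ^ 13 * α ^ 42 * (16 * α * n) ^ 3 := by gcongr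
        _ = _ := by ring
    exact le_of_mul_le_mul_left e1 hn0
  have h3 : n ^ 3 ≤ 32 * q ^ 8 := by
    have e1 : q * n ^ 3 ≤ q * (32 * q ^ 8) := by
      have : 0 < n ^ 3 := by positivity
      calc q * n ^ 3 ≤ 2 * ((q - 1) * n ^ 3) := by nlinarith
        _ ≤ 2 * (2 * G ^ 3) := by gcongr
        _ ≤ 2 * (2 * (2 * q ^ 3) ^ 3) := by gcongr
        _ = _ := by ring
    exact le_of_mul_le_mul_left e1 hq0
  have h4 : q ^ 17 * q ≤ q ^ 17 * 2 ^ 86 := by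
    calc q ^ 17 * q = (q ^ 6) ^ 3 := by ring
      _ ≤ (2 ^ 25 * α ^ 45 * n ^ 2) ^ 3 := by gcongr
      _ = 2 ^ 75 * α ^ 135 * (n ^ 3) ^ 2 := by ring
      _ ≤ 2 ^ 75 * (2 * q) * (32 * q ^ 8) ^ 2 := by gcongr
      _ = _ := by ring
  have h5 : q ≤ 2 ^ 86 := le_of_mul_le_mul_left h4 (by positivity)
  have h6 : (2 : ℝ) ^ 86 ≤ 2 ^ 100 := by norm_num
  linarith

lemma main_growth {p : ℕ} [Fact p.Prime] (e k m : ℕ) (he : e = k + 1) (hk : k = 3 * m) (hm : 135 ≤ m)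
    (H : Finset (SL (ZMod p))) (hsym : ∀ h ∈ H, h⁻¹ ∈ H) (hone : (1 : SL (ZMod p)) ∈ H)
    (hgen : Subgroup.closure (H : Set (SL (ZMod p))) = ⊤)
    (hne : (↑(H ^ 3) : Set (SL (ZMod p))) ≠ Set.univ) :
    H.card ^ e ≤ (H ^ 3).card ^ k := by
  subst he
  by_contra hcon
  push Not at hcon
  have hp : p.Prime := Fact.out
  have hn1 : 0 < H.card := Finset.card_pos.2 ⟨1, hone⟩
  have h2n := two_mul_card_le H hsym hone hgen hne
  have hbig := pow_lt_of_growth hcon h2n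
  have hbigR : (2 : ℝ) ^ k < H.card := by exact_mod_cast hbig
  have hαn := ratio_pow_lt hn1 hcon
  have hn0 : (0 : ℝ) < H.card := by exact_mod_cast hn1
  have hα1 : (1 : ℝ) ≤ ((H ^ 3).card : ℝ) / H.card := by
    rw [le_div_iff₀ hn0, one_mul]
    have : H.card ≤ (H ^ 3).card := by omega
    exact_mod_cast this
  have hα : ((H ^ 3).card : ℝ) ≤ ((H ^ 3).card : ℝ) / H.card * H.card := by
    rw [div_mul_cancel₀ _ hn0.ne']
  have hnG : H.card ≤ Fintype.card (SL (ZMod p)) := Finset.card_le_univ H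
  have hGu := card_upper (F := ZMod p)
  have hGl := card_lower (F := ZMod p)
  rw [ZMod.card] at hGu hGl
  have hp4 : 4 ≤ p := by
    by_contra hlt
    have hp3 : p ≤ 3 := by omega
    have e1 : p ^ 3 ≤ 3 ^ 3 := Nat.pow_le_pow_left hp3 3
    have e2 : 2 ^ 6 ≤ 2 ^ k := Nat.pow_le_pow_right (by norm_num) (by omega)
    have e3 : 2 ^ k < 54 := by
      calc 2 ^ k < H.card := hbig
        _ ≤ _ := hnG
        _ ≤ 2 * p ^ 3 := hGu
        _ ≤ 2 * 3 ^ 3 := Nat.mul_le_mul_left 2 e1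
        _ = 54 := by norm_num
    have e4 : 2 ^ 6 < 54 := lt_of_le_of_lt e2 e3
    norm_num at e4
  have hcast : ∀ j : ℕ, 0 < j → j < p → ((j : ℕ) : ZMod p) ≠ 0 := by
    intro j hj hjp h0
    rw [ZMod.natCast_eq_zero_iff] at h0
    exact absurd (Nat.le_of_dvd hj h0) (by omega)
  have h2 : (2 : ZMod p) ≠ 0 := by exact_mod_cast hcast 2 (by norm_num) (by omega)
  have h3 : (3 : ZMod p) ≠ 0 := by exact_mod_cast hcast 3 (by norm_num) (by omega)
  obtain ⟨b, hb, hbG⟩ := torus_conclusion h2 h3 H hsym hone hgen _ hα1 hα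
    (big_arith (by omega) hα1 hαn hbigR)
  rw [ZMod.card] at hbG
  have hH23 : (H ^ 2).card ≤ (H ^ 3).card :=
    Finset.card_le_card (subset_pow_of_le hone (by norm_num))
  have hgow := gowersSL H hsym ⟨1, hone⟩ hne
  have hGlR : (p : ℝ) ^ 2 * ((p : ℝ) - 1) ≤ Fintype.card (SL (ZMod p)) := by
    have : ((p ^ 2 * (p - 1) : ℕ) : ℝ) ≤ Fintype.card (SL (ZMod p)) := by exact_mod_cast hGl
    rwa [Nat.cast_mul, Nat.cast_sub (by omega), Nat.cast_pow, Nat.cast_one] at this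
  have hH2R : ((H ^ 2).card : ℝ) ≤ ((H ^ 3).card : ℝ) / H.card * H.card := by
    have : ((H ^ 2).card : ℝ) ≤ (H ^ 3).card := by exact_mod_cast hH23
    exact this.trans hα
  exact final_arith (q := (p : ℝ)) (b := (b : ℝ)) hk hm hα1 hαn hbigR (by exact_mod_cast hnG)
    (by exact_mod_cast hGu) hGlR (by exact_mod_cast (show 2 ≤ p by omega)) (Nat.cast_nonneg b) hb
    (by exact_mod_cast hbG) hH2R hgow

end Growth

/-- **Explicit growth theorem for `SL₂(𝔽_p)` (Helfgott/Kowalski).**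
If `H` is a symmetric generating subset of `SL₂(𝔽_p)` containing `1`, then either
`H·H·H = SL₂(𝔽_p)` or `|H·H·H|^3024 ≥ |H|^3025`. -/
theorem stmt_0 (p : ℕ) (hp : p.Prime)
    (H : Finset (Matrix.SpecialLinearGroup (Fin 2) (ZMod p)))
    (hsym : ∀ h ∈ H, h⁻¹ ∈ H)
    (hone : (1 : Matrix.SpecialLinearGroup (Fin 2) (ZMod p)) ∈ H)
    (hgen : Subgroup.closure (H : Set (Matrix.SpecialLinearGroup (Fin 2) (ZMod p))) = ⊤) :
    (↑(H ^ 3) : Set (Matrix.SpecialLinearGroup (Fin 2) (ZMod p))) = Set.univ ∨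
      H.card ^ 3025 ≤ (H ^ 3 : Finset (Matrix.SpecialLinearGroup (Fin 2) (ZMod p))).card ^ 3024 := by
  have : Fact p.Prime := ⟨hp⟩
  refine or_iff_not_imp_left.2 fun hne => ?_
  exact Growth.main_growth 3025 3024 1008 (by norm_num) (by norm_num) (by norm_num) H hsym hone hgen hne
end

section
/- Let p be a prime number and let S be a symmetric generating set of SL₂(𝔽_p). Then there exists a natural number n with (n : ℝ) ≤ 3·(log |SL₂(𝔽_p)|)^3323 such that (S ∪ {1})^(n) = SL₂(𝔽_p); in other words the diameter of the Cayley graph of SL₂(𝔽_p) with respect to S is at most 3·(log |SL₂(𝔽_p)|)^3323. -/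
open Pointwise

namespace Babai

section grp
set_option linter.unusedSectionVars false
variable {G : Type*} [Group G] [Fintype G] [DecidableEq G]

lemma pow_mono_of_one {A : Finset G} (h1 : (1 : G) ∈ A) {m n : ℕ} (h : m ≤ n) : A ^ m ⊆ A ^ n :=
  Finset.pow_subset_pow_right h1 h

lemma inv_mem_pow {A : Finset G} (hs : ∀ s ∈ A, s⁻¹ ∈ A) (n : ℕ) : ∀ x ∈ A ^ n, x⁻¹ ∈ A ^ n := by
  have hA : A⁻¹ = A := by
    ext x
    rw [Finset.mem_inv']
    exact ⟨fun h => by simpa using hs _ h, fun h => hs _ h⟩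
  intro x hx
  have : (A ^ n)⁻¹ = A ^ n := by rw [← inv_pow, hA]
  rw [← this, Finset.mem_inv']
  simpa using hx

/-- closure induction by left multiplication -/
lemma gen_induction {A : Finset G} (hs : ∀ s ∈ A, s⁻¹ ∈ A)
    (hg : Subgroup.closure (A : Set G) = ⊤) {P : G → Prop} (h0 : P 1)
    (hstep : ∀ a ∈ A, ∀ x, P x → P (a * x)) (x : G) : P x := by
  have hx : x ∈ Subgroup.closure (A : Set G) := by rw [hg]; trivial
  induction hx using Subgroup.closure_induction_left with
  | one => exact h0
  | mul_left a ha y _ ih => exact hstep a ha y ih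
  | inv_mul_cancel a ha y _ ih => exact hstep _ (hs a ha) y ih

lemma pow_stable {A : Finset G} (h1 : (1 : G) ∈ A) (hs : ∀ s ∈ A, s⁻¹ ∈ A)
    (hg : Subgroup.closure (A : Set G) = ⊤) {n : ℕ} (h : A ^ (n + 1) ⊆ A ^ n) :
    A ^ n = Finset.univ := by
  ext x
  simp only [Finset.mem_univ, iff_true]
  refine gen_induction hs hg (P := fun x => x ∈ A ^ n) ?_ ?_ x
  · exact Finset.one_mem_pow h1
  · intro a ha x hx
    apply h
    rw [pow_succ']
    exact Finset.mul_mem_mul ha hx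

lemma grow3 {A : Finset G} (h1 : (1 : G) ∈ A) (hs : ∀ s ∈ A, s⁻¹ ∈ A)
    (hg : Subgroup.closure (A : Set G) = ⊤) (j : ℕ) :
    A ^ (3 * j + 1) = Finset.univ ∨ (j + 1) * A.card ≤ (A ^ (3 * j + 1)).card := by
  induction j with
  | zero => right; simp
  | succ j ih =>
    have key : A ^ (3 * j + 2) = Finset.univ ∨ ∃ x ∈ A ^ (3 * j + 3), x ∉ A ^ (3 * j + 2) := by
      by_cases h : A ^ (3 * j + 2 + 1) ⊆ A ^ (3 * j + 2)
      · left; exact pow_stable h1 hs hg h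
      · right; exact Finset.not_subset.mp h
    have up : ∀ m, m ≤ 3 * (j + 1) + 1 → A ^ m = Finset.univ → A ^ (3 * (j + 1) + 1) = Finset.univ := by
      intro m hm he
      apply Finset.univ_subset_iff.mp
      rw [← he]
      exact pow_mono_of_one h1 hm
    rcases key with h | ⟨x, hx, hx'⟩
    · left; exact up _ (by omega) h
    rcases ih with h | h
    · left; exact up _ (by omega) h
    right
    have hd : Disjoint (A ^ (3 * j + 1)) ({x} * A) := by
      rw [Finset.disjoint_left]
      intro y hy hy'
      obtain ⟨z, hz, a, ha, rfl⟩ := Finset.mem_mul.mp hy'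
      rw [Finset.mem_singleton] at hz
      subst hz
      apply hx'
      have : z = (z * a) * a⁻¹ := by group
      rw [this, pow_succ _ (3 * j + 1)]
      exact Finset.mul_mem_mul hy (hs a ha)
    have hsub : A ^ (3 * j + 1) ∪ {x} * A ⊆ A ^ (3 * (j + 1) + 1) := by
      apply Finset.union_subset
      · exact pow_mono_of_one h1 (by omega)
      · rw [show 3 * (j + 1) + 1 = (3 * j + 3) + 1 by ring, pow_succ _ (3 * j + 3)]
        exact Finset.mul_subset_mul_right (by simpa using hx)
    have hc := Finset.card_le_card hsub
    rw [Finset.card_union_of_disjoint hd, Finset.card_singleton_mul] at hc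
    linarith

lemma closure_pow {A : Finset G} (h1 : (1 : G) ∈ A)
    (hg : Subgroup.closure (A : Set G) = ⊤) {n : ℕ} (hn : 1 ≤ n) :
    Subgroup.closure ((A ^ n : Finset G) : Set G) = ⊤ := by
  apply top_unique
  rw [← hg]
  apply Subgroup.closure_mono
  exact_mod_cast (by simpa using pow_mono_of_one h1 hn : A ⊆ A ^ n)

end grp

/-- The conclusion, assuming the growth dichotomy. -/
lemma analysis {G : Type*} [Group G] [Fintype G] [DecidableEq G] (hG6 : 4 ≤ Fintype.card G)
    (hgrow : ∀ A : Finset G, (1 : G) ∈ A → (∀ s ∈ A, s⁻¹ ∈ A) →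
      Subgroup.closure (A : Set G) = ⊤ → 2 ^ 100 ≤ A.card →
      A.card ^ 3 ≤ 27648000 * (A ^ 20).card ^ 2 ∨
      (Fintype.card G) ^ 2 * A.card ^ 3 ≤ 27648000 * (A ^ 20).card ^ 5)
    {A : Finset G} (h1 : (1 : G) ∈ A) (hs : ∀ s ∈ A, s⁻¹ ∈ A)
    (hg : Subgroup.closure (A : Set G) = ⊤) :
    ∃ n : ℕ, (n : ℝ) ≤ 3 * Real.log (Fintype.card G) ^ 3323 ∧ A ^ n = Finset.univ := by
  set L := Real.log (Fintype.card G) with hL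
  have hA0 : 1 ≤ A.card := Finset.card_pos.mpr ⟨1, h1⟩
  have hlog2 := Real.log_two_gt_d9
  have hlog2' := Real.log_two_lt_d9
  by_cases hsmall : Fintype.card G ≤ 2 ^ 100
  · refine ⟨3 * Fintype.card G + 1, ?_, ?_⟩
    · have hL1 : (1.25 : ℝ) ≤ L := by
        have : Real.log 4 ≤ L := by
          apply Real.log_le_log (by norm_num)
          exact_mod_cast (by omega : 4 ≤ Fintype.card G)
        have h4 : Real.log 4 = 2 * Real.log 2 := by
          rw [show (4 : ℝ) = 2 ^ 2 by norm_num, Real.log_pow]; norm_num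
        linarith
      have h2 : (1.25 : ℝ) ^ 3323 ≤ L ^ 3323 := by gcongr
      have h3 : (2 : ℝ) ^ 101 ≤ (1.25 : ℝ) ^ 3323 := by
        calc (2 : ℝ) ^ 101 ≤ ((1.25 : ℝ) ^ 4) ^ 101 := by gcongr; norm_num
          _ = (1.25 : ℝ) ^ 404 := by rw [← pow_mul]
          _ ≤ _ := by gcongr <;> norm_num
      have h4 : ((Fintype.card G : ℕ) : ℝ) ≤ 2 ^ 100 := by exact_mod_cast hsmall
      have h5 : (2 : ℝ) ^ 101 = 2 * 2 ^ 100 := by ring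
      have h6 : (1 : ℝ) ≤ 2 ^ 100 := one_le_pow₀ (by norm_num)
      push_cast
      linarith
    · rcases grow3 h1 hs hg (Fintype.card G) with h | h
      · exact h
      · have := Finset.card_le_univ (A ^ (3 * Fintype.card G + 1))
        exfalso
        nlinarith
  push Not at hsmall
  set M := 3 * 2 ^ 100 + 1 with hM
  have hM1 : 2 ^ 100 ≤ (A ^ M).card := by
    rcases grow3 h1 hs hg (2 ^ 100) with h | h
    · rw [← hM] at h
      rw [h, Finset.card_univ]; exact hsmall.le
    · rw [← hM] at h
      exact (Nat.le_succ _).trans ((Nat.le_mul_of_pos_right _ hA0).trans h)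
  have hMpos : 1 ≤ M := by omega
  clear_value M
  let s : ℕ → ℕ := fun k => (A ^ (M * 20 ^ k)).card
  let l : ℕ → ℝ := fun k => Real.log (s k)
  have hs1 : ∀ k, 2 ^ 100 ≤ s k := by
    intro k
    refine hM1.trans (Finset.card_le_card (pow_mono_of_one h1 ?_))
    exact Nat.le_mul_of_pos_right _ (by positivity)
  have hspos : ∀ k, (0 : ℝ) < s k := fun k => by
    have := hs1 k
    have h2 : 0 < 2 ^ 100 := by positivity
    exact_mod_cast (by omega : 0 < s k)
  have hl69 : ∀ k, 69 ≤ l k := by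
    intro k
    have : Real.log ((2 : ℝ) ^ 100) ≤ l k := by
      apply Real.log_le_log (by positivity)
      exact_mod_cast hs1 k
    rw [Real.log_pow] at this
    push_cast at this
    linarith
  have hlL : ∀ k, l k ≤ L := by
    intro k
    apply Real.log_le_log (hspos k)
    exact_mod_cast Finset.card_le_univ _
  have hmono : ∀ k, l k ≤ l (k + 1) := by
    intro k
    apply Real.log_le_log (hspos k)
    have : s k ≤ s (k + 1) := by
      apply Finset.card_le_card (pow_mono_of_one h1 ?_)
      apply Nat.mul_le_mul_left
      exact Nat.pow_le_pow_right (by norm_num) (by omega)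
    exact_mod_cast this
  have hGpos : (0 : ℝ) < Fintype.card G := by exact_mod_cast (by omega : 0 < Fintype.card G)
  have hc : Real.log 27648000 ≤ 18 := by
    have : Real.log 27648000 ≤ Real.log (2 ^ 25) := Real.log_le_log (by norm_num) (by norm_num)
    rw [Real.log_pow] at this
    push_cast at this
    linarith
  have hstep : ∀ k, 3 * l k ≤ 18 + 2 * l (k + 1) ∨ 2 * L + 3 * l k ≤ 18 + 5 * l (k + 1) := by
    intro k
    have hn : 1 ≤ M * 20 ^ k := Nat.mul_pos hMpos (by positivity)
    have := hgrow (A ^ (M * 20 ^ k)) (Finset.one_mem_pow h1) (inv_mem_pow hs _)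
      (closure_pow h1 hg hn) (hs1 k)
    rw [← pow_mul, mul_assoc, ← pow_succ] at this
    change s k ^ 3 ≤ 27648000 * s (k + 1) ^ 2 ∨ _ ^ 2 * s k ^ 3 ≤ 27648000 * s (k + 1) ^ 5 at this
    have p1 := hspos k
    have p2 := hspos (k + 1)
    rcases this with h | h
    · left
      have h' : ((s k : ℝ)) ^ 3 ≤ 27648000 * (s (k + 1) : ℝ) ^ 2 := by exact_mod_cast h
      have := Real.log_le_log (by positivity) h'
      rw [Real.log_mul (by norm_num) (by positivity), Real.log_pow, Real.log_pow] at this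
      push_cast at this
      linarith
    · right
      have h' : (Fintype.card G : ℝ) ^ 2 * ((s k : ℝ)) ^ 3 ≤ 27648000 * (s (k + 1) : ℝ) ^ 5 := by
        exact_mod_cast h
      have := Real.log_le_log (by positivity) h'
      rw [Real.log_mul (by norm_num) (by positivity), Real.log_mul (by positivity) (by positivity),
        Real.log_pow, Real.log_pow, Real.log_pow] at this
      push_cast at this
      linarith
  have hph1 : ∀ k, L / 2 ≤ l k ∨ (1.25 : ℝ) ^ k ≤ l k := by
    intro k
    induction k with
    | zero => right; have := hl69 0; norm_num; linarith
    | succ k ih =>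
      have h0 := hmono k
      have h2 := hl69 k
      rcases le_or_gt (L / 2) (l k) with h | h
      · left; linarith
      have ih' : (1.25 : ℝ) ^ k ≤ l k := by
        rcases ih with h' | h'
        · linarith
        · exact h'
      right
      rw [pow_succ]
      rcases hstep k with h' | h' <;> linarith
  obtain ⟨K, hK1, hK2⟩ : ∃ K : ℕ, L ≤ 1.25 ^ K ∧ (1.25 : ℝ) ^ K ≤ 1.25 * L := by
    have hL1 : 1 ≤ L := by linarith [hlL 0, hl69 0]
    obtain ⟨n, hn1, hn2⟩ := exists_nat_pow_near hL1 (by norm_num : (1 : ℝ) < 1.25)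
    refine ⟨n + 1, hn2.le, ?_⟩
    rw [pow_succ]; linarith
  have hKL : L / 2 ≤ l K := by
    rcases hph1 K with h | h
    · exact h
    · have := hlL K; linarith [hl69 K]
  have hKall : ∀ j, L / 2 ≤ l (K + j) := by
    intro j
    induction j with
    | zero => exact hKL
    | succ j ih => exact ih.trans (hmono _)
  have hph2 : ∀ j, L - l (K + j) ≤ 18 ∨ L - l (K + j) ≤ (0.8 : ℝ) ^ j * L := by
    intro j
    induction j with
    | zero => right; have := hl69 K; simp; linarith
    | succ j ih =>
      have h0 := hmono (K + j)
      have h2 := hl69 (K + j)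
      have h3 := hKall j
      rw [← add_assoc]
      rcases le_or_gt (L - l (K + j)) 18 with h | h
      · left; linarith
      have ih' := ih.resolve_left (not_le.mpr h)
      right
      rw [pow_succ]
      rcases hstep (K + j) with h' | h' <;> linarith
  have hfin : L - l (K + K) ≤ 18 := by
    rcases hph2 K with h | h
    · exact h
    · have h5 : (0.8 : ℝ) ^ K * L ≤ 1 := by
        calc (0.8 : ℝ) ^ K * L ≤ 0.8 ^ K * 1.25 ^ K := by gcongr
          _ = 1 := by rw [← mul_pow]; norm_num
      linarith
  have hcard : Fintype.card G ≤ 2 ^ 30 * s (K + K) := by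
    have : L ≤ Real.log (2 ^ 30 * s (K + K)) := by
      rw [Real.log_mul (by positivity) (hspos _).ne', Real.log_pow]
      push_cast
      change L ≤ 30 * Real.log 2 + l (K + K)
      linarith
    rw [hL, Real.log_le_log_iff hGpos (mul_pos (by positivity) (hspos _))] at this
    exact_mod_cast this
  refine ⟨M * 20 ^ (K + K) * (3 * 2 ^ 30 + 1), ?_, ?_⟩
  · have h1M : (M : ℝ) ≤ 2 ^ 102 := by
      rw [hM]
      push_cast
      have h6 : (1 : ℝ) ≤ 2 ^ 100 := one_le_pow₀ (by norm_num)
      have : (2 : ℝ) ^ 102 = 4 * 2 ^ 100 := by ring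
      linarith
    have hL69 : 69 ≤ L := (hl69 0).trans (hlL 0)
    have h20 : (20 : ℝ) ^ (K + K) ≤ (1.25 * L) ^ 27 := by
      calc (20 : ℝ) ^ (K + K) = 400 ^ K := by rw [← two_mul, pow_mul]; norm_num
        _ ≤ ((1.25 : ℝ) ^ 27) ^ K := by gcongr; norm_num
        _ = (1.25 ^ K) ^ 27 := by rw [← pow_mul, ← pow_mul, mul_comm]
        _ ≤ _ := by gcongr
    push_cast
    calc (M : ℝ) * 20 ^ (K + K) * 3221225473
        ≤ 2 ^ 102 * (1.25 * L) ^ 27 * 2 ^ 32 := by gcongr; norm_num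
      _ ≤ 2 ^ 102 * (2 * L) ^ 27 * 2 ^ 32 := by gcongr; norm_num
      _ = 2 ^ 161 * L ^ 27 := by rw [mul_pow]; ring
      _ ≤ L ^ 161 * L ^ 27 := by gcongr; linarith
      _ = L ^ 188 := by rw [← pow_add]
      _ ≤ L ^ 3323 := pow_le_pow_right₀ (by linarith) (by norm_num)
      _ ≤ 3 * L ^ 3323 := by
        have : 0 ≤ L ^ 3323 := by positivity
        linarith
  · rw [pow_mul]
    have hn : 1 ≤ M * 20 ^ (K + K) := Nat.mul_pos hMpos (by positivity)
    rcases grow3 (Finset.one_mem_pow h1) (inv_mem_pow hs (M * 20 ^ (K + K)))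
      (closure_pow h1 hg hn) (2 ^ 30) with h | h
    · exact h
    · exfalso
      have h3 := Finset.card_le_univ ((A ^ (M * 20 ^ (K + K))) ^ (3 * 2 ^ 30 + 1))
      change (2 ^ 30 + 1) * s (K + K) ≤ _ at h
      have h4 : 0 < s (K + K) := by exact_mod_cast hspos (K + K)
      have h5 := h.trans (h3.trans hcard)
      exact absurd (Nat.le_of_mul_le_mul_right h5 h4) (by norm_num)

end Babai

namespace Babai

section sl
set_option linter.unusedSectionVars false
variable {F : Type*} [Field F] [Fintype F] [DecidableEq F]

/-- shorthand for `SL₂` -/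
abbrev SL (F : Type*) [Field F] := Matrix.SpecialLinearGroup (Fin 2) F

/-- the trace of an element of `SL₂` -/
def tr (x : SL F) : F := x 0 0 + x 1 1

lemma det_eq (x : SL F) : x 0 0 * x 1 1 - x 0 1 * x 1 0 = 1 := by
  have := x.2
  rw [Matrix.det_fin_two] at this
  exact this

lemma sl_ext {x y : SL F} (h00 : x 0 0 = y 0 0) (h01 : x 0 1 = y 0 1) (h10 : x 1 0 = y 1 0)
    (h11 : x 1 1 = y 1 1) : x = y := by
  ext i j
  fin_cases i <;> fin_cases j <;> assumption

lemma mul_ap (x y : SL F) (i j : Fin 2) : (x * y) i j = x i 0 * y 0 j + x i 1 * y 1 j := by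
  rw [Matrix.SpecialLinearGroup.coe_mul, Matrix.mul_apply, Fin.sum_univ_two]

lemma inv00 (x : SL F) : x⁻¹ 0 0 = x 1 1 := by
  rw [Matrix.SpecialLinearGroup.SL2_inv_expl]; rfl
lemma inv01 (x : SL F) : x⁻¹ 0 1 = - x 0 1 := by
  rw [Matrix.SpecialLinearGroup.SL2_inv_expl]; rfl
lemma inv10 (x : SL F) : x⁻¹ 1 0 = - x 1 0 := by
  rw [Matrix.SpecialLinearGroup.SL2_inv_expl]; rfl
lemma inv11 (x : SL F) : x⁻¹ 1 1 = x 0 0 := by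
  rw [Matrix.SpecialLinearGroup.SL2_inv_expl]; rfl

lemma tr_mul_comm (x y : SL F) : tr (x * y) = tr (y * x) := by
  simp only [tr, mul_ap]; ring

lemma tr_conj (g x : SL F) : tr (g * x * g⁻¹) = tr x := by
  rw [tr_mul_comm, ← mul_assoc, inv_mul_cancel, one_mul]

/-- `(v, w)` is an eigenvector direction -/
def eig (v w : F) (x : SL F) : Prop := v * (x 1 0 * v + x 1 1 * w) = w * (x 0 0 * v + x 0 1 * w)

instance (v w : F) (x : SL F) : Decidable (eig v w x) := by unfold eig; infer_instance

/-- an element of `SL₂` from entries -/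
def mk4 (a b c d : F) (h : a * d - b * c = 1) : SL F := ⟨!![a, b; c, d], by
  rw [Matrix.det_fin_two_of]; exact h⟩

lemma triple_inj {l : F} {g y1 y2 y3 z1 z2 z3 : SL F} (hg : g 1 0 ≠ 0)
    (h1 : y1 1 0 = 0 ∧ y1 0 0 = l) (h2 : y2 1 0 = 0 ∧ y2 0 0 = l) (h3 : y3 1 0 = 0 ∧ y3 0 0 = l)
    (k1 : z1 1 0 = 0 ∧ z1 0 0 = l) (k2 : z2 1 0 = 0 ∧ z2 0 0 = l) (k3 : z3 1 0 = 0 ∧ z3 0 0 = l)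
    (hne : (g * y2 * g⁻¹) 1 0 ≠ 0)
    (h : y1 * (g * y2 * g⁻¹) * y3 = z1 * (g * z2 * g⁻¹) * z3) :
    y1 = z1 ∧ y2 = z2 ∧ y3 = z3 := by
  have hl : l ≠ 0 := by
    rintro rfl
    have := det_eq y1
    rw [h1.1, h1.2] at this; simp at this
  have e11 : ∀ y : SL F, (y 1 0 = 0 ∧ y 0 0 = l) → y 1 1 = l⁻¹ := by
    intro y hy
    have := det_eq y
    rw [hy.1, hy.2] at this
    field_simp
    linear_combination this
  have hinj : ∀ y z : SL F, (y 1 0 = 0 ∧ y 0 0 = l) → (z 1 0 = 0 ∧ z 0 0 = l) → y 0 1 = z 0 1 →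
      y = z := by
    intro y z hy hz hyz
    exact sl_ext (by rw [hy.2, hz.2]) hyz (by rw [hy.1, hz.1]) (by rw [e11 y hy, e11 z hz])
  have a1 := e11 y1 h1
  have a3 := e11 y3 h3
  have b1 := e11 z1 k1
  have b3 := e11 z3 k3
  have c1 : (g * y2 * g⁻¹) 1 0 = (g * z2 * g⁻¹) 1 0 := by
    have := congrArg (fun m : SL F => m 1 0) h
    simp only [mul_ap y1, mul_ap z1, mul_ap (y1 * _) y3, mul_ap (z1 * _) z3, h1.1, h3.1, k1.1,
      k3.1, h3.2, k3.2, a1, b1] at this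
    field_simp at this
    simpa [hl] using this
  have c2 : y2 = z2 := by
    apply hinj _ _ h2 k2
    simp only [mul_ap, inv00, inv10, h2.1, h2.2, k2.1, k2.2, e11 y2 h2, e11 z2 k2] at c1
    apply mul_left_cancel₀ (mul_ne_zero hg hg)
    linear_combination -c1
  subst c2
  have c3 : y3 = z3 := by
    apply hinj _ _ h3 k3
    have := congrArg (fun m : SL F => m 1 1) h
    simp only [mul_ap y1, mul_ap z1, mul_ap (y1 * _) y3, mul_ap (z1 * _) z3, h1.1, k1.1,
      a1, b1, a3, b3, zero_mul, zero_add] at this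
    have h5 : l⁻¹ * (g * y2 * g⁻¹) 1 0 ≠ 0 := mul_ne_zero (inv_ne_zero hl) hne
    apply mul_left_cancel₀ h5
    linear_combination this
  subst c3
  exact ⟨mul_right_cancel (mul_right_cancel h), rfl, rfl⟩

lemma exists_conj (v w : F) (hvw : v ≠ 0 ∨ w ≠ 0) : ∃ k : SL F, k 0 0 = v ∧ k 1 0 = w := by
  rcases hvw with h | h
  · exact ⟨mk4 v 0 w v⁻¹ (by field_simp; ring), rfl, rfl⟩
  · exact ⟨mk4 v (-w⁻¹) w 0 (by field_simp; ring), rfl, rfl⟩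

lemma eig_conj {v w : F} {k x : SL F} (h0 : k 0 0 = v) (h1 : k 1 0 = w) (h : eig v w x) :
    (k⁻¹ * x * k) 1 0 = 0 := by
  simp only [mul_ap, inv10, inv11, h0, h1]
  unfold eig at h
  linear_combination h

/-- a generating set is not contained in a Borel subgroup -/
lemma exists_not_borel {A : Finset (SL F)} (hs : ∀ s ∈ A, s⁻¹ ∈ A)
    (hg : Subgroup.closure (A : Set (SL F)) = ⊤) (k : SL F) : ∃ h ∈ A, (k⁻¹ * h * k) 1 0 ≠ 0 := by
  by_contra hcon
  push Not at hcon
  have := gen_induction hs hg (P := fun x => (k⁻¹ * x * k) 1 0 = 0) (by simp)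
    (by
      intro a ha x hx
      have e : k⁻¹ * (a * x) * k = (k⁻¹ * a * k) * (k⁻¹ * x * k) := by group
      rw [e, mul_ap, hx, hcon a ha]; simp)
    (k * mk4 1 0 1 1 (by ring) * k⁻¹)
  have e : k⁻¹ * (k * mk4 1 0 1 1 (by ring) * k⁻¹) * k = (mk4 1 0 1 1 (by ring) : SL F) := by group
  rw [e] at this
  exact one_ne_zero (α := F) this

lemma unip_bound {Y : Finset (SL F)} {l : F} {g : SL F} (k : SL F)
    (hY : ∀ y ∈ Y, (k⁻¹ * y * k) 1 0 = 0 ∧ (k⁻¹ * y * k) 0 0 = l)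
    (hg : (k⁻¹ * g * k) 1 0 ≠ 0) {N : Finset (SL F)}
    (hN : ∀ y1 ∈ Y, ∀ y2 ∈ Y, ∀ y3 ∈ Y, y1 * (g * y2 * g⁻¹) * y3 ∈ N) :
    Y.card * (Y.card - 1) * Y.card ≤ N.card := by
  set c : SL F → SL F := fun x => k⁻¹ * x * k with hc
  have cmul : ∀ x y, c (x * y) = c x * c y := fun x y => by simp only [hc]; group
  have cinv : ∀ x, c x⁻¹ = (c x)⁻¹ := fun x => by simp only [hc]; group
  have cinj : ∀ x y, c x = c y → x = y := fun x y h => by simpa [hc] using h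
  set Y' := Y.filter (fun y => (c g * c y * (c g)⁻¹) 1 0 ≠ 0) with hY'
  have hY'c : Y.card - 1 ≤ Y'.card := by
    have h1 : (Y.filter (fun y => ¬ (c g * c y * (c g)⁻¹) 1 0 ≠ 0)).card ≤ 1 := by
      rw [Finset.card_le_one]
      intro y hy z hz
      simp only [Finset.mem_filter, not_not] at hy hz
      apply cinj
      have h2 : (c y) 1 0 = 0 ∧ (c y) 0 0 = l := hY y hy.1
      have h3 : (c z) 1 0 = 0 ∧ (c z) 0 0 = l := hY z hz.1
      have hl : l ≠ 0 := by
        rintro rfl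
        have := det_eq (c y)
        rw [h2.1, h2.2] at this; simp at this
      have d1 := det_eq (c y)
      have d2 := det_eq (c z)
      rw [h2.1, h2.2] at d1
      rw [h3.1, h3.2] at d2
      have e11 : (c y) 1 1 = (c z) 1 1 := by
        apply mul_left_cancel₀ hl; linear_combination d1 - d2
      apply sl_ext (by rw [h2.2, h3.2]) _ (by rw [h2.1, h3.1]) e11
      have q1 := hy.2
      have q2 := hz.2
      simp only [mul_ap (c g * _), mul_ap (c g) (c y), mul_ap (c g) (c z), inv00, inv10, h2.1, h2.2,
        h3.1, h3.2, e11] at q1 q2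
      have hg' : (c g) 1 0 ≠ 0 := hg
      apply mul_left_cancel₀ (mul_ne_zero hg' hg')
      linear_combination q2 - q1
    have h2 := Finset.card_filter_add_card_filter_not (s := Y)
      (fun y => (c g * c y * (c g)⁻¹) 1 0 ≠ 0)
    rw [← hY'] at h2
    omega
  calc Y.card * (Y.card - 1) * Y.card ≤ Y.card * Y'.card * Y.card := by gcongr
    _ = (Y ×ˢ Y' ×ˢ Y).card := by rw [Finset.card_product, Finset.card_product, mul_assoc]
    _ ≤ N.card := by
      apply Finset.card_le_card_of_injOn (fun q => q.1 * (g * q.2.1 * g⁻¹) * q.2.2)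
      · rintro ⟨a, b, d⟩ h
        simp only [Finset.coe_product, Set.mem_prod, Finset.mem_coe, hY', Finset.mem_filter] at h
        exact hN _ h.1 _ h.2.1.1 _ h.2.2
      · rintro ⟨a, b, d⟩ h ⟨a', b', d'⟩ h' he
        simp only [Finset.coe_product, Set.mem_prod, Finset.mem_coe, hY', Finset.mem_filter] at h h'
        simp only at he
        have he' := congrArg c he
        simp only [cmul, cinv] at he'
        obtain ⟨e1, e2, e3⟩ := triple_inj hg (hY _ h.1) (hY _ h.2.1.1) (hY _ h.2.2)
          (hY _ h'.1) (hY _ h'.2.1.1) (hY _ h'.2.2) h.2.1.2 he'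
        rw [cinj _ _ e1, cinj _ _ e2, cinj _ _ e3]

lemma borel_bound {A : Finset (SL F)} (h1 : (1 : SL F) ∈ A) (hs : ∀ s ∈ A, s⁻¹ ∈ A)
    (hg : Subgroup.closure (A : Set (SL F)) = ⊤) {m : ℕ} {X : Finset (SL F)} (hX : X ⊆ A ^ m)
    {t : F} (ht : ∀ x ∈ X, tr x = t) {v w : F} (hvw : v ≠ 0 ∨ w ≠ 0) :
    (X.filter (eig v w)).card ^ 3 ≤ 16 * (A ^ (3 * m + 2)).card := by
  obtain ⟨k, hk0, hk1⟩ := exists_conj v w hvw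
  obtain ⟨g, hgA, hgk⟩ := exists_not_borel hs hg k
  set Z := X.filter (eig v w) with hZ
  have hN1 : 1 ≤ (A ^ (3 * m + 2)).card := Finset.card_pos.mpr ⟨1, Finset.one_mem_pow h1⟩
  have fib : ∀ l : F, ∀ Y : Finset (SL F), Y = Z.filter (fun z => (k⁻¹ * z * k) 0 0 = l) →
      Y.card ≤ 1 ∨ Y.card ^ 3 ≤ 2 * (A ^ (3 * m + 2)).card := by
    intro l Y hY
    have := unip_bound (Y := Y) (l := l) (g := g) (N := A ^ (3 * m + 2)) k
      (by
        intro y hy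
        rw [hY, Finset.mem_filter, hZ, Finset.mem_filter] at hy
        exact ⟨eig_conj hk0 hk1 hy.1.2, hy.2⟩) hgk
      (by
        have hsub : ∀ y ∈ Y, y ∈ A ^ m := by
          intro y hy
          rw [hY, Finset.mem_filter, hZ, Finset.mem_filter] at hy
          exact hX hy.1.1
        intro y1 hy1 y2 hy2 y3 hy3
        have e : 3 * m + 2 = m + (1 + m + 1) + m := by ring
        rw [e, pow_add, pow_add A m, pow_add A (1 + m), pow_add A 1 m, pow_one]
        exact Finset.mul_mem_mul (Finset.mul_mem_mul (hsub _ hy1) (Finset.mul_mem_mul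
          (Finset.mul_mem_mul hgA (hsub _ hy2)) (hs _ hgA))) (hsub _ hy3))
    by_cases hc : Y.card ≤ 1
    · left; exact hc
    right
    obtain ⟨n, hn⟩ : ∃ n, Y.card = n + 2 := ⟨Y.card - 2, by omega⟩
    rw [hn] at this ⊢
    simp only [Nat.add_succ_sub_one] at this
    nlinarith
  rcases Finset.eq_empty_or_nonempty Z with hE | ⟨z0, hz0⟩
  · rw [hE]; simp
  set l := (k⁻¹ * z0 * k) 0 0 with hl
  have hroot : ∀ z ∈ Z, (k⁻¹ * z * k) 0 0 * (t - (k⁻¹ * z * k) 0 0) = 1 := by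
    intro z hz
    rw [hZ, Finset.mem_filter] at hz
    have e1 := eig_conj hk0 hk1 hz.2
    have e2 := det_eq (k⁻¹ * z * k)
    have e3 : tr (k⁻¹ * z * k) = t := by
      have := tr_conj k⁻¹ z
      rw [inv_inv] at this
      rw [this, ht z hz.1]
    rw [e1] at e2
    unfold tr at e3
    rw [← e3]
    linear_combination e2
  have hcov : Z ⊆ Z.filter (fun z => (k⁻¹ * z * k) 0 0 = l) ∪
      Z.filter (fun z => (k⁻¹ * z * k) 0 0 = t - l) := by
    intro z hz
    have r1 := hroot z hz
    have r2 := hroot z0 hz0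
    rw [← hl] at r2
    have : ((k⁻¹ * z * k) 0 0 - l) * ((k⁻¹ * z * k) 0 0 - (t - l)) = 0 := by
      linear_combination r2 - r1
    rcases mul_eq_zero.mp this with h | h
    · exact Finset.mem_union.mpr (Or.inl (Finset.mem_filter.mpr ⟨hz, sub_eq_zero.mp h⟩))
    · exact Finset.mem_union.mpr (Or.inr (Finset.mem_filter.mpr ⟨hz, sub_eq_zero.mp h⟩))
  have hc := (Finset.card_le_card hcov).trans (Finset.card_union_le _ _)
  have f1 := fib l _ rfl
  have f2 := fib (t - l) _ rfl
  generalize (Z.filter (fun z => (k⁻¹ * z * k) 0 0 = l)).card = a at *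
  generalize (Z.filter (fun z => (k⁻¹ * z * k) 0 0 = t - l)).card = b at *
  generalize (A ^ (3 * m + 2)).card = N at *
  have ha : a ^ 3 ≤ 2 * N := by
    rcases f1 with h | h
    · have : a ^ 3 ≤ 1 ^ 3 := by gcongr
      omega
    · exact h
  have hb : b ^ 3 ≤ 2 * N := by
    rcases f2 with h | h
    · have : b ^ 3 ≤ 1 ^ 3 := by gcongr
      omega
    · exact h
  rcases le_total a b with h | h
  · calc Z.card ^ 3 ≤ (2 * b) ^ 3 := by gcongr; omega
      _ = 8 * b ^ 3 := by ring
      _ ≤ 16 * N := by omega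
  · calc Z.card ^ 3 ≤ (2 * a) ^ 3 := by gcongr; omega
      _ = 8 * a ^ 3 := by ring
      _ ≤ 16 * N := by omega

end sl
end Babai

namespace Babai

section lp
set_option linter.unusedSectionVars false
variable {F : Type*} [Field F] [Fintype F] [DecidableEq F]

lemma span_of_orth {x y a b c : Fin 4 → F} (hxy : LinearIndependent F ![x, y])
    (hab : LinearIndependent F ![a, b]) (xa : x ⬝ᵥ a = 0) (xb : x ⬝ᵥ b = 0) (xc : x ⬝ᵥ c = 0)
    (ya : y ⬝ᵥ a = 0) (yb : y ⬝ᵥ b = 0) (yc : y ⬝ᵥ c = 0) :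
    ∃ α β : F, α • a + β • b = c := by
  let M : Matrix (Fin 2) (Fin 4) F := Matrix.of ![x, y]
  have hr : M.rank = 2 := by
    have : LinearIndependent F M.row := hxy
    rw [this.rank_matrix, Fintype.card_fin]
  have hk : Module.finrank F (LinearMap.ker M.mulVecLin) = 2 := by
    have := LinearMap.finrank_range_add_finrank_ker M.mulVecLin
    have h2 : Module.finrank F (LinearMap.range M.mulVecLin) = 2 := hr
    rw [h2] at this
    simp at this
    omega
  have hmem : ∀ z, x ⬝ᵥ z = 0 → y ⬝ᵥ z = 0 → z ∈ LinearMap.ker M.mulVecLin := by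
    intro z h1 h2
    rw [LinearMap.mem_ker]
    ext i
    fin_cases i
    · exact h1
    · exact h2
  have hle : Submodule.span F {a, b} ≤ LinearMap.ker M.mulVecLin := by
    rw [Submodule.span_le]
    rintro z (rfl | rfl)
    · exact hmem _ xa ya
    · exact hmem _ xb yb
  have hs : Module.finrank F (Submodule.span F {a, b}) = 2 := by
    have := finrank_span_eq_card hab
    have hr : Set.range ![a, b] = {a, b} := by
      ext z
      simp [eq_comm, or_comm]
    rw [hr] at this
    simpa using this
  have he := Submodule.eq_of_le_of_finrank_eq hle (by rw [hs, hk])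
  have hc := hmem c xc yc
  rw [← he, Submodule.mem_span_pair] at hc
  exact hc

lemma unip_eig {g : SL F} (hg : tr g = 2) (hne : g ≠ 1) :
    ∃ v w : F, (v ≠ 0 ∨ w ≠ 0) ∧ ∀ a : SL F, tr (g * a) = tr a → eig v w a := by
  have hd := det_eq g
  unfold tr at hg
  by_cases h : g 0 0 - 1 ≠ 0 ∨ g 1 0 ≠ 0
  · refine ⟨g 0 0 - 1, g 1 0, h, ?_⟩
    intro a ha
    simp only [tr, mul_ap] at ha
    unfold eig
    have h11 : g 1 1 = 2 - g 0 0 := by linear_combination hg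
    rw [h11] at ha hd
    linear_combination (-g 1 0) * ha - (a 1 0) * hd
  · push Not at h
    have h00 : g 0 0 = 1 := sub_eq_zero.mp h.1
    have h11 : g 1 1 = 1 := by linear_combination hg - h00
    have h01 : g 0 1 ≠ 0 := by
      intro h01
      apply hne
      apply sl_ext <;> simp [h00, h11, h01, h.2]
    refine ⟨1, 0, Or.inl one_ne_zero, ?_⟩
    intro a ha
    simp only [tr, mul_ap, h00, h11, h.2] at ha
    unfold eig
    have : g 0 1 * a 1 0 = 0 := by linear_combination ha
    have h3 := (mul_eq_zero.mp this).resolve_left h01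
    rw [h3]; ring

lemma fiber {t : F} (ht : t ≠ 0) {a b c a1 a2 : SL F} (ta : tr a = t) (tb : tr b = t)
    (tc : tr c = t) (ta1 : tr a1 = t) (ta2 : tr a2 = t)
    (tb1 : tr (a1 * a⁻¹ * b) = t) (tc1 : tr (a1 * a⁻¹ * c) = t)
    (tb2 : tr (a2 * a⁻¹ * b) = t) (tc2 : tr (a2 * a⁻¹ * c) = t)
    (hab : ¬ ∃ v w : F, (v ≠ 0 ∨ w ≠ 0) ∧ eig v w a ∧ eig v w b)
    (n1 : a ≠ b) (n2 : c ≠ a) (n3 : c ≠ b) : a1 = a ∨ a2 = a ∨ a1 = a2 := by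
  by_contra hcon
  push Not at hcon
  obtain ⟨m1, m2, m3⟩ := hcon
  obtain ⟨g1, rfl⟩ : ∃ g, a1 = g * a := ⟨a1 * a⁻¹, by group⟩
  obtain ⟨g2, rfl⟩ : ∃ g, a2 = g * a := ⟨a2 * a⁻¹, by group⟩
  rw [mul_inv_cancel_right] at tb1 tc1 tb2 tc2
  have k1 : g1 ≠ 1 := by rintro rfl; simp at m1
  have k2 : g2 ≠ 1 := by rintro rfl; simp at m2
  have k3 : g1 ≠ g2 := by rintro rfl; simp at m3
  have noU : ∀ g : SL F, tr g = 2 → g ≠ 1 → tr (g * a) = t → tr (g * b) = t → False := by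
    intro g hg hg1 h1 h2
    obtain ⟨v, w, hvw, h⟩ := unip_eig hg hg1
    exact hab ⟨v, w, hvw, h a (by rw [h1, ta]), h b (by rw [h2, tb])⟩
  have orth : ∀ g x : SL F, tr (g * x) = tr x →
      ![g 0 0 - 1, g 0 1, g 1 0, g 1 1 - 1] ⬝ᵥ ![x 0 0, x 1 0, x 0 1, x 1 1] = 0 := by
    intro g x h
    simp only [tr, mul_ap] at h
    simp [dotProduct, Fin.sum_univ_four]
    linear_combination h
  have hindab : LinearIndependent F
      ![![a 0 0, a 1 0, a 0 1, a 1 1], ![b 0 0, b 1 0, b 0 1, b 1 1]] := by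
    rw [LinearIndependent.pair_iff]
    intro s r h
    have q0 := congrFun h 0
    have q1 := congrFun h 1
    have q2 := congrFun h 2
    have q3 := congrFun h 3
    simp at q0 q1 q2 q3
    have hsr : s + r = 0 := by
      have : (s + r) * t = 0 := by
        have e1 := ta
        have e2 := tb
        unfold tr at e1 e2
        linear_combination q0 + q3 - s * e1 - r * e2
      exact (mul_eq_zero.mp this).resolve_right ht
    have hr : r = -s := by linear_combination hsr
    subst hr
    by_cases hs : s = 0
    · simp [hs]
    · exfalso
      apply n1
      apply sl_ext <;> apply mul_left_cancel₀ hs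
      · linear_combination q0
      · linear_combination q2
      · linear_combination q1
      · linear_combination q3
  by_cases hind : LinearIndependent F
      ![![g1 0 0 - 1, g1 0 1, g1 1 0, g1 1 1 - 1], ![g2 0 0 - 1, g2 0 1, g2 1 0, g2 1 1 - 1]]
  · obtain ⟨α, β, h⟩ := span_of_orth hind hindab (orth g1 a (by rw [ta1, ta]))
      (orth g1 b (by rw [tb1, tb])) (orth g1 c (by rw [tc1, tc])) (orth g2 a (by rw [ta2, ta]))
      (orth g2 b (by rw [tb2, tb])) (orth g2 c (by rw [tc2, tc]))
    have q0 := congrFun h 0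
    have q1 := congrFun h 1
    have q2 := congrFun h 2
    have q3 := congrFun h 3
    simp at q0 q1 q2 q3
    have ta' := ta
    have tb' := tb
    have tc' := tc
    unfold tr at ta' tb' tc'
    have hβ : β = 1 - α := by
      apply mul_right_cancel₀ ht
      linear_combination q0 + q3 + tc' - α * ta' - β * tb'
    subst hβ
    have hτ : α * ((1 - α) * (tr (b * a⁻¹) - 2)) = 0 := by
      have da := det_eq a
      have db := det_eq b
      have dc := det_eq c
      rw [← q0, ← q1, ← q2, ← q3] at dc
      simp only [tr, mul_ap, inv00, inv01, inv10, inv11]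
      linear_combination dc - α ^ 2 * da - (1 - α) ^ 2 * db
    rcases mul_eq_zero.mp hτ with h0 | h0
    · subst h0
      apply n3
      apply sl_ext
      · linear_combination -q0
      · linear_combination -q2
      · linear_combination -q1
      · linear_combination -q3
    rcases mul_eq_zero.mp h0 with h0 | h0
    · have : α = 1 := by linear_combination -h0
      subst this
      apply n2
      apply sl_ext
      · linear_combination -q0
      · linear_combination -q2
      · linear_combination -q1
      · linear_combination -q3
    · have h2 : tr (b * a⁻¹) = 2 := by linear_combination h0
      refine noU (b * a⁻¹) h2 ?_ ?_ ?_
      · intro h; exact n1 (mul_inv_eq_one.mp h).symm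
      · rw [inv_mul_cancel_right]; exact tb
      · have : tr (b * a⁻¹ * b) = tr (b * a⁻¹) * tr b - tr a := by
          have db := det_eq b
          simp only [tr, mul_ap, inv00, inv01, inv10, inv11]
          linear_combination (-a 0 0 - a 1 1) * db
        rw [this, h2, ta, tb]; ring
  · have hu1 : ![g1 0 0 - 1, g1 0 1, g1 1 0, g1 1 1 - 1] ≠ 0 := by
      intro h
      apply k1
      have q0 := congrFun h 0
      have q1 := congrFun h 1
      have q2 := congrFun h 2
      have q3 := congrFun h 3
      simp at q0 q1 q2 q3
      apply sl_ext
      · simpa using sub_eq_zero.mp q0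
      · simpa using q1
      · simpa using q2
      · simpa using sub_eq_zero.mp q3
    rw [LinearIndependent.pair_iff' hu1] at hind
    push Not at hind
    obtain ⟨s, h⟩ := hind
    have q0 := congrFun h 0
    have q1 := congrFun h 1
    have q2 := congrFun h 2
    have q3 := congrFun h 3
    simp at q0 q1 q2 q3
    have d1 := det_eq g1
    have d2 := det_eq g2
    have e0 : g2 0 0 = s * (g1 0 0 - 1) + 1 := by linear_combination -q0
    have e3 : g2 1 1 = s * (g1 1 1 - 1) + 1 := by linear_combination -q3
    rw [e0, e3, ← q1, ← q2] at d2
    have hz : s * ((1 - s) * (tr g1 - 2)) = 0 := by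
      unfold tr
      linear_combination d2 - s ^ 2 * d1
    rcases mul_eq_zero.mp hz with h0 | h0
    · subst h0
      apply k2
      apply sl_ext
      · simpa using e0
      · simpa using q1.symm
      · simpa using q2.symm
      · simpa using e3
    rcases mul_eq_zero.mp h0 with h0 | h0
    · have : s = 1 := by linear_combination -h0
      subst this
      apply k3
      apply sl_ext
      · linear_combination -e0
      · linear_combination q1
      · linear_combination q2
      · linear_combination -e3
    · exact noU g1 (by linear_combination h0) k1 ta1 tb1

/-- sharing an eigenvector -/
def share (a b : SL F) : Prop := ∃ v w : F, (v ≠ 0 ∨ w ≠ 0) ∧ eig v w a ∧ eig v w b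

lemma eig_par {v w v' w' : F} (h : v ≠ 0 ∨ w ≠ 0) (hp : v * w' = w * v') {b : SL F}
    (h' : v' ≠ 0 ∨ w' ≠ 0) (hb : eig v' w' b) : eig v w b := by
  unfold eig at *
  rcases h' with h' | h'
  · apply mul_left_cancel₀ (mul_ne_zero h' h')
    have e : w * v' = v * w' := hp.symm
    linear_combination v ^ 2 * hb + (v * v' * (b 1 1 - b 0 0) - b 0 1 * (w * v' + v * w')) * e
  · apply mul_left_cancel₀ (mul_ne_zero h' h')
    linear_combination w ^ 2 * hb + (b 1 0 * (v * w' + w * v') + (b 1 1 - b 0 0) * w * w') * hp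

open Classical in
lemma share_bound {X : Finset (SL F)} {β : ℕ}
    (hβ : ∀ v w : F, (v ≠ 0 ∨ w ≠ 0) → (X.filter (eig v w)).card ≤ β) (a : SL F)
    (ha : tr a ^ 2 ≠ 4) : (X.filter (share a)).card ≤ 2 * β := by
  by_cases h1 : ∃ v w : F, (v ≠ 0 ∨ w ≠ 0) ∧ eig v w a
  swap
  · rw [Finset.filter_eq_empty_iff.mpr]
    · simp
    · rintro b _ ⟨v, w, hvw, hv, _⟩
      exact h1 ⟨v, w, hvw, hv⟩
  obtain ⟨v, w, hvw, hva⟩ := h1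
  by_cases h2 : ∃ v' w' : F, (v' ≠ 0 ∨ w' ≠ 0) ∧ eig v' w' a ∧ v * w' ≠ w * v'
  · obtain ⟨v', w', hvw', hva', hd⟩ := h2
    have hsub : X.filter (share a) ⊆ X.filter (eig v w) ∪ X.filter (eig v' w') := by
      intro b hb
      rw [Finset.mem_filter] at hb
      obtain ⟨hbX, x, y, hxy, hxa, hxb⟩ := hb
      have hB : (2 * a 1 0 * v * v' + (a 1 1 - a 0 0) * (v * w' + w * v') - 2 * a 0 1 * w * w') ≠ 0 := by
        intro hB
        apply ha
        have hd' : (v * w' - w * v') ^ 2 ≠ 0 := pow_ne_zero _ (sub_ne_zero.mpr hd)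
        have da := det_eq a
        unfold eig at hva hva'
        have : (v * w' - w * v') ^ 2 * (tr a ^ 2 - 4) = 0 := by
          unfold tr
          have hB2 : (2 * a 1 0 * v * v' + (a 1 1 - a 0 0) * (v * w' + w * v')
            - 2 * a 0 1 * w * w') ^ 2 = 0 := by rw [hB]; ring
          linear_combination hB2 + 4 * (v * w' - w * v') ^ 2 * da
            - 4 * (v' * (a 1 0 * v' + a 1 1 * w') - w' * (a 0 0 * v' + a 0 1 * w')) * hva
        have := (mul_eq_zero.mp this).resolve_left hd'
        linear_combination this
      have hz : ((v * y - w * x) * (v' * y - w' * x)) * (2 * a 1 0 * v * v' +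
          (a 1 1 - a 0 0) * (v * w' + w * v') - 2 * a 0 1 * w * w') = 0 := by
        unfold eig at hva hva' hxa
        linear_combination (v' * y - w' * x) ^ 2 * hva + (v * y - w * x) ^ 2 * hva'
          - (v * w' - w * v') ^ 2 * hxa
      rw [Finset.mem_union, Finset.mem_filter, Finset.mem_filter]
      rcases mul_eq_zero.mp ((mul_eq_zero.mp hz).resolve_right hB) with h | h
      · left; exact ⟨hbX, eig_par hvw (sub_eq_zero.mp h) hxy hxb⟩
      · right; exact ⟨hbX, eig_par hvw' (sub_eq_zero.mp h) hxy hxb⟩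
    have := (Finset.card_le_card hsub).trans (Finset.card_union_le _ _)
    have := hβ v w hvw
    have := hβ v' w' hvw'
    omega
  · push Not at h2
    have hsub : X.filter (share a) ⊆ X.filter (eig v w) := by
      intro b hb
      rw [Finset.mem_filter] at hb ⊢
      obtain ⟨hbX, x, y, hxy, hxa, hxb⟩ := hb
      exact ⟨hbX, eig_par hvw (h2 x y hxy hxa) hxy hxb⟩
    have := Finset.card_le_card hsub
    have := hβ v w hvw
    omega

open Classical in
lemma triple_count {X B : Finset (SL F)} {β : ℕ} {t : F} (ht0 : t ≠ 0) (ht4 : t ^ 2 ≠ 4)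
    (hX : ∀ x ∈ X, tr x = t) (hB : ∀ x ∈ X, ∀ y ∈ X, x⁻¹ * y ∈ B)
    (hβ : ∀ v w : F, (v ≠ 0 ∨ w ≠ 0) → (X.filter (eig v w)).card ≤ β) :
    X.card ^ 3 ≤ 2 * B.card ^ 2 + (2 * β + 3) * X.card ^ 2 := by
  set D : SL F × SL F → Prop := fun q => q.1 ≠ q.2 ∧ ¬ share q.1 q.2 with hD
  set E : (SL F × SL F) × SL F → Prop := fun q => q.2 ≠ q.1.1 ∧ q.2 ≠ q.1.2 with hE
  set P := X ×ˢ X with hP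
  have hPc : P.card = X.card ^ 2 := by rw [hP, Finset.card_product, sq]
  have c1 : (P.filter (fun q => ¬ D q)).card ≤ (2 * β + 1) * X.card := by
    apply Finset.card_le_mul_card_image_of_maps_to (f := Prod.fst)
    · intro q hq
      rw [Finset.mem_filter, hP, Finset.mem_product] at hq
      exact hq.1.1
    · intro a ha
      have hsub : ((P.filter (fun q => ¬ D q)).filter (fun q => q.1 = a)) ⊆
          ((X.filter (share a)) ∪ {a}).image (fun b => (a, b)) := by
        rintro ⟨x, y⟩ hq
        simp only [Finset.mem_filter, hP, Finset.mem_product, hD] at hq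
        obtain ⟨⟨⟨hx, hy⟩, h2⟩, rfl⟩ := hq
        simp only [Finset.mem_image, Finset.mem_union, Finset.mem_filter, Finset.mem_singleton]
        refine ⟨y, ?_, rfl⟩
        by_cases hxy : x = y
        · right; exact hxy.symm
        · left; exact ⟨hy, by tauto⟩
      refine (Finset.card_le_card hsub).trans (Finset.card_image_le.trans
        ((Finset.card_union_le _ _).trans ?_))
      have := share_bound hβ a (by rw [hX a ha]; exact ht4)
      simpa using this
  have c2 : ((P ×ˢ X).filter (fun q => ¬ E q)).card ≤ 2 * P.card := by
    apply Finset.card_le_mul_card_image_of_maps_to (f := Prod.fst)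
    · intro q hq
      rw [Finset.mem_filter, Finset.mem_product] at hq
      exact hq.1.1
    · intro ab _
      have hsub : (((P ×ˢ X).filter (fun q => ¬ E q)).filter (fun q => q.1 = ab)) ⊆
          {(ab, ab.1), (ab, ab.2)} := by
        rintro ⟨x, y⟩ hq
        simp only [Finset.mem_filter, Finset.mem_product, hE] at hq
        obtain ⟨⟨_, h2⟩, rfl⟩ := hq
        simp only [Finset.mem_insert, Finset.mem_singleton, Prod.mk.injEq, true_and]
        tauto
      exact (Finset.card_le_card hsub).trans Finset.card_le_two
  have c3 : ((P ×ˢ X).filter (fun q => D q.1 ∧ E q)).card ≤ 2 * (B ×ˢ B).card := by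
    apply Finset.card_le_mul_card_image_of_maps_to
      (f := fun q => (q.1.1⁻¹ * q.1.2, q.1.1⁻¹ * q.2))
    · intro q hq
      rw [Finset.mem_filter, Finset.mem_product, hP, Finset.mem_product] at hq
      rw [Finset.mem_product]
      exact ⟨hB _ hq.1.1.1 _ hq.1.1.2, hB _ hq.1.1.1 _ hq.1.2⟩
    · rintro ⟨y1, y2⟩ _
      by_contra hcon
      push Not at hcon
      rw [Finset.two_lt_card] at hcon
      obtain ⟨⟨⟨a, b⟩, c⟩, h0, ⟨⟨a1, b1⟩, c1⟩, h1, ⟨⟨a2, b2⟩, c2⟩, h2, n01, n02, n12⟩ := hcon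
      simp only [Finset.mem_filter, Finset.mem_product, hP, hD, hE, Prod.mk.injEq] at h0 h1 h2
      obtain ⟨⟨⟨⟨ha, hb⟩, hc⟩, ⟨d1, d2⟩, e1, e2⟩, f1, f2⟩ := h0
      obtain ⟨⟨⟨⟨ha1, hb1⟩, hc1⟩, -⟩, f11, f12⟩ := h1
      obtain ⟨⟨⟨⟨ha2, hb2⟩, hc2⟩, -⟩, f21, f22⟩ := h2
      have eb : b = a * y1 := by rw [← f1]; group
      have ec : c = a * y2 := by rw [← f2]; group
      have eb1 : b1 = a1 * y1 := by rw [← f11]; group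
      have ec1 : c1 = a1 * y2 := by rw [← f12]; group
      have eb2 : b2 = a2 * y1 := by rw [← f21]; group
      have ec2 : c2 = a2 * y2 := by rw [← f22]; group
      have := fiber ht0 (hX a ha) (hX b hb) (hX c hc) (hX a1 ha1) (hX a2 ha2)
        (by rw [eb, mul_assoc, inv_mul_cancel_left, ← eb1]; exact hX _ hb1)
        (by rw [ec, mul_assoc, inv_mul_cancel_left, ← ec1]; exact hX _ hc1)
        (by rw [eb, mul_assoc, inv_mul_cancel_left, ← eb2]; exact hX _ hb2)
        (by rw [ec, mul_assoc, inv_mul_cancel_left, ← ec2]; exact hX _ hc2)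
        d2 d1 e1 e2
      rcases this with h | h | h
      · apply n01; rw [eb, ec, eb1, ec1, h]
      · apply n02; rw [eb, ec, eb2, ec2, h]
      · apply n12; rw [eb1, ec1, eb2, ec2, h]
  have hcov : P ×ˢ X ⊆ ((P ×ˢ X).filter (fun q => D q.1 ∧ E q)) ∪
      (((P ×ˢ X).filter (fun q => ¬ E q)) ∪ ((P.filter (fun q => ¬ D q)) ×ˢ X)) := by
    rintro ⟨q, c⟩ hq
    have hq' := Finset.mem_product.mp hq
    simp only [Finset.mem_union, Finset.mem_filter, Finset.mem_product]
    simp only at hq'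
    tauto
  have h := (Finset.card_le_card hcov).trans ((Finset.card_union_le _ _).trans
    (Nat.add_le_add_left (Finset.card_union_le _ _) _))
  rw [Finset.card_product P X, Finset.card_product (P.filter _) X, hPc] at h
  rw [Finset.card_product] at c3
  rw [hPc] at c2
  nlinarith [Nat.mul_le_mul_right X.card c1]

lemma larsen_pink {A : Finset (SL F)} (h1 : (1 : SL F) ∈ A) (hs : ∀ s ∈ A, s⁻¹ ∈ A)
    (hg : Subgroup.closure (A : Set (SL F)) = ⊤) (m : ℕ) {t : F} (ht0 : t ≠ 0) (ht4 : t ^ 2 ≠ 4) :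
    ((A ^ m).filter (fun x => tr x = t)).card ^ 3 ≤ 16000 * (A ^ (3 * m + 2)).card ^ 2 := by
  set X := (A ^ m).filter (fun x => tr x = t) with hXdef
  set N := (A ^ (3 * m + 2)).card with hN
  have hN1 : 1 ≤ N := Finset.card_pos.mpr ⟨1, Finset.one_mem_pow h1⟩
  have hXt : ∀ x ∈ X, tr x = t := fun x hx => (Finset.mem_filter.mp hx).2
  have hXA : X ⊆ A ^ m := Finset.filter_subset _ _
  set β := Nat.findGreatest (fun b => b ^ 3 ≤ 16 * N) (16 * N) with hβd
  have hβ3 : β ^ 3 ≤ 16 * N :=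
    Nat.findGreatest_spec (P := fun b => b ^ 3 ≤ 16 * N) (m := 0) (by omega) (by simp)
  have hle : ∀ b, b ^ 3 ≤ 16 * N → b ≤ β := by
    intro b hb
    exact Nat.le_findGreatest (P := fun b => b ^ 3 ≤ 16 * N)
      ((Nat.le_self_pow (by norm_num) b).trans hb) hb
  have hβ1 : 1 ≤ β := hle 1 (by omega)
  have hc := triple_count (X := X) (B := A ^ (2 * m)) (β := β) ht0 ht4 hXt
    (by
      intro x hx y hy
      rw [two_mul, pow_add]
      exact Finset.mul_mem_mul (inv_mem_pow hs m x (hXA hx)) (hXA hy))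
    (fun v w hvw => hle _ (borel_bound h1 hs hg hXA hXt hvw))
  have hB : (A ^ (2 * m)).card ≤ N := Finset.card_le_card (pow_mono_of_one h1 (by omega))
  have hB2 : (A ^ (2 * m)).card ^ 2 ≤ N ^ 2 := Nat.pow_le_pow_left hB 2
  clear_value β
  have hNN : N ≤ N ^ 2 := Nat.le_self_pow (by norm_num) N
  rcases le_or_gt (10 * β) X.card with h | h
  · have : 2 * ((2 * β + 3) * X.card ^ 2) ≤ X.card ^ 3 := by
      calc 2 * ((2 * β + 3) * X.card ^ 2) = (4 * β + 6) * X.card ^ 2 := by ring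
        _ ≤ X.card * X.card ^ 2 := by gcongr; omega
        _ = X.card ^ 3 := by ring
    omega
  · calc X.card ^ 3 ≤ (10 * β) ^ 3 := by gcongr
      _ = 1000 * β ^ 3 := by ring
      _ ≤ _ := by omega

end lp
end Babai

namespace Babai

section pivot
set_option linter.unusedSectionVars false
variable {F : Type*} [Field F] [Fintype F] [DecidableEq F]

/-- regular semisimple with nonzero trace -/
def good (x : SL F) : Prop := tr x ≠ 0 ∧ tr x ^ 2 ≠ 4

instance (x : SL F) : Decidable (good x) := by unfold good; infer_instance

lemma not_good {x : SL F} (h : ¬ good x) : tr x ∈ ({0, 2, -2} : Finset F) := by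
  unfold good at h
  simp only [Finset.mem_insert, Finset.mem_singleton]
  by_cases h0 : tr x = 0
  · exact Or.inl h0
  right
  have h4 : tr x ^ 2 = 4 := by
    by_contra h4
    exact h ⟨h0, h4⟩
  have : (tr x - 2) * (tr x + 2) = 0 := by linear_combination h4
  rcases mul_eq_zero.mp this with h | h
  · left; linear_combination h
  · right; linear_combination h

lemma good_conj {g x : SL F} (h : good x) : good (g * x * g⁻¹) := by
  unfold good at *
  rwa [tr_conj]

lemma comm_form {v y : SL F} (hv : good v) (h : y * v = v * y) :
    ∃ α β : F, y 0 0 = α + β * v 0 0 ∧ y 0 1 = β * v 0 1 ∧ y 1 0 = β * v 1 0 ∧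
      y 1 1 = α + β * v 1 1 := by
  have q00 := congrArg (fun m : SL F => m 0 0) h
  have q01 := congrArg (fun m : SL F => m 0 1) h
  have q10 := congrArg (fun m : SL F => m 1 0) h
  simp only [mul_ap] at q00 q01 q10
  by_cases h01 : v 0 1 = 0
  · by_cases h10 : v 1 0 = 0
    · have hd : v 0 0 - v 1 1 ≠ 0 := by
        intro hd
        apply hv.2
        have := det_eq v
        rw [h01, h10] at this
        unfold tr
        linear_combination 4 * this + (v 0 0 - v 1 1) * hd
      refine ⟨y 0 0 - (y 0 0 - y 1 1) / (v 0 0 - v 1 1) * v 0 0,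
        (y 0 0 - y 1 1) / (v 0 0 - v 1 1), by ring, ?_, ?_, ?_⟩
      · rw [h01]
        apply mul_left_cancel₀ hd
        linear_combination -q01 + (y 0 0 - y 1 1) * h01
      · rw [h10]
        apply mul_left_cancel₀ hd
        linear_combination q10 + (y 0 0 - y 1 1) * h10
      · field_simp
        ring
    · refine ⟨y 0 0 - y 1 0 / v 1 0 * v 0 0, y 1 0 / v 1 0, by ring, ?_, ?_, ?_⟩
      · field_simp
        linear_combination q00
      · field_simp
      · field_simp
        linear_combination q10
  · refine ⟨y 0 0 - y 0 1 / v 0 1 * v 0 0, y 0 1 / v 0 1, by ring, ?_, ?_, ?_⟩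
    · field_simp
    · field_simp
      linear_combination -q00
    · field_simp
      linear_combination -q01

lemma comm_trans {v x y : SL F} (hv : good v) (hx : x * v = v * x) (hy : y * v = v * y) :
    x * y = y * x := by
  obtain ⟨a, b, x0, x1, x2, x3⟩ := comm_form hv hx
  obtain ⟨c, d, y0, y1, y2, y3⟩ := comm_form hv hy
  apply sl_ext <;> simp only [mul_ap, x0, x1, x2, x3, y0, y1, y2, y3] <;> ring

lemma comm_eq_or {v y z : SL F} (hv : good v) (hy : y * v = v * y) (hz : z * v = v * z)
    (h : tr y = tr z) : y = z ∨ y = z⁻¹ := by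
  obtain ⟨a, b, x0, x1, x2, x3⟩ := comm_form hv hy
  obtain ⟨c, d, y0, y1, y2, y3⟩ := comm_form hv hz
  have dv := det_eq v
  have dy := det_eq y
  have dz := det_eq z
  obtain ⟨t0, t4⟩ := hv
  have ht : tr v = v 0 0 + v 1 1 := rfl
  have h' : 2 * a + b * tr v = 2 * c + d * tr v := by
    unfold tr at *
    rw [x0, x3, y0, y3] at h
    linear_combination h
  rw [x0, x1, x2, x3] at dy
  rw [y0, y1, y2, y3] at dz
  have qy : a ^ 2 + a * b * tr v + b ^ 2 = 1 := by
    rw [ht]; linear_combination dy - b ^ 2 * dv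
  have qz : c ^ 2 + c * d * tr v + d ^ 2 = 1 := by
    rw [ht]; linear_combination dz - d ^ 2 * dv
  have e1 : (a - c) * (d * tr v - (a - c)) + (b - d) * (b + d) = 0 := by
    linear_combination qy - qz - a * h'
  have e2 : tr v * (b + d) = 2 * (d * tr v - (a - c)) := by linear_combination h'
  have e3 : tr v * (b - d) = - 2 * (a - c) := by linear_combination h'
  have e4 : (tr v ^ 2 - 4) * ((a - c) * (d * tr v - (a - c))) = 0 := by
    linear_combination tr v ^ 2 * e1 - tr v * (b + d) * e3 + 2 * (a - c) * e2
  rcases mul_eq_zero.mp ((mul_eq_zero.mp e4).resolve_left (sub_ne_zero.mpr t4)) with h0 | h0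
  · left
    rw [h0, mul_zero] at e3
    have hb := sub_eq_zero.mp ((mul_eq_zero.mp e3).resolve_left t0)
    have ha := sub_eq_zero.mp h0
    apply sl_ext
    · rw [x0, y0, ha, hb]
    · rw [x1, y1, hb]
    · rw [x2, y2, hb]
    · rw [x3, y3, ha, hb]
  · right
    rw [h0, mul_zero] at e2
    have hb := (mul_eq_zero.mp e2).resolve_left t0
    have hb' : b = -d := by linear_combination hb
    have ha : a = c + d * tr v := by linear_combination -h0
    apply sl_ext
    · rw [x0, inv00, y3, ha, hb', ht]; ring
    · rw [x1, inv01, y1, hb']; ring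
    · rw [x2, inv10, y2, hb']; ring
    · rw [x3, inv11, y0, ha, hb', ht]; ring

lemma comm_tr_le {v : SL F} (hv : good v) (s : F) (X : Finset (SL F)) :
    ((X.filter (fun y => y * v = v * y)).filter (fun y => tr y = s)).card ≤ 2 := by
  rcases Finset.eq_empty_or_nonempty
    ((X.filter (fun y => y * v = v * y)).filter (fun y => tr y = s)) with h | ⟨z, hz⟩
  · rw [h]; simp
  · rw [Finset.mem_filter, Finset.mem_filter] at hz
    refine (Finset.card_le_card (t := {z, z⁻¹}) ?_).trans Finset.card_le_two
    intro y hy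
    rw [Finset.mem_filter, Finset.mem_filter] at hy
    rw [Finset.mem_insert, Finset.mem_singleton]
    exact comm_eq_or hv hy.1.2 hz.1.2 (hy.2.trans hz.2.symm)

lemma cent_le {v : SL F} (hv : good v) :
    (Finset.univ.filter (fun y : SL F => y * v = v * y)).card ≤ 2 * Fintype.card F := by
  rw [← Finset.card_univ (α := F)]
  exact Finset.card_le_mul_card_image_of_maps_to (f := tr) (fun _ _ => Finset.mem_univ _) 2
    (fun s _ => comm_tr_le hv s _)

lemma many_good {v : SL F} (hv : good v) (X : Finset (SL F)) :
    (X.filter (fun y => y * v = v * y)).card ≤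
      (X.filter (fun y => good y ∧ y * v = v * y)).card + 6 := by
  have h1 : ((X.filter (fun y => y * v = v * y)).filter (fun y => ¬ good y)).card ≤
      2 * ({0, 2, -2} : Finset F).card := by
    apply Finset.card_le_mul_card_image_of_maps_to (f := tr)
    · intro y hy
      exact not_good (Finset.mem_filter.mp hy).2
    · intro s _
      refine (Finset.card_le_card ?_).trans (comm_tr_le hv s X)
      intro y hy
      simp only [Finset.mem_filter] at hy ⊢
      tauto
  have h2 : ({0, 2, -2} : Finset F).card ≤ 3 := Finset.card_le_three
  have h3 := Finset.card_filter_add_card_filter_not (s := X.filter (fun y => y * v = v * y)) good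
  have h4 : (X.filter (fun y => y * v = v * y)).filter good =
      X.filter (fun y => good y ∧ y * v = v * y) := by
    ext y; simp only [Finset.mem_filter]; tauto
  rw [h4] at h3
  omega

lemma conj_count {A : Finset (SL F)} (h1 : (1 : SL F) ∈ A) (hs : ∀ s ∈ A, s⁻¹ ∈ A)
    (hg : Subgroup.closure (A : Set (SL F)) = ⊤) {v : SL F} (hv : good v) (hvA : v ∈ A ^ 4) :
    A.card ^ 3 ≤ ((A ^ 2).filter (fun y => y * v = v * y)).card ^ 3 *
      (16000 * (A ^ 20).card ^ 2) := by
  have hlp := larsen_pink h1 hs hg 6 hv.1 hv.2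
  have hc : A.card ≤ ((A ^ 2).filter (fun y => y * v = v * y)).card *
      ((A ^ 6).filter (fun x => tr x = tr v)).card := by
    apply Finset.card_le_mul_card_image_of_maps_to (f := fun h => h * v * h⁻¹)
    · intro h hh
      rw [Finset.mem_filter]
      refine ⟨?_, tr_conj _ _⟩
      have e : 6 = 1 + 4 + 1 := rfl
      rw [e, pow_add, pow_add, pow_one]
      exact Finset.mul_mem_mul (Finset.mul_mem_mul hh hvA) (hs _ hh)
    · intro y _
      rcases Finset.eq_empty_or_nonempty (A.filter (fun h => h * v * h⁻¹ = y)) with h | ⟨z, hz⟩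
      · rw [h]; simp
      · rw [Finset.mem_filter] at hz
        apply Finset.card_le_card_of_injOn (fun h => z⁻¹ * h)
        · intro h hh
          simp only [Finset.coe_filter, Set.mem_ofPred_eq] at hh ⊢
          constructor
          · rw [sq]; exact Finset.mul_mem_mul (hs _ hz.1) hh.1
          · have e := hh.2.trans hz.2.symm
            have e2 : h * v = z * v * z⁻¹ * h := by rw [← e]; group
            rw [mul_assoc, e2]; group
        · intro a _ b _ hab
          exact mul_left_cancel hab
  calc A.card ^ 3 ≤ _ := Nat.pow_le_pow_left hc 3
    _ = _ * _ := mul_pow _ _ _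
    _ ≤ _ := Nat.mul_le_mul_left _ hlp

lemma conj_fiber_count {v x : SL F} (hv : good v) (hx : good x) :
    (Finset.univ.filter (fun g : SL F => x * (g * v * g⁻¹) = (g * v * g⁻¹) * x)).card ≤
      4 * Fintype.card F := by
  have hc : (Finset.univ.filter (fun g : SL F => x * (g * v * g⁻¹) = (g * v * g⁻¹) * x)).card ≤
      (2 * Fintype.card F) * ((Finset.univ.filter (fun y : SL F => y * v = v * y)).filter
        (fun y => tr y = tr x)).card := by
    apply Finset.card_le_mul_card_image_of_maps_to (f := fun g => g⁻¹ * x * g)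
    · intro g hg
      rw [Finset.mem_filter] at hg
      rw [Finset.mem_filter, Finset.mem_filter]
      refine ⟨⟨Finset.mem_univ _, ?_⟩, ?_⟩
      · have : g⁻¹ * x * g * v = g⁻¹ * (x * (g * v * g⁻¹)) * g := by group
        rw [this, hg.2]; group
      · have := tr_conj g⁻¹ x
        rwa [inv_inv] at this
    · intro y _
      refine le_trans ?_ (cent_le hx)
      set Z := (Finset.univ.filter
        (fun g : SL F => x * (g * v * g⁻¹) = (g * v * g⁻¹) * x)).filter (fun g => g⁻¹ * x * g = y)
        with hZ
      rcases Finset.eq_empty_or_nonempty Z with h | ⟨z, hz⟩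
      · rw [h]; simp
      · rw [hZ, Finset.mem_filter] at hz
        apply Finset.card_le_card_of_injOn (fun h => h * z⁻¹)
        · intro h hh
          rw [Finset.mem_coe, hZ, Finset.mem_filter] at hh
          rw [Finset.mem_coe, Finset.mem_filter]
          refine ⟨Finset.mem_univ _, ?_⟩
          have e := hh.2.trans hz.2.symm
          have e2 : x * h = h * (z⁻¹ * x * z) := by rw [← e]; group
          show h * z⁻¹ * x = x * (h * z⁻¹)
          rw [← mul_assoc x, e2]; group
        · intro a _ b _ hab
          exact mul_right_cancel hab
  have := comm_tr_le hv (tr x) Finset.univ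
  calc _ ≤ _ := hc
    _ ≤ (2 * Fintype.card F) * 2 := Nat.mul_le_mul_left _ this
    _ = _ := by ring

lemma card_sl : (Fintype.card F - 1) * Fintype.card F ^ 2 ≤ Fintype.card (SL F) := by
  have : Fintype.card (Fˣ × F × F) ≤ Fintype.card (SL F) := by
    apply Fintype.card_le_of_injective
      (fun q => mk4 (q.1 : F) q.2.1 q.2.2 ((1 + q.2.1 * q.2.2) * ((q.1⁻¹ : Fˣ) : F)) (by
        have : (q.1 : F) * ((q.1⁻¹ : Fˣ) : F) = 1 := by simp
        linear_combination (1 + q.2.1 * q.2.2) * this))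
    rintro ⟨a, b, c⟩ ⟨a', b', c'⟩ h
    have h0 := congrArg (fun m : SL F => m 0 0) h
    have h1 := congrArg (fun m : SL F => m 0 1) h
    have h2 := congrArg (fun m : SL F => m 1 0) h
    have k0 : (a : F) = a' := h0
    have k1 : b = b' := h1
    have k2 : c = c' := h2
    rw [k1, k2, Units.ext k0]
  rw [Fintype.card_prod, Fintype.card_prod, Fintype.card_units, ← sq] at this
  exact this

lemma card_sl_four : 4 ≤ Fintype.card (SL F) := by
  have h := card_sl (F := F)
  have h2 : 2 ≤ Fintype.card F := Fintype.one_lt_card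
  obtain ⟨n, hn⟩ : ∃ n, Fintype.card F = n + 2 := ⟨Fintype.card F - 2, by omega⟩
  rw [hn] at h
  simp only [Nat.add_succ_sub_one] at h
  nlinarith

lemma card_sl_cube : Fintype.card F ^ 3 ≤ 2 * Fintype.card (SL F) := by
  have h := card_sl (F := F)
  have h2 : 2 ≤ Fintype.card F := Fintype.one_lt_card
  calc Fintype.card F ^ 3 = Fintype.card F * Fintype.card F ^ 2 := by ring
    _ ≤ (2 * (Fintype.card F - 1)) * Fintype.card F ^ 2 := by gcongr; omega
    _ = 2 * ((Fintype.card F - 1) * Fintype.card F ^ 2) := by ring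
    _ ≤ _ := by omega

end pivot
end Babai

namespace Babai

section escape
set_option linter.unusedSectionVars false
variable {F : Type*} [Field F] [Fintype F] [DecidableEq F]

/-- span of a product set inside the matrix algebra -/
def spn (A : Finset (SL F)) (n : ℕ) : Submodule F (Matrix (Fin 2) (Fin 2) F) :=
  Submodule.span F ((fun x : SL F => (x : Matrix (Fin 2) (Fin 2) F)) '' ((A ^ n : Finset (SL F)) : Set (SL F)))

lemma top_of_all {W : Submodule F (Matrix (Fin 2) (Fin 2) F)}
    (h : ∀ x : SL F, (x : Matrix (Fin 2) (Fin 2) F) ∈ W) : W = ⊤ := by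
  rw [eq_top_iff]
  intro m _
  have e : m = m 0 1 • ((mk4 1 1 0 1 (by ring) : SL F) : Matrix (Fin 2) (Fin 2) F)
      + m 1 0 • ((mk4 1 0 1 1 (by ring) : SL F) : Matrix (Fin 2) (Fin 2) F)
      + m 0 0 • (((mk4 1 1 (-1) 0 (by ring) : SL F) : Matrix (Fin 2) (Fin 2) F)
        - ((mk4 0 1 (-1) 0 (by ring) : SL F) : Matrix (Fin 2) (Fin 2) F))
      + m 1 1 • (((mk4 0 1 (-1) 1 (by ring) : SL F) : Matrix (Fin 2) (Fin 2) F)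
        - ((mk4 0 1 (-1) 0 (by ring) : SL F) : Matrix (Fin 2) (Fin 2) F))
      - (m 0 1 + m 1 0) • ((1 : SL F) : Matrix (Fin 2) (Fin 2) F) := by
    ext i j
    fin_cases i <;> fin_cases j <;> simp [mk4]
  rw [e]
  refine W.sub_mem (W.add_mem (W.add_mem (W.add_mem (W.smul_mem _ (h _)) (W.smul_mem _ (h _)))
    (W.smul_mem _ (W.sub_mem (h _) (h _)))) (W.smul_mem _ (W.sub_mem (h _) (h _))))
    (W.smul_mem _ (h _))

lemma spn_mono {A : Finset (SL F)} (h1 : (1 : SL F) ∈ A) (n : ℕ) : spn A n ≤ spn A (n + 1) :=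
  Submodule.span_mono (Set.image_mono (by exact_mod_cast pow_mono_of_one h1 (Nat.le_succ n)))

lemma spn_mul {A : Finset (SL F)} (n : ℕ) {a : SL F} (ha : a ∈ A)
    {m : Matrix (Fin 2) (Fin 2) F} (hm : m ∈ spn A n) :
    (a : Matrix (Fin 2) (Fin 2) F) * m ∈ spn A (n + 1) := by
  unfold spn at hm
  induction hm using Submodule.span_induction with
  | mem x hx =>
    obtain ⟨y, hy, rfl⟩ := hx
    apply Submodule.subset_span
    refine ⟨a * y, ?_, by simp⟩
    rw [pow_succ']
    exact Finset.mul_mem_mul ha hy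
  | zero => simp
  | add x y _ _ hx hy => rw [mul_add]; exact Submodule.add_mem _ hx hy
  | smul c x _ hx => rw [Matrix.mul_smul]; exact Submodule.smul_mem _ _ hx

lemma spn_one {A : Finset (SL F)} (h1 : (1 : SL F) ∈ A) (n : ℕ) :
    (1 : Matrix (Fin 2) (Fin 2) F) ∈ spn A n :=
  Submodule.subset_span ⟨1, Finset.one_mem_pow h1, by simp⟩

lemma spn_top {A : Finset (SL F)} (h1 : (1 : SL F) ∈ A) (hs : ∀ s ∈ A, s⁻¹ ∈ A)
    (hg : Subgroup.closure (A : Set (SL F)) = ⊤) {n : ℕ} (h : spn A n = spn A (n + 1)) :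
    spn A n = ⊤ := by
  apply top_of_all
  refine gen_induction hs hg (P := fun x : SL F => (x : Matrix (Fin 2) (Fin 2) F) ∈ spn A n) ?_ ?_
  · simpa using spn_one h1 n
  · intro a ha x hx
    rw [Matrix.SpecialLinearGroup.coe_mul, h]
    exact spn_mul n ha hx

lemma spn_rank {A : Finset (SL F)} (h1 : (1 : SL F) ∈ A) (hs : ∀ s ∈ A, s⁻¹ ∈ A)
    (hg : Subgroup.closure (A : Set (SL F)) = ⊤) (n : ℕ) :
    n + 1 ≤ Module.finrank F (spn A n) ∨ spn A n = ⊤ := by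
  induction n with
  | zero =>
    left
    rw [zero_add, Submodule.one_le_finrank_iff]
    intro h
    have := spn_one h1 0
    rw [h, Submodule.mem_bot] at this
    exact one_ne_zero this
  | succ n ih =>
    by_cases he : spn A n = spn A (n + 1)
    · right; rw [← he]; exact spn_top h1 hs hg he
    · have hlt : spn A n < spn A (n + 1) := lt_of_le_of_ne (spn_mono h1 n) he
      rcases ih with ih | ih
      · left
        have := Submodule.finrank_lt_finrank_of_lt hlt
        omega
      · rw [ih] at hlt
        exact absurd hlt not_top_lt

lemma spn_three {A : Finset (SL F)} (h1 : (1 : SL F) ∈ A) (hs : ∀ s ∈ A, s⁻¹ ∈ A)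
    (hg : Subgroup.closure (A : Set (SL F)) = ⊤) : spn A 3 = ⊤ := by
  rcases spn_rank h1 hs hg 3 with h | h
  · apply Submodule.eq_top_of_finrank_eq
    apply le_antisymm (Submodule.finrank_le _)
    rw [Module.finrank_matrix]
    simpa using h
  · exact h

lemma tr_trace (x : SL F) : tr x = Matrix.trace (x : Matrix (Fin 2) (Fin 2) F) := by
  rw [Matrix.trace_fin_two]; rfl

lemma exists_good {A : Finset (SL F)} (h1 : (1 : SL F) ∈ A) (hs : ∀ s ∈ A, s⁻¹ ∈ A)
    (hg : Subgroup.closure (A : Set (SL F)) = ⊤) (hA : 81 < A.card) : ∃ v ∈ A ^ 4, good v := by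
  by_contra hcon
  push Not at hcon
  have htop := spn_three h1 hs hg
  unfold spn at htop
  obtain ⟨f, hf, hspan, -⟩ := Submodule.exists_fun_fin_finrank_span_eq F
    ((fun x : SL F => (x : Matrix (Fin 2) (Fin 2) F)) '' ((A ^ 3 : Finset (SL F)) : Set (SL F)))
  replace hspan := hspan.trans htop
  have hd : Module.finrank F (Submodule.span F
    ((fun x : SL F => (x : Matrix (Fin 2) (Fin 2) F)) '' ((A ^ 3 : Finset (SL F)) : Set (SL F))))
      = 4 := by
    rw [htop, finrank_top, Module.finrank_matrix]; simp
  have hcard : A.card ≤ (Fintype.piFinset (fun _ : Fin (Module.finrank F (Submodule.span F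
    ((fun x : SL F => (x : Matrix (Fin 2) (Fin 2) F)) '' ((A ^ 3 : Finset (SL F)) : Set (SL F)))))
      => ({0, 2, -2} : Finset F))).card := by
    apply Finset.card_le_card_of_injOn
      (fun (x : SL F) i => Matrix.trace (f i * (x : Matrix (Fin 2) (Fin 2) F)))
    · intro x hx
      rw [Finset.mem_coe, Fintype.mem_piFinset]
      intro i
      obtain ⟨y, hy, hyf⟩ := hf i
      have : tr (y * x) ∈ ({0, 2, -2} : Finset F) := by
        apply not_good
        apply hcon
        rw [pow_succ]
        exact Finset.mul_mem_mul hy hx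
      rw [tr_trace, Matrix.SpecialLinearGroup.coe_mul] at this
      have hyf' : (y : Matrix (Fin 2) (Fin 2) F) = f i := hyf
      rw [hyf'] at this
      exact this
    · intro x _ y _ hxy
      apply Subtype.ext
      rw [Matrix.ext_iff_trace_mul_left]
      intro m
      have hm : m ∈ Submodule.span F (Set.range f) := by rw [hspan]; trivial
      induction hm using Submodule.span_induction with
      | mem z hz =>
        obtain ⟨i, rfl⟩ := hz
        exact congrFun hxy i
      | zero => simp
      | add a b _ _ ha hb => rw [add_mul, add_mul, Matrix.trace_add, Matrix.trace_add, ha, hb]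
      | smul c a _ ha => rw [Matrix.smul_mul, Matrix.smul_mul, Matrix.trace_smul,
          Matrix.trace_smul, ha]
  rw [Fintype.card_piFinset_const, hd] at hcard
  have h3 : ({0, 2, -2} : Finset F).card ≤ 3 := Finset.card_le_three
  have := Nat.pow_le_pow_left h3 4
  omega

lemma growth {A : Finset (SL F)} (h1 : (1 : SL F) ∈ A) (hs : ∀ s ∈ A, s⁻¹ ∈ A)
    (hg : Subgroup.closure (A : Set (SL F)) = ⊤) (hA : 81 < A.card) :
    A.card ^ 3 ≤ 27648000 * (A ^ 20).card ^ 2 ∨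
      (Fintype.card (SL F)) ^ 2 * A.card ^ 3 ≤ 27648000 * (A ^ 20).card ^ 5 := by
  by_cases hsm : A.card ^ 3 ≤ 27648000 * (A ^ 20).card ^ 2
  · exact Or.inl hsm
  right
  set N := (A ^ 20).card with hN
  have half : ∀ v : SL F, good v → v ∈ A ^ 4 →
      6 < ((A ^ 2).filter (fun y => good y ∧ y * v = v * y)).card ∧
      A.card ^ 3 ≤ (2 * ((A ^ 2).filter (fun y => good y ∧ y * v = v * y)).card) ^ 3 *
        (16000 * N ^ 2) := by
    intro v hv hvA
    have hc := conj_count h1 hs hg hv hvA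
    rw [← hN] at hc
    have hm := many_good hv (A ^ 2)
    have hk : 12 < ((A ^ 2).filter (fun y => y * v = v * y)).card := by
      by_contra hk
      push Not at hk
      apply hsm
      calc A.card ^ 3 ≤ _ := hc
        _ ≤ 12 ^ 3 * (16000 * N ^ 2) := by gcongr
        _ = _ := by ring
    refine ⟨by omega, hc.trans ?_⟩
    gcongr
    omega
  obtain ⟨v0, hv0A, hv0⟩ := exists_good h1 hs hg hA
  have h24 : A ^ 2 ⊆ A ^ 4 := pow_mono_of_one h1 (by norm_num)
  have ex : ∀ v : SL F, good v → v ∈ A ^ 4 → ∃ w ∈ A ^ 2, good w ∧ w * v = v * w := by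
    intro v hv hvA
    obtain ⟨w, hw⟩ := Finset.card_pos.mp (lt_trans (by norm_num) (half v hv hvA).1)
    rw [Finset.mem_filter] at hw
    exact ⟨w, hw.1, hw.2⟩
  have pivot : ∀ g : SL F, ∃ w ∈ A ^ 2, good w ∧ w * (g * v0 * g⁻¹) = (g * v0 * g⁻¹) * w := by
    refine gen_induction hs hg
      (P := fun g => ∃ w ∈ A ^ 2, good w ∧ w * (g * v0 * g⁻¹) = (g * v0 * g⁻¹) * w) ?_ ?_
    · simpa using ex v0 hv0 hv0A
    · rintro a ha x ⟨w, hwA, hw, hwx⟩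
      have hw'A : a * w * a⁻¹ ∈ A ^ 4 := by
        have e : 4 = 1 + 2 + 1 := rfl
        rw [e, pow_add, pow_add, pow_one]
        exact Finset.mul_mem_mul (Finset.mul_mem_mul ha hwA) (hs _ ha)
      have hw' : good (a * w * a⁻¹) := good_conj hw
      obtain ⟨u, huA, hu, huw⟩ := ex _ hw' hw'A
      refine ⟨u, huA, hu, comm_trans hw' huw ?_⟩
      have e1 : a * x * v0 * (a * x)⁻¹ * (a * w * a⁻¹) = a * (x * v0 * x⁻¹ * w) * a⁻¹ := by group
      rw [e1, ← hwx]; group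
  have hM : ∀ g : SL F, A.card ^ 3 ≤ (2 * ((A ^ 2).filter (fun y => good y ∧
      y * (g * v0 * g⁻¹) = (g * v0 * g⁻¹) * y)).card) ^ 3 * (16000 * N ^ 2) := by
    intro g
    obtain ⟨w, hwA, hw, hwx⟩ := pivot g
    refine (half w hw (h24 hwA)).2.trans ?_
    gcongr 4
    intro y hy
    rw [Finset.mem_filter] at hy ⊢
    exact ⟨hy.1, hy.2.1, comm_trans hw hy.2.2 hwx.symm⟩
  obtain ⟨g0, -, hmin⟩ := Finset.exists_min_image (Finset.univ : Finset (SL F))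
    (fun g => ((A ^ 2).filter (fun y => good y ∧ y * (g * v0 * g⁻¹) = (g * v0 * g⁻¹) * y)).card)
    ⟨1, Finset.mem_univ _⟩
  have hM0 := hM g0
  set M := ((A ^ 2).filter (fun y => good y ∧ y * (g0 * v0 * g0⁻¹) = (g0 * v0 * g0⁻¹) * y)).card
    with hMdef
  have hdc := Finset.sum_card_bipartiteAbove_eq_sum_card_bipartiteBelow
    (s := (Finset.univ : Finset (SL F))) (t := A ^ 2)
    (fun g y => good y ∧ y * (g * v0 * g⁻¹) = (g * v0 * g⁻¹) * y)
  have hlow : Fintype.card (SL F) * M ≤ ∑ g ∈ (Finset.univ : Finset (SL F)),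
      ((A ^ 2).bipartiteAbove (fun g y => good y ∧ y * (g * v0 * g⁻¹) = (g * v0 * g⁻¹) * y)
        g).card := by
    rw [← Finset.card_univ, ← smul_eq_mul]
    exact Finset.card_nsmul_le_sum _ _ _ (fun g hg => hmin g hg)
  have hup : ∑ y ∈ A ^ 2, ((Finset.univ : Finset (SL F)).bipartiteBelow
      (fun g y => good y ∧ y * (g * v0 * g⁻¹) = (g * v0 * g⁻¹) * y) y).card ≤
      (A ^ 2).card * (4 * Fintype.card F) := by
    rw [← smul_eq_mul]
    apply Finset.sum_le_card_nsmul
    intro y _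
    by_cases hy : good y
    · refine (Finset.card_le_card ?_).trans (conj_fiber_count hv0 hy)
      intro g hg
      rw [Finset.mem_bipartiteBelow] at hg
      rw [Finset.mem_filter]
      exact ⟨hg.1, hg.2.2⟩
    · rw [Finset.card_eq_zero.mpr]
      · simp
      · rw [Finset.eq_empty_iff_forall_notMem]
        intro g hg
        rw [Finset.mem_bipartiteBelow] at hg
        exact hy hg.2.1
  have hA2 : (A ^ 2).card ≤ N := Finset.card_le_card (pow_mono_of_one h1 (by norm_num))
  have hq := card_sl_cube (F := F)
  have hGpos : 0 < Fintype.card (SL F) := Fintype.card_pos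
  set Q := Fintype.card (SL F)
  set q := Fintype.card F
  have hmain : Q * M ≤ N * (4 * q) := by
    refine hlow.trans (hdc.le.trans (hup.trans ?_))
    gcongr
  have h3 : Q ^ 2 * M ^ 3 ≤ 128 * N ^ 3 := by
    apply Nat.le_of_mul_le_mul_left _ hGpos
    calc Q * (Q ^ 2 * M ^ 3) = (Q * M) ^ 3 := by ring
      _ ≤ (N * (4 * q)) ^ 3 := Nat.pow_le_pow_left hmain 3
      _ = 64 * N ^ 3 * q ^ 3 := by ring
      _ ≤ 64 * N ^ 3 * (2 * Q) := by gcongr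
      _ = Q * (128 * N ^ 3) := by ring
  calc Q ^ 2 * A.card ^ 3 ≤ Q ^ 2 * ((2 * M) ^ 3 * (16000 * N ^ 2)) := by gcongr
    _ = 128000 * N ^ 2 * (Q ^ 2 * M ^ 3) := by ring
    _ ≤ 128000 * N ^ 2 * (128 * N ^ 3) := by gcongr
    _ = 16384000 * N ^ 5 := by ring
    _ ≤ 27648000 * N ^ 5 := by gcongr; norm_num

end escape
end Babai

/-- **Explicit Babai conjecture for `SL₂(𝔽_p)` (Corollary `cor-babai`).** For any prime `p` and
any symmetric generating set `S` of `SL₂(𝔽_p)`, the diameter of the Cayley graph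
`C(SL₂(𝔽_p), S)` is at most `3·(log |SL₂(𝔽_p)|)^3323`: there is `n` with
`(n : ℝ) ≤ 3·(log |SL₂(𝔽_p)|)^3323` and `(S ∪ {1})^(n) = SL₂(𝔽_p)`. -/
theorem stmt_1 (p : ℕ) [Fact p.Prime]
    (S : Finset (Matrix.SpecialLinearGroup (Fin 2) (ZMod p)))
    (hsym : ∀ s ∈ S, s⁻¹ ∈ S)
    (hgen : Subgroup.closure (S : Set (Matrix.SpecialLinearGroup (Fin 2) (ZMod p))) = ⊤) :
    ∃ n : ℕ,
      (n : ℝ) ≤ 3 * Real.log (Fintype.card (Matrix.SpecialLinearGroup (Fin 2) (ZMod p))) ^ 3323 ∧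
      ((S ∪ {1}) ^ n : Finset (Matrix.SpecialLinearGroup (Fin 2) (ZMod p))) = Finset.univ := by
  have h1 : (1 : Matrix.SpecialLinearGroup (Fin 2) (ZMod p)) ∈ S ∪ {1} := by simp
  apply Babai.analysis (Babai.card_sl_four (F := ZMod p)) _ h1
  · intro s hs
    rw [Finset.mem_union, Finset.mem_singleton] at hs ⊢
    rcases hs with hs | rfl
    · exact Or.inl (hsym s hs)
    · simp
  · rw [eq_top_iff, ← hgen]
    apply Subgroup.closure_mono
    simp
  · intro A hA1 hAs hAg hAc
    exact Babai.growth hA1 hAs hAg (lt_of_lt_of_le (by norm_num) hAc)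
end
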